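/- arXiv:2504.14198 — 5 statements merged into one kernel-verified Lean document; each statement's English description precedes it below -/
import Mathlib

section
/- Let F be a field with char(F) ≠ 2, let n ≥ 2, and let T : M_n(F) → M_n(F) be a bijective linear map such that T(B_n) ⊆ B_n. Suppose there exist a nonzero scalar r ∈ F and an invertible matrix P ∈ M_n(F) such that either T(X) = r·T(I)·P·X·P⁻¹ for all X ∈ M_n(F) with trace(X) = 0, or T(X) = r·T(I)·P·Xᵗ·P⁻¹ for all X ∈ M_n(F) with trace(X) = 0. Then T(I) = I or T(I) = −I. -/
open Matrix

/-- The set of matrices that are products of two involutions. -/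
def ProdInv2 (F : Type*) [Field F] (n : ℕ) : Set (Matrix (Fin n) (Fin n) F) :=
  {A | ∃ J₁ J₂ : Matrix (Fin n) (Fin n) F, J₁ * J₁ = 1 ∧ J₂ * J₂ = 1 ∧ A = J₁ * J₂}

namespace Stmt7Aux

variable {F : Type*} [Field F] {n : ℕ}

theorem conj_mem {X Q Q' : Matrix (Fin n) (Fin n) F} (hX : X ∈ ProdInv2 F n) (h : Q' * Q = 1) :
    Q * X * Q' ∈ ProdInv2 F n := by
  obtain ⟨J, K, hJ, hK, rfl⟩ := hX
  have h' : Q * Q' = 1 := mul_eq_one_comm.mp h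
  refine ⟨Q * J * Q', Q * K * Q', ?_, ?_, ?_⟩
  · calc Q * J * Q' * (Q * J * Q') = Q * J * (Q' * Q) * J * Q' := by noncomm_ring
      _ = Q * (J * J) * Q' := by rw [h]; noncomm_ring
      _ = 1 := by rw [hJ, mul_one, h']
  · calc Q * K * Q' * (Q * K * Q') = Q * K * (Q' * Q) * K * Q' := by noncomm_ring
      _ = Q * (K * K) * Q' := by rw [h]; noncomm_ring
      _ = 1 := by rw [hK, mul_one, h']
  · calc Q * (J * K) * Q' = Q * J * 1 * K * Q' := by noncomm_ring
      _ = Q * J * Q' * (Q * K * Q') := by rw [← h]; noncomm_ring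

theorem transpose_mem {X : Matrix (Fin n) (Fin n) F} (hX : X ∈ ProdInv2 F n) :
    Xᵀ ∈ ProdInv2 F n := by
  obtain ⟨J, K, hJ, hK, rfl⟩ := hX
  refine ⟨Kᵀ, Jᵀ, ?_, ?_, ?_⟩
  · rw [← transpose_mul, hK, transpose_one]
  · rw [← transpose_mul, hJ, transpose_one]
  · rw [transpose_mul]

theorem trace_eq {X Z : Matrix (Fin n) (Fin n) F} (hX : X ∈ ProdInv2 F n) (h : X * Z = 1) :
    trace X = trace Z := by
  obtain ⟨J, K, hJ, hK, rfl⟩ := hX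
  have h2 : J * K * (K * J) = 1 := by
    calc J * K * (K * J) = J * (K * K) * J := by noncomm_ring
      _ = 1 := by rw [hK, mul_one, hJ]
  have h3 : (K * J) * (J * K) = 1 := mul_eq_one_comm.mp h2
  have : Z = K * J := by
    calc Z = (K * J) * (J * K) * Z := by rw [h3, one_mul]
      _ = K * J := by rw [mul_assoc, h, mul_one]
  rw [this, trace_mul_comm]

theorem det_sq {X : Matrix (Fin n) (Fin n) F} (hX : X ∈ ProdInv2 F n) : X.det * X.det = 1 := by
  obtain ⟨J, K, hJ, hK, rfl⟩ := hX
  have h1 : J.det * J.det = 1 := by rw [← det_mul, hJ, det_one]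
  have h2 : K.det * K.det = 1 := by rw [← det_mul, hK, det_one]
  rw [det_mul]
  linear_combination K.det * K.det * h1 + h2

theorem mem_of_conj {X D : Matrix (Fin n) (Fin n) F} (hD : D * D = 1) (h : D * X * D * X = 1) :
    X ∈ ProdInv2 F n :=
  ⟨D, D * X, hD, by rw [← mul_assoc, h], by rw [← mul_assoc, hD, one_mul]⟩

/-- A matrix which is trace-orthogonal to all conjugates of elementary nilpotents is scalar. -/
theorem scal (hn : 2 ≤ n) (C : Matrix (Fin n) (Fin n) F)
    (h : ∀ (i j : Fin n) (Q Q' : Matrix (Fin n) (Fin n) F), i ≠ j → Q' * Q = 1 →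
      trace (C * (Q * single i j 1 * Q')) = 0) : ∃ l : F, C = l • 1 := by
  have off : ∀ i j, i ≠ j → C j i = 0 := by
    intro i j hij
    have := h i j 1 1 hij (one_mul 1)
    simpa [trace_mul_single] using this
  have dg : ∀ i j, i ≠ j → C i i = C j j := by
    intro i j hij
    have e : (1 + single j i (1:F)) * single i j 1 * (1 - single j i (1:F))
        = single i j 1 - single i i 1 + single j j 1 - single j i 1 := by
      have := hij.symm
      simp [add_mul, mul_sub]
      abel
    have := h i j (1 + single j i 1) (1 - single j i 1) hij (by
      simp [mul_add, sub_mul, hij])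
    rw [e] at this
    simp [mul_add, mul_sub, trace_mul_single, off i j hij, off j i hij.symm] at this
    linear_combination -this
  let z : Fin n := ⟨0, by omega⟩
  refine ⟨C z z, ?_⟩
  ext i j
  by_cases hij : i = j
  · subst hij
    by_cases hz : i = z
    · simp [hz]
    · simp [dg i z hz]
  · simp [hij, off j i (Ne.symm hij)]

theorem key (hn : 2 ≤ n)
    (T : Matrix (Fin n) (Fin n) F →ₗ[F] Matrix (Fin n) (Fin n) F)
    (hpres : ∀ A ∈ ProdInv2 F n, T A ∈ ProdInv2 F n)
    (r : F) (P : Matrix (Fin n) (Fin n) F) (hP : IsUnit P)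
    (hform : (∀ X, Matrix.trace X = 0 → T X = r • (T 1 * (P * X * P⁻¹))) ∨
             (∀ X, Matrix.trace X = 0 → T X = r • (T 1 * (P * Xᵀ * P⁻¹))))
    (X : Matrix (Fin n) (Fin n) F) (hX : X ∈ ProdInv2 F n) (s : F) (hs : trace X = s * n) :
    T 1 * (s • 1 + r • (X - s • 1)) ∈ ProdInv2 F n := by
  have hd : IsUnit P.det := (isUnit_iff_isUnit_det P).mp hP
  have h1 : P * P⁻¹ = 1 := mul_nonsing_inv P hd
  have h2 : P⁻¹ * P = 1 := nonsing_inv_mul P hd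
  have hm := conj_mem hX (Q := P⁻¹) (Q' := P) h1
  have htr : trace (P⁻¹ * X * P) = s * n := by
    rw [trace_mul_comm, ← mul_assoc, h1, one_mul, hs]
  have hc : P * (P⁻¹ * X * P - s • 1) * P⁻¹ = X - s • 1 := by
    calc P * (P⁻¹ * X * P - s • 1) * P⁻¹ = (P * P⁻¹) * X * (P * P⁻¹) - s • (P * P⁻¹) := by
          simp only [mul_sub, sub_mul, mul_assoc, mul_smul_comm, smul_mul_assoc, mul_one, one_mul]
      _ = X - s • 1 := by rw [h1]; simp
  rcases hform with hf | hf
  · have := hpres _ hm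
    have e : P⁻¹ * X * P = s • 1 + (P⁻¹ * X * P - s • 1) := by abel
    rw [e, map_add, map_smul, hf (P⁻¹ * X * P - s • 1) (by simp [trace_sub, htr]), hc] at this
    convert this using 1
    simp [mul_add]
  · have := hpres _ (transpose_mem hm)
    have e : (P⁻¹ * X * P)ᵀ = s • 1 + (P⁻¹ * X * P - s • 1)ᵀ := by
      rw [transpose_sub, transpose_smul, transpose_one]; abel
    rw [e, map_add, map_smul, hf (P⁻¹ * X * P - s • 1)ᵀ (by rw [trace_transpose]; simp [trace_sub, htr]), transpose_transpose, hc] at this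
    convert this using 1
    simp [mul_add]

/-- Square-zero perturbations. -/
theorem step1 (h2 : (2:F) ≠ 0) (r : F) (hr : r ≠ 0) (A B : Matrix (Fin n) (Fin n) F) (hA : A ∈ ProdInv2 F n)
    (hAB : A * B = 1)
    (K : ∀ X ∈ ProdInv2 F n, ∀ s : F, trace X = s * n →
      A * (s • 1 + r • (X - s • 1)) ∈ ProdInv2 F n)
    (D N : Matrix (Fin n) (Fin n) F) (hD : D * D = 1) (hDN : D * N * D = - N) (hN : N * N = 0) :
    trace (A * N) = - trace (B * N) := by
  have ht : trace N = 0 := by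
    have h : trace (D * N * D) = trace N := by
      rw [trace_mul_comm, ← mul_assoc, hD, one_mul]
    rw [hDN, trace_neg] at h
    have : 2 * trace N = 0 := by linear_combination -h
    simpa [h2] using this
  have hX : (1 + N) ∈ ProdInv2 F n := by
    apply mem_of_conj hD
    have : D * (1 + N) * D = 1 - N := by
      rw [mul_add, add_mul, hDN, mul_one, hD]; abel
    rw [this]
    calc (1 - N) * (1 + N) = 1 - N * N := by noncomm_ring
      _ = 1 := by rw [hN, sub_zero]
  have h := K _ hX 1 (by simp [ht])
  have e : (1:F) • (1 : Matrix (Fin n) (Fin n) F) + r • (1 + N - (1:F) • 1) = 1 + r • N := by simp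
  rw [e] at h
  have hi : A * (1 + r • N) * ((1 - r • N) * B) = 1 := by
    have h0 : (1 + r • N) * (1 - r • N) = 1 := by
      simp [mul_sub, add_mul, hN]
    rw [mul_assoc, ← mul_assoc _ _ B, h0, one_mul, hAB]
  have t1 := trace_eq h hi
  have t2 := trace_eq hA hAB
  rw [trace_mul_comm (1 - r • N)] at t1
  simp [mul_add, mul_sub, t2] at t1
  have : r * (trace (A * N) + trace (B * N)) = 0 := by linear_combination t1
  have := (mul_eq_zero.mp this).resolve_left hr
  linear_combination this

theorem step2 (h2 : (2:F) ≠ 0) (r : F) (hr : r ≠ 0) (A B : Matrix (Fin n) (Fin n) F) (hA : A ∈ ProdInv2 F n)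
    (hAB : A * B = 1)
    (K : ∀ X ∈ ProdInv2 F n, ∀ s : F, trace X = s * n →
      A * (s • 1 + r • (X - s • 1)) ∈ ProdInv2 F n)
    (D M : Matrix (Fin n) (Fin n) F) (hD : D * D = 1) (hDM : D * M * D = - M)
    (hM : M * M * M = 0) (hMt : trace (M * M) = 0) :
    2 * trace (A * M) + 2 * trace (A * (M * M))
      = -2 * trace (B * M) - 2 * trace (B * (M * M)) + 4 * r * trace (B * (M * M)) := by
  have ht : trace M = 0 := by
    have h : trace (D * M * D) = trace M := by
      rw [trace_mul_comm, ← mul_assoc, hD, one_mul]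
    rw [hDM, trace_neg] at h
    have : 2 * trace M = 0 := by linear_combination -h
    simpa [h2] using this
  have hDMM : D * (M * M) * D = M * M := by
    calc D * (M * M) * D = D * M * 1 * M * D := by noncomm_ring
      _ = (D * M * D) * (D * M * D) := by rw [← hD]; noncomm_ring
      _ = M * M := by rw [hDM]; noncomm_ring
  have h4 : M * M * (M * M) = 0 := by rw [← mul_assoc, hM, zero_mul]
  have h3 : M * (M * M) = 0 := by rw [← mul_assoc, hM]
  have hX : (1 + (2:F) • (M + M * M)) ∈ ProdInv2 F n := by
    apply mem_of_conj hD
    have : D * (1 + (2:F) • (M + M * M)) * D = 1 + (2:F) • (M * M - M) := by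
      simp only [mul_add, add_mul, mul_smul_comm, smul_mul_assoc, smul_add, hDM, hDMM, mul_one, hD]
      module
    rw [this]
    simp only [mul_add, add_mul, mul_sub, sub_mul, mul_smul_comm, smul_mul_assoc, smul_add, smul_sub, hM, h3, h4, mul_one, one_mul]
    module
  have h := K _ hX 1 (by simp [ht, hMt])
  have e : (1:F) • (1 : Matrix (Fin n) (Fin n) F) + r • (1 + (2:F) • (M + M * M) - (1:F) • 1)
     = 1 + (2 * r) • (M + M * M) := by module
  rw [e] at h
  have hi0 : (1 + (2 * r) • (M + M * M)) * (1 - (2 * r) • (M + M * M) + (4 * r * r) • (M * M)) = 1 := by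
    simp only [mul_add, add_mul, mul_sub, sub_mul, mul_smul_comm, smul_mul_assoc, smul_add, smul_sub, hM, h3, h4, mul_one, one_mul]
    module
  have hi : A * (1 + (2 * r) • (M + M * M)) *
      ((1 - (2 * r) • (M + M * M) + (4 * r * r) • (M * M)) * B) = 1 := by
    rw [mul_assoc, ← mul_assoc _ _ B, hi0, one_mul, hAB]
  have t1 := trace_eq h hi
  have t2 := trace_eq hA hAB
  rw [trace_mul_comm _ B] at t1
  simp only [mul_add, mul_sub, trace_add, trace_sub, mul_smul_comm, trace_smul, smul_eq_mul,
    mul_one, smul_add, t2] at t1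
  apply mul_left_cancel₀ hr
  linear_combination t1

/-- diagonal sign matrix with `-1` at `k`. -/
def sgn (F : Type*) [Field F] {n : ℕ} (k : Fin n) : Matrix (Fin n) (Fin n) F :=
  1 - (2:F) • single k k 1

theorem sgn_sq (k : Fin n) : sgn F k * sgn F k = 1 := by
  simp only [sgn, mul_sub, sub_mul, mul_smul_comm, smul_mul_assoc, mul_one, one_mul,
    single_mul_single_same]
  module

theorem conj_sq {Q Q' D : Matrix (Fin n) (Fin n) F} (h : Q' * Q = 1) (E : Matrix (Fin n) (Fin n) F) :
    (Q * D * Q') * (Q * E * Q') = Q * (D * E) * Q' := by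
  calc _ = Q * D * (Q' * Q) * E * Q' := by noncomm_ring
    _ = _ := by rw [h]; noncomm_ring

theorem sgn_left (i j : Fin n) (h : i ≠ j) : sgn F i * single i j 1 * sgn F i = - single i j 1 := by
  have := h.symm
  simp only [sgn, mul_sub, sub_mul, mul_smul_comm, smul_mul_assoc, mul_one, one_mul,
    single_mul_single_same, single_mul_single_of_ne, ne_eq, h, this, not_false_eq_true, smul_zero, zero_mul, sub_zero]
  module

theorem sgn_right (i j : Fin n) (h : i ≠ j) : sgn F j * single i j 1 * sgn F j = - single i j 1 := by
  have := h.symm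
  simp only [sgn, mul_sub, sub_mul, mul_smul_comm, smul_mul_assoc, mul_one, one_mul,
    single_mul_single_same, single_mul_single_of_ne, ne_eq, h, this, not_false_eq_true, smul_zero, zero_mul, sub_zero]
  module

theorem rank_one (h2 : (2:F) ≠ 0) (r : F) (hr : r ≠ 0) (A B : Matrix (Fin n) (Fin n) F) (hA : A ∈ ProdInv2 F n)
    (hAB : A * B = 1)
    (K : ∀ X ∈ ProdInv2 F n, ∀ s : F, trace X = s * n →
      A * (s • 1 + r • (X - s • 1)) ∈ ProdInv2 F n)
    (i j : Fin n) (Q Q' : Matrix (Fin n) (Fin n) F) (hij : i ≠ j) (hQ : Q' * Q = 1) :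
    trace (A * (Q * single i j 1 * Q')) = - trace (B * (Q * single i j 1 * Q')) := by
  have hQ' : Q * Q' = 1 := mul_eq_one_comm.mp hQ
  apply step1 h2 r hr A B hA hAB K (Q * sgn F i * Q')
  · rw [conj_sq hQ, sgn_sq, mul_one, hQ']
  · rw [conj_sq hQ, conj_sq hQ, sgn_left i j hij]; simp
  · rw [conj_sq hQ]; simp [hij.symm]

theorem big (h2 : (2:F) ≠ 0) (hn : 3 ≤ n) (r : F) (hr : r ≠ 0) (A B : Matrix (Fin n) (Fin n) F) (hA : A ∈ ProdInv2 F n)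
    (hAB : A * B = 1)
    (K : ∀ X ∈ ProdInv2 F n, ∀ s : F, trace X = s * n →
      A * (s • 1 + r • (X - s • 1)) ∈ ProdInv2 F n) : ∃ l : F, B = l • 1 := by
  apply scal (by omega)
  intro i j Q Q' hij hQ
  have hQ' : Q * Q' = 1 := mul_eq_one_comm.mp hQ
  have h1 := rank_one h2 r hr A B hA hAB K i j Q Q' hij hQ
  obtain ⟨k, hk⟩ : ∃ k : Fin n, k ∉ ({i, j} : Finset (Fin n)) := by
    by_contra hcon
    push Not at hcon
    have := Finset.card_le_card (fun x _ => hcon x : (Finset.univ : Finset (Fin n)) ⊆ {i, j})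
    have h' := Finset.card_le_two (a := i) (b := j)
    simp at this
    omega
  simp only [Finset.mem_insert, Finset.mem_singleton, not_or] at hk
  obtain ⟨hki, hkj⟩ := hk
  set M : Matrix (Fin n) (Fin n) F := single i k 1 + single k j 1 with hM
  have hMM : M * M = single i j 1 := by
    simp [hM, mul_add, add_mul, hki, hij.symm, Ne.symm hkj]
  have hMMM : M * M * M = 0 := by
    rw [hMM]; simp [hM, mul_add, hij.symm, Ne.symm hkj]
  have hsM : sgn F k * M * sgn F k = - M := by
    rw [hM, mul_add, add_mul, sgn_right i k (Ne.symm hki), sgn_left k j hkj]; abel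
  have hD : (Q * sgn F k * Q') * (Q * sgn F k * Q') = 1 := by
    rw [conj_sq hQ, sgn_sq, mul_one, hQ']
  have hDM : (Q * sgn F k * Q') * (Q * M * Q') * (Q * sgn F k * Q') = - (Q * M * Q') := by
    rw [conj_sq hQ, conj_sq hQ, hsM]; simp
  have hq : (Q * M * Q') * (Q * M * Q') = Q * single i j 1 * Q' := by rw [conj_sq hQ, hMM]
  have hcub : (Q * M * Q') * (Q * M * Q') * (Q * M * Q') = 0 := by
    rw [conj_sq hQ, conj_sq hQ, hMMM]; simp
  have htr : trace ((Q * M * Q') * (Q * M * Q')) = 0 := by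
    rw [hq, trace_mul_comm, ← mul_assoc, hQ, one_mul]
    exact trace_single_eq_of_ne _ _ _ hij
  have a := step2 h2 r hr A B hA hAB K _ (Q * M * Q') hD hDM hcub htr
  have b := step2 h2 r hr A B hA hAB K (Q * sgn F k * Q') (-(Q * M * Q')) hD
    (by rw [mul_neg, neg_mul, hDM]) (by rw [neg_mul_neg, mul_neg, hcub, neg_zero])
    (by rw [neg_mul_neg, htr])
  rw [neg_mul_neg, hq, mul_neg, mul_neg, trace_neg, trace_neg] at b
  rw [hq] at a
  have : 2 * 2 * 2 * r * trace (B * (Q * single i j 1 * Q')) = 0 := by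
    linear_combination -a - b + 4 * h1
  simpa [h2, hr] using this

theorem small (h2 : (2:F) ≠ 0) (r : F) (hr : r ≠ 0) (A B : Matrix (Fin 2) (Fin 2) F) (hA : A ∈ ProdInv2 F 2)
    (hAB : A * B = 1)
    (K : ∀ X ∈ ProdInv2 F 2, ∀ s : F, trace X = s * (2:ℕ) →
      A * (s • 1 + r • (X - s • 1)) ∈ ProdInv2 F 2) : ∃ l : F, A = l • 1 := by
  obtain ⟨c, hc⟩ := scal le_rfl (A + B) (fun i j Q Q' hij hQ => by
    rw [add_mul, trace_add, rank_one h2 r hr A B hA hAB K i j Q Q' hij hQ]; ring)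
  have hB : B = c • 1 - A := by rw [← hc]; abel
  by_cases hrr : r * r = -1
  · exfalso
    have main : ∀ s : F, s * s * (s * s - 1) = 0 := by
      intro s
      have hX : !![2 * s, -1; 1, 0] ∈ ProdInv2 F 2 := by
        refine ⟨!![0, 1; 1, 0], !![1, 0; 2 * s, -1], ?_, ?_, ?_⟩ <;>
        · ext i j; fin_cases i <;> fin_cases j <;> simp [Matrix.mul_apply, Fin.sum_univ_two]
      have h := det_sq (K _ hX s (by simp [trace_fin_two]; ring))
      have ha := det_sq hA
      rw [det_mul] at h
      have e : det (s • (1 : Matrix (Fin 2) (Fin 2) F) + r • (!![2 * s, -1; 1, 0] - s • 1)) = 2 * s * s - 1 := by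
        simp [det_fin_two]
        linear_combination (-s * s + 1) * hrr
      rw [e] at h
      have : 2 * 2 * (s * s * (s * s - 1)) = 0 := by
        linear_combination h - (2 * s * s - 1) ^ 2 * ha
      simpa [h2] using this
    have m1 := main r
    rw [hrr] at m1
    have : (2:F) = 0 := by linear_combination m1
    exact h2 this
  · have main : ∀ J : Matrix (Fin 2) (Fin 2) F, J * J = 1 → trace J = 0 → trace (A * J) = 0 := by
      intro J hJ ht
      have h := K J ⟨J, 1, hJ, one_mul 1, (mul_one J).symm⟩ 0 (by simp [ht])
      have e : (0:F) • (1 : Matrix (Fin 2) (Fin 2) F) + r • (J - (0:F) • 1) = r • J := by simp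
      rw [e] at h
      have hi : A * (r • J) * ((r⁻¹ • J) * B) = 1 := by
        have : (r • J) * (r⁻¹ • J) = 1 := by simp [hJ, smul_smul, hr]
        rw [mul_assoc, ← mul_assoc _ _ B, this, one_mul, hAB]
      have t := trace_eq h hi
      rw [trace_mul_comm _ B, hB] at t
      simp [sub_mul, ht] at t
      have : (r * r + 1) * trace (A * J) = 0 := by
        field_simp at t
        linear_combination t
      refine (mul_eq_zero.mp this).resolve_left (fun h => hrr (by linear_combination h))
    have a := main !![1, 0; 0, -1] (by ext i j; fin_cases i <;> fin_cases j <;> simp) (by simp [trace_fin_two])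
    have b := main !![1, 1; 0, -1] (by ext i j; fin_cases i <;> fin_cases j <;> simp) (by simp [trace_fin_two])
    have d := main !![1, 0; 1, -1] (by ext i j; fin_cases i <;> fin_cases j <;> simp) (by simp [trace_fin_two])
    simp [trace_fin_two, Matrix.mul_apply, Fin.sum_univ_two] at a b d
    refine ⟨A 0 0, ?_⟩
    ext i j
    fin_cases i <;> fin_cases j <;> simp
    · linear_combination d - a
    · linear_combination b - a
    · linear_combination -a

theorem fin (hn : 2 ≤ n) (l : F) (A : Matrix (Fin n) (Fin n) F) (hA : A ∈ ProdInv2 F n)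
    (h : A = l • 1) : A = 1 ∨ A = -1 := by
  obtain ⟨J, K, hJ, hK, e⟩ := hA
  have h1 : J = l • K := by
    calc J = J * (K * K) := by rw [hK, mul_one]
      _ = l • K := by rw [← mul_assoc, ← e, h, smul_mul_assoc, one_mul]
  rw [h1] at hJ
  rw [smul_mul_smul_comm, hK] at hJ
  have hl : l * l = 1 := by
    have := congrFun (congrFun hJ ⟨0, by omega⟩) ⟨0, by omega⟩
    simpa using this
  rcases mul_self_eq_one_iff.mp hl with rfl | rfl
  · left; simpa using h
  · right; simpa using h

end Stmt7Aux

theorem stmt7 (F : Type*) [Field F] (hchar : ringChar F ≠ 2) (n : ℕ) (hn : 2 ≤ n)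
    (T : Matrix (Fin n) (Fin n) F →ₗ[F] Matrix (Fin n) (Fin n) F)
    (hT : Function.Bijective T)
    (hpres : ∀ A ∈ ProdInv2 F n, T A ∈ ProdInv2 F n)
    (r : F) (hr : r ≠ 0) (P : Matrix (Fin n) (Fin n) F) (hP : IsUnit P)
    (hform : (∀ X, Matrix.trace X = 0 → T X = r • (T 1 * (P * X * P⁻¹))) ∨
             (∀ X, Matrix.trace X = 0 → T X = r • (T 1 * (P * Xᵀ * P⁻¹)))) :
    T 1 = 1 ∨ T 1 = -1 := by
  have h2 : (2:F) ≠ 0 := Ring.two_ne_zero hchar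
  have hA : T 1 ∈ ProdInv2 F n := hpres 1 ⟨1, 1, one_mul 1, one_mul 1, (one_mul 1).symm⟩
  have K := Stmt7Aux.key hn T hpres r P hP hform
  have hAB : T 1 * (T 1)⁻¹ = 1 :=
    mul_nonsing_inv _ (IsUnit.of_mul_eq_one _ (Stmt7Aux.det_sq hA))
  generalize T 1 = A at hA K hAB ⊢
  rcases Nat.lt_or_ge 2 n with h3 | h3
  · obtain ⟨l, hl⟩ := Stmt7Aux.big h2 h3 r hr A _ hA hAB K
    rw [hl, mul_smul_comm, mul_one] at hAB
    have hl0 : l ≠ 0 := by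
      rintro rfl
      have := congrFun (congrFun hAB ⟨0, by omega⟩) ⟨0, by omega⟩
      simp at this
    refine Stmt7Aux.fin hn l⁻¹ A hA ?_
    rw [← hAB, smul_smul, inv_mul_cancel₀ hl0, one_smul]
  · obtain rfl : n = 2 := by omega
    obtain ⟨l, hl⟩ := Stmt7Aux.small h2 r hr A _ hA hAB K
    exact Stmt7Aux.fin hn l A hA hl
end

section
/- Let F be a field with more than n elements. Then a matrix N ∈ M_n(F) is nilpotent if and only if det(I + tN) = 1 for all t ∈ F. -/
open Matrix

open Polynomial in
theorem eval_rev_aux {F : Type*} [Field F] {n : ℕ} (N : Matrix (Fin n) (Fin n) F) (t : F) :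
    N.charpolyRev.eval (-t) = (1 + t • N).det := by
  rw [charpolyRev, ← coe_evalRingHom, RingHom.map_det]
  congr 1
  ext i j
  by_cases h : i = j <;> simp [h] <;> ring

theorem stmt8 (F : Type*) [Field F] (n : ℕ) (hF : (n : Cardinal) < Cardinal.mk F)
    (N : Matrix (Fin n) (Fin n) F) :
    IsNilpotent N ↔ ∀ t : F, (1 + t • N).det = 1 := by
  constructor
  · intro h t
    obtain ⟨c, -, hc⟩ := Polynomial.isUnit_iff.mp (isUnit_charpolyRev_of_isNilpotent h)
    have h0 := eval_charpolyRev (M := N)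
    rw [← eval_rev_aux]
    rw [← hc] at h0 ⊢
    simpa using h0
  · intro h
    have hdeg : N.charpoly.natDegree = n := by simp [charpoly_natDegree_eq_dim]
    have hrev : N.charpolyRev.natDegree ≤ n := by
      rw [← reverse_charpoly]
      exact (Polynomial.reverse_natDegree_le _).trans hdeg.le
    obtain ⟨s, hs⟩ : ∃ s : Finset F, s.card = n + 1 := by
      have h1 : ((n + 1 : ℕ) : Cardinal) ≤ Cardinal.mk F := by
        rw [Nat.cast_add, Nat.cast_one]
        exact Cardinal.add_one_le_of_lt hF
      obtain ⟨s, hs⟩ := Cardinal.exists_finset_le_card F (n + 1) h1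
      obtain ⟨t, -, ht⟩ := Finset.exists_subset_card_eq hs
      exact ⟨t, ht⟩
    have h1 : N.charpolyRev - 1 = 0 := by
      apply Polynomial.eq_zero_of_natDegree_lt_card_of_eval_eq_zero' _ s
      · intro x _
        have := eval_rev_aux N (-x)
        rw [neg_neg, h] at this
        simp [this]
      · rw [hs]
        have := Polynomial.natDegree_sub_le N.charpolyRev 1
        simp at this
        omega
    have h2 : N.charpoly.reverse = 1 := by rw [reverse_charpoly]; exact sub_eq_zero.mp h1
    have h3 := Polynomial.reverse_natDegree N.charpoly
    rw [h2, Polynomial.natDegree_one] at h3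
    have h4 := (Polynomial.Monic.eq_X_pow_iff_natDegree_le_natTrailingDegree
      N.charpoly_monic).mpr (by omega)
    have h5 := N.aeval_self_charpoly
    rw [h4] at h5
    exact ⟨_, by simpa using h5⟩
end

section
/- Let F be a field with more than 2n elements, let S_n be any one of the sets B_n, C_n, D_n, and let T : M_n(F) → M_n(F) be a bijective linear map such that T(S_n) ⊆ S_n. Then T(I) is invertible and T(I)⁻¹·T(N) is nilpotent for every nilpotent matrix N ∈ M_n(F). -/
open Matrix

/-- The set of matrices that are products of three involutions. -/
def ProdInv3 (F : Type*) [Field F] (n : ℕ) : Set (Matrix (Fin n) (Fin n) F) :=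
  {A | ∃ J₁ J₂ J₃ : Matrix (Fin n) (Fin n) F,
    J₁ * J₁ = 1 ∧ J₂ * J₂ = 1 ∧ J₃ * J₃ = 1 ∧ A = J₁ * J₂ * J₃}

/-- The set of matrices that are products of four involutions. -/
def ProdInv4 (F : Type*) [Field F] (n : ℕ) : Set (Matrix (Fin n) (Fin n) F) :=
  {A | ∃ J₁ J₂ J₃ J₄ : Matrix (Fin n) (Fin n) F,
    J₁ * J₁ = 1 ∧ J₂ * J₂ = 1 ∧ J₃ * J₃ = 1 ∧ J₄ * J₄ = 1 ∧ A = J₁ * J₂ * J₃ * J₄}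

open Polynomial in
/-- On `F[X]/(X^k)` there is an involution `s` inverting multiplication by `1 + X`. -/
lemma exists_inv_quot (F : Type*) [Field F] (k : ℕ) :
    ∃ s : (F[X] ⧸ (F[X] ∙ ((X : F[X]) ^ k))) →ₗ[F] (F[X] ⧸ (F[X] ∙ ((X : F[X]) ^ k))),
      (∀ a, s (s a) = a) ∧ ∀ a, s (s a + (X : F[X]) • s a) + (X : F[X]) • s (s a + (X : F[X]) • s a) = a := by
  let I : Ideal F[X] := Ideal.span {(X : F[X]) ^ k}
  let x : F[X] ⧸ I := Ideal.Quotient.mk I X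
  have hx : x ^ k = 0 := by
    rw [← map_pow, Ideal.Quotient.eq_zero_iff_mem]
    exact Ideal.subset_span rfl
  have hn : IsNilpotent x := ⟨k, hx⟩
  obtain ⟨v, hv⟩ : ∃ v, (1 + x) * v = 1 := (hn.isUnit_one_add).exists_right_inv
  let w : F[X] ⧸ I := v - 1
  have hw : w = (-1) * x * v := by simp only [w]; linear_combination hv
  have hwk : w ^ k = 0 := by rw [hw, mul_pow, mul_pow, hx, mul_zero, zero_mul]
  let s : (F[X] ⧸ I) →ₐ[F] (F[X] ⧸ I) := Ideal.Quotient.liftₐ I (aeval w) (by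
    intro a ha
    obtain ⟨b, rfl⟩ := Ideal.mem_span_singleton.1 ha
    simp [hwk])
  have hsx : s x = w := by
    change aeval w X = w
    exact aeval_X w
  have hsu : s (1 + x) = v := by rw [map_add, map_one, hsx]; simp [w]
  have hsv : s v = 1 + x := by
    have h1 : v * s v = 1 := by rw [← hsu, ← map_mul, hsu, hv, map_one]
    linear_combination (1 + x) * h1 - s v * hv
  have hss : ∀ a, s (s a) = a := by
    have h : s.comp s = AlgHom.id F _ := by
      apply Ideal.Quotient.algHom_ext
      apply Polynomial.algHom_ext
      change s (s x) = x
      rw [hsx]; simp [w, hsv]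
    exact fun a => DFunLike.congr_fun h a
  refine ⟨s.toLinearMap, hss, ?_⟩
  intro a
  have e : ∀ b : F[X] ⧸ I, b + (X : F[X]) • b = (1 + x) * b := by
    intro b
    obtain ⟨b, rfl⟩ := Ideal.Quotient.mk_surjective b
    rw [add_mul, one_mul]; rfl
  change s (s a + (X : F[X]) • s a) + (X : F[X]) • s (s a + (X : F[X]) • s a) = a
  rw [e, e, map_mul, hss, hsu, ← mul_assoc, hv, one_mul]

open Polynomial in
lemma exists_inv_end {F V : Type*} [Field F] [AddCommGroup V] [Module F V] [Module.Finite F V]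
    (f : Module.End F V) (hf : IsNilpotent f) :
    ∃ J : Module.End F V, J * J = 1 ∧ (1 + f) * J * ((1 + f) * J) = 1 := by
  obtain ⟨m, hm⟩ := hf
  have hfin : Module.Finite F[X] (Module.AEval' f) :=
    Module.Finite.of_restrictScalars_finite F F[X] _
  have htor : Module.IsTorsion' (Module.AEval' f) (Submonoid.powers (X : F[X])) := by
    intro y
    refine ⟨⟨X ^ m, m, rfl⟩, ?_⟩
    obtain ⟨y, rfl⟩ := (Module.AEval'.of f).surjective y
    change (X ^ m : F[X]) • (Module.AEval'.of f y) = 0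
    rw [Module.AEval'.X_pow_smul_of, hm]; simp
  obtain ⟨d, k, ⟨e⟩⟩ := Module.torsion_by_prime_power_decomposition
    (M := Module.AEval' f) (p := (X : F[X])) irreducible_X htor
  choose s hs1 hs2 using fun i => exists_inv_quot F (k i)
  let e2 := e.trans (DirectSum.linearEquivFunOnFintype F[X] (Fin d)
    (fun i => F[X] ⧸ (F[X] ∙ ((X : F[X]) ^ k i))))
  let g : V ≃ₗ[F] (∀ i, F[X] ⧸ (F[X] ∙ ((X : F[X]) ^ k i))) :=
    (Module.AEval'.of f).trans (e2.restrictScalars F)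
  let L : Module.End F (∀ i, F[X] ⧸ (F[X] ∙ ((X : F[X]) ^ k i))) :=
    LinearMap.pi fun i => (s i).comp (LinearMap.proj i)
  have hL : ∀ z i, L z i = s i (z i) := fun z i => rfl
  have hg : ∀ v, g (f v) = (X : F[X]) • g v := by
    intro v
    change e2 (Module.AEval'.of f (f v)) = X • e2 (Module.AEval'.of f v)
    rw [← map_smul, Module.AEval'.X_smul_of]
  refine ⟨(g.symm : _ →ₗ[F] V) ∘ₗ L ∘ₗ (g : V →ₗ[F] _), ?_, ?_⟩
  · ext v
    apply g.injective
    funext i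
    simp [hL, hs1]
  · ext v
    apply g.injective
    funext i
    have h := hs2 i (g v i)
    simp only [smul_add, map_add] at h
    simpa [hL, hg] using h

lemma one_add_mem {F : Type*} [Field F] {n : ℕ} (N : Matrix (Fin n) (Fin n) F)
    (hN : IsNilpotent N) : 1 + N ∈ ProdInv2 F n := by
  obtain ⟨J, h1, h2⟩ := exists_inv_end (Matrix.toLinAlgEquiv' N) (hN.map _)
  refine ⟨(1 + N) * Matrix.toLinAlgEquiv'.symm J, Matrix.toLinAlgEquiv'.symm J, ?_, ?_, ?_⟩
  · apply Matrix.toLinAlgEquiv'.injective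
    simpa using h2
  · rw [← map_mul, h1, map_one]
  · rw [mul_assoc, ← map_mul, h1, map_one, mul_one]

lemma det_sq_of_inv {F : Type*} [Field F] {n : ℕ} {J : Matrix (Fin n) (Fin n) F}
    (h : J * J = 1) : J.det ^ 2 = 1 := by
  rw [sq, ← Matrix.det_mul, h, Matrix.det_one]

open Polynomial in
theorem stmt9 (F : Type*) [Field F] (n : ℕ)
    (hF : ((2 * n : ℕ) : Cardinal) < Cardinal.mk F)
    (S : Set (Matrix (Fin n) (Fin n) F))
    (hS : S = ProdInv2 F n ∨ S = ProdInv3 F n ∨ S = ProdInv4 F n)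
    (T : Matrix (Fin n) (Fin n) F →ₗ[F] Matrix (Fin n) (Fin n) F)
    (hT : Function.Bijective T) (hpres : ∀ A ∈ S, T A ∈ S) :
    IsUnit (T 1) ∧ ∀ N : Matrix (Fin n) (Fin n) F, IsNilpotent N →
      IsNilpotent ((T 1)⁻¹ * T N) := by
  have hmem : ∀ N : Matrix (Fin n) (Fin n) F, IsNilpotent N → 1 + N ∈ S := by
    intro N hN
    obtain ⟨J₁, J₂, h1, h2, h⟩ := one_add_mem N hN
    rcases hS with rfl | rfl | rfl
    · exact ⟨J₁, J₂, h1, h2, h⟩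
    · exact ⟨J₁, J₂, 1, h1, h2, by simp, by simp [h]⟩
    · exact ⟨J₁, J₂, 1, 1, h1, h2, by simp, by simp, by simp [h]⟩
  have hdet : ∀ A ∈ S, A.det ^ 2 = 1 := by
    intro A hA
    rcases hS with rfl | rfl | rfl
    · obtain ⟨J₁, J₂, h1, h2, rfl⟩ := hA
      simp [mul_pow, det_sq_of_inv, *]
    · obtain ⟨J₁, J₂, J₃, h1, h2, h3, rfl⟩ := hA
      simp [mul_pow, det_sq_of_inv, *]
    · obtain ⟨J₁, J₂, J₃, J₄, h1, h2, h3, h4, rfl⟩ := hA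
      simp [mul_pow, det_sq_of_inv, *]
  have key : ∀ N : Matrix (Fin n) (Fin n) F, IsNilpotent N → (T 1 + T N).det ^ 2 = 1 := by
    intro N hN
    rw [← map_add]
    exact hdet _ (hpres _ (hmem N hN))
  have hd : (T 1).det ^ 2 = 1 := by simpa using key 0 IsNilpotent.zero
  have hu : IsUnit (T 1).det := by
    apply IsUnit.of_mul_eq_one (T 1).det
    rw [← sq, hd]
  refine ⟨(Matrix.isUnit_iff_isUnit_det _).2 hu, ?_⟩
  intro N hN
  set Y := (T 1)⁻¹ * T N with hY
  have hTY : T 1 * Y = T N := by rw [hY, Matrix.mul_nonsing_inv_cancel_left _ _ hu]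
  have hev : ∀ x : F, x ≠ 0 → (Y.charpoly ^ 2).eval x = (X ^ (2 * n) : F[X]).eval x := by
    intro x hx
    have h1 : T 1 * (Matrix.scalar (Fin n) x - Y) = x • (T 1 + T (-(x⁻¹ • N))) := by
      have : Matrix.scalar (Fin n) x = x • (1 : Matrix (Fin n) (Fin n) F) := by
        rw [Matrix.smul_one_eq_diagonal]; rfl
      rw [this, mul_sub, hTY, map_neg, map_smul, smul_add, smul_neg, smul_smul,
        mul_inv_cancel₀ hx]
      simp [sub_eq_add_neg]
    have h2 := congrArg (fun M => M.det ^ 2) h1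
    simp only [Matrix.det_mul, mul_pow, hd, one_mul, Matrix.det_smul, Fintype.card_fin] at h2
    rw [key _ ((hN.smul x⁻¹).neg)] at h2
    rw [eval_pow, Matrix.eval_charpoly, h2, eval_pow, eval_X]
    ring
  have hmon : (Y.charpoly ^ 2).Monic := (Matrix.charpoly_monic Y).pow 2
  have hpoly : Y.charpoly ^ 2 = X ^ (2 * n) := by
    obtain ⟨s, hs⟩ : ∃ s : Finset F, s.card = 2 * n + 1 := by
      have h : ((2 * n + 1 : ℕ) : Cardinal) ≤ Cardinal.mk F := by
        have := Order.succ_le_of_lt hF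
        rw [Cardinal.succ_natCast] at this
        exact_mod_cast this
      exact Cardinal.exists_finset_eq_card h |>.imp fun _ h => h.symm
    classical
    have hdeg : (Y.charpoly ^ 2).degree = (X ^ (2 * n) : F[X]).degree := by
      rw [degree_pow, Matrix.charpoly_degree_eq_dim, degree_X_pow]; simp
    have hlt : (Y.charpoly ^ 2 - X ^ (2 * n)).degree < ((2 * n : ℕ) : WithBot ℕ) := by
      have := degree_sub_lt_left hdeg hmon.ne_zero (by simp [hmon.leadingCoeff])
      rwa [hdeg, degree_X_pow] at this
    refine eq_of_degree_sub_lt_of_eval_finset_eq (s.erase 0) (hlt.trans_le ?_) ?_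
    · have := Finset.pred_card_le_card_erase (s := s) (a := (0 : F))
      exact_mod_cast (by omega : 2 * n ≤ (s.erase 0).card)
    · intro x hx
      exact hev x (Finset.ne_of_mem_erase hx)
  refine ⟨2 * n, ?_⟩
  have h := congrArg (aeval Y) hpoly
  rw [map_pow, Matrix.aeval_self_charpoly, map_pow, aeval_X] at h
  rw [← h]; simp
end

section
/- Let F be a field, let n ≥ 2, let S_n be any one of the sets B_n, C_n, D_n, and let T : M_n(F) → M_n(F) be a bijective linear map such that T(S_n) ⊆ S_n. Then there exist a scalar r ∈ F with r^(2n) = 1 and an invertible matrix P ∈ M_n(F) such that either T(X) = r·T(I)·P·X·P⁻¹ for all X ∈ M_n(F) with trace(X) = 0, or T(X) = r·T(I)·P·Xᵗ·P⁻¹ for all X ∈ M_n(F) with trace(X) = 0. Moreover, if char(F) = p > 0 and p divides n, then r = 1. -/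
open Matrix

/-- `A` is inverted by an involution. -/
def Rev {F V : Type*} [Field F] [AddCommGroup V] [Module F V] (A : Module.End F V) : Prop :=
  ∃ J : Module.End F V, (∀ x, J (J x) = x) ∧ ∀ x, A (J (A x)) = J x

section quot
open Polynomial

theorem rev_quot {F : Type*} [Field F] (k : ℕ) :
    ∃ j : (F[X] ⧸ (F[X] ∙ ((X - 1 : F[X]) ^ k))) →ₗ[F] (F[X] ⧸ (F[X] ∙ ((X - 1 : F[X]) ^ k))),
      (∀ m, j (j m) = m) ∧ ∀ m, (X : F[X]) • j ((X : F[X]) • m) = j m := by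
  let I : Ideal F[X] := Ideal.span {((X - 1 : F[X]) ^ k)}
  change ∃ j : (F[X] ⧸ I) →ₗ[F] (F[X] ⧸ I), (∀ m, j (j m) = m) ∧ ∀ m, (X : F[X]) • j ((X : F[X]) • m) = j m
  let x : F[X] ⧸ I := Ideal.Quotient.mk I X
  have hnil : (x - 1) ^ k = 0 := by
    have : (x - 1) ^ k = Ideal.Quotient.mk I ((X - 1) ^ k) := by simp [x]
    rw [this, Ideal.Quotient.eq_zero_iff_mem]
    exact Ideal.subset_span rfl
  have hu : IsUnit x := by
    have := IsNilpotent.isUnit_one_add (r := x - 1) ⟨k, hnil⟩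
    simpa using this
  obtain ⟨y, hy⟩ := hu.exists_right_inv
  have hyk : (y - 1) ^ k = 0 := by
    have : y - 1 = -y * (x - 1) := by linear_combination hy
    rw [this, mul_pow, hnil, mul_zero]
  have hker : ∀ a : F[X], a ∈ I → aeval y a = 0 := by
    intro a ha
    obtain ⟨b, rfl⟩ := Ideal.mem_span_singleton'.1 ha
    simp [hyk]
  let j : (F[X] ⧸ I) →ₐ[F] (F[X] ⧸ I) := Ideal.Quotient.liftₐ I (aeval y) hker
  have jx : j x = y := by
    change j (Ideal.Quotient.mk I X) = y
    exact (Ideal.Quotient.lift_mk I _ hker).trans (aeval_X y)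
  have jy : j y = x := by
    have h1 : j x * j y = 1 := by rw [← map_mul, hy, map_one]
    rw [jx] at h1
    calc j y = (x * y) * j y := by rw [hy, one_mul]
      _ = x * (y * j y) := by ring
      _ = x := by rw [h1, mul_one]
  have jj : j.comp j = AlgHom.id F _ := by
    apply Ideal.Quotient.algHom_ext
    apply Polynomial.algHom_ext
    change j (j x) = x
    rw [jx, jy]
  have smul_eq : ∀ m : F[X] ⧸ I, (X : F[X]) • m = x * m := by
    intro m; obtain ⟨m, rfl⟩ := Ideal.Quotient.mk_surjective m; rfl
  refine ⟨j.toLinearMap, fun m => ?_, fun m => ?_⟩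
  · exact DFunLike.congr_fun jj m
  · change (X : F[X]) • j ((X : F[X]) • m) = j m
    rw [smul_eq, smul_eq, map_mul, jx, ← mul_assoc, hy, one_mul]

theorem rev_unipotent {F V : Type*} [Field F] [AddCommGroup V] [Module F V] [FiniteDimensional F V]
    (A : Module.End F V) (k : ℕ) (h : (A - 1) ^ k = 0) : Rev A := by
  classical
  have hirr : Irreducible (X - 1 : F[X]) := by simpa using irreducible_X_sub_C (1 : F)
  have htor : Module.IsTorsion' (Module.AEval' A) (Submonoid.powers (X - 1 : F[X])) := by
    intro m
    refine ⟨⟨(X - 1) ^ k, k, rfl⟩, ?_⟩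
    obtain ⟨m, rfl⟩ := (Module.AEval'.of A).surjective m
    change ((X - 1 : F[X]) ^ k) • (Module.AEval'.of A m) = 0
    have := Module.AEval.of_aeval_smul (R := F) (a := A) ((X - 1 : F[X]) ^ k) m
    refine this.symm.trans ?_
    have h2 : aeval A ((X - 1 : F[X]) ^ k) = 0 := by simpa using h
    rw [h2]; simp
  obtain ⟨d, ks, ⟨Φ⟩⟩ := Module.torsion_by_prime_power_decomposition hirr htor
  choose j hj1 hj2 using fun i => rev_quot (F := F) (ks i)
  let J := DirectSum.lmap j
  have hJ1 : ∀ m, J (J m) = m := by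
    intro m
    ext i
    simp only [J, DirectSum.lmap_apply, hj1]
  have hJ2 : ∀ m, (X : F[X]) • J ((X : F[X]) • m) = J m := by
    intro m
    ext i
    simp only [J, DirectSum.lmap_apply, DirectSum.smul_apply, hj2]
  let Ψ := (Module.AEval'.of A).trans (Φ.restrictScalars F)
  have hΨ : ∀ x, Ψ (A x) = (X : F[X]) • Ψ x := by
    intro x
    change Φ (Module.AEval'.of A (A x)) = (X : F[X]) • Φ (Module.AEval'.of A x)
    rw [← map_smul, Module.AEval'.X_smul_of]
  refine ⟨Ψ.symm.toLinearMap ∘ₗ J ∘ₗ Ψ.toLinearMap, fun x => ?_, fun x => ?_⟩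
  · simp [hJ1]
  · apply Ψ.injective
    rw [hΨ]
    simp only [LinearMap.comp_apply, LinearEquiv.coe_coe, LinearEquiv.apply_symm_apply, hΨ, hJ2]

end quot

/-- The class of matrices used: unipotent, or with an additional cyclic 2-block. -/
def Nice {F V : Type*} [Field F] [AddCommGroup V] [Module F V] (A : Module.End F V) : Prop :=
  ∃ (v : V) (c : F) (k : ℕ), c ≠ 2 ∧ A (A v) = c • A v - v ∧
    (v = 0 ∨ ∀ a b : F, a • v + b • A v = 0 → a = 0 ∧ b = 0) ∧
    ∀ x, ∃ a b : F, ((A - 1) ^ k) (x - a • v - b • A v) = 0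

theorem nice_unip {F V : Type*} [Field F] [AddCommGroup V] [Module F V] (A : Module.End F V)
    (k : ℕ) (h : (A - 1) ^ k = 0) : Nice A :=
  ⟨0, 1, k, by
    intro h; have : (1 : F) = 0 := by linear_combination -h
    exact one_ne_zero this, by simp, Or.inl rfl, fun x => ⟨0, 0, by rw [h]; simp⟩⟩

theorem Rev.conj {F V W : Type*} [Field F] [AddCommGroup V] [Module F V] [AddCommGroup W] [Module F W]
    (A : Module.End F V) (B : Module.End F W) (Φ : W ≃ₗ[F] V) (h : ∀ w, Φ (B w) = A (Φ w))
    (hB : Rev B) : Rev A := by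
  obtain ⟨J, h1, h2⟩ := hB
  refine ⟨Φ.toLinearMap ∘ₗ J ∘ₗ Φ.symm.toLinearMap, fun x => by simp [h1], fun x => ?_⟩
  obtain ⟨w, rfl⟩ := Φ.surjective x
  simp only [LinearMap.comp_apply, LinearEquiv.coe_coe, LinearEquiv.symm_apply_apply]
  rw [← h, ← h, LinearEquiv.symm_apply_apply, h2]

theorem Rev.prod {F V W : Type*} [Field F] [AddCommGroup V] [Module F V] [AddCommGroup W] [Module F W]
    (A : Module.End F V) (B : Module.End F W) (hA : Rev A) (hB : Rev B) : Rev (A.prodMap B) := by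
  obtain ⟨J, h1, h2⟩ := hA
  obtain ⟨K, h3, h4⟩ := hB
  exact ⟨J.prodMap K, fun x => by simp [h1, h3], fun x => by simp [h2, h4]⟩

theorem rev_two {F : Type*} [Field F] (c : F) :
    Rev ({ toFun := fun p : F × F => (-p.2, p.1 + c * p.2), map_add' := by intros; ext <;> simp <;> ring
           map_smul' := by intros; ext <;> simp <;> ring } : Module.End F (F × F)) := by
  refine ⟨{ toFun := fun p : F × F => (p.1 + c * p.2, -p.2), map_add' := by intros; ext <;> simp <;> ring
            map_smul' := by intros; ext <;> simp <;> ring }, fun x => ?_, fun x => ?_⟩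
  · ext <;> simp
  · ext <;> simp <;> ring

theorem Nice.rev {F V : Type*} [Field F] [AddCommGroup V] [Module F V] [FiniteDimensional F V]
    (A : Module.End F V) (h : Nice A) : Rev A := by
  obtain ⟨v, c, k, hc, hv, hind, hx⟩ := h
  rcases hind with rfl | hind
  · apply rev_unipotent A k
    ext x
    obtain ⟨a, b, h⟩ := hx x
    simpa using h
  let N := (A - 1) ^ k
  have hcomm : ∀ x, N (A x) = A (N x) := by
    intro x
    have : Commute N A := ((Commute.refl A).sub_left (Commute.one_left A)).pow_left k
    exact DFunLike.congr_fun this.eq x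
  let U := LinearMap.ker N
  have hU : ∀ x ∈ U, A x ∈ U := by
    intro x hx
    rw [LinearMap.mem_ker] at hx ⊢
    rw [hcomm, hx, map_zero]
  let AU : Module.End F U := A.restrict hU
  have hAU : (AU - 1) ^ k = 0 := by
    have key : ∀ (j : ℕ) (u : U), (((AU - 1) ^ j) u : V) = ((A - 1) ^ j) (u : V) := by
      intro j
      induction j with
      | zero => intro u; simp
      | succ j ih =>
        intro u
        rw [pow_succ, pow_succ, Module.End.mul_apply, Module.End.mul_apply, ih]
        rfl
    ext u
    rw [key]
    exact u.2
  have hrU := rev_unipotent AU k hAU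
  have hr := Rev.prod _ _ (rev_two c) hrU
  let φ : (F × F) × U →ₗ[F] V :=
    { toFun := fun p => p.1.1 • v + p.1.2 • A v + (p.2 : V)
      map_add' := by intros; simp only [Prod.fst_add, Prod.snd_add, Submodule.coe_add]; module
      map_smul' := by intros; simp only [Prod.smul_fst, Prod.smul_snd, Submodule.coe_smul, smul_eq_mul, RingHom.id_apply]; module }
  have hE : ∀ (j : ℕ) (a b : F), ((A - 1) ^ j) (a • v + b • A v) = 0 → a • v + b • A v = 0 := by
    intro j
    induction j with
    | zero => intro a b h; simpa using h
    | succ j ih =>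
      intro a b h
      have e1 : (A - 1) (a • v + b • A v) = (-a - b) • v + (a + c * b - b) • A v := by
        simp only [LinearMap.sub_apply, map_add, map_smul, hv, Module.End.one_apply]; module
      rw [pow_succ, Module.End.mul_apply, e1] at h
      obtain ⟨h1, h2⟩ := hind _ _ (ih _ _ h)
      have hb : (c - 2) * b = 0 := by linear_combination h1 + h2
      have hb0 : b = 0 := (mul_eq_zero.1 hb).resolve_left (sub_ne_zero.2 hc)
      have ha0 : a = 0 := by rw [hb0] at h1; simpa using h1
      simp [hb0, ha0]
  have hinj : Function.Injective φ := by
    rw [← LinearMap.ker_eq_bot, LinearMap.ker_eq_bot']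
    rintro ⟨⟨a, b⟩, u⟩ h
    change a • v + b • A v + (u : V) = 0 at h
    have h2 : a • v + b • A v = -(u : V) := eq_neg_of_add_eq_zero_left h
    have h3 : a • v + b • A v = 0 := by
      apply hE k
      rw [h2, map_neg]
      have : ((A - 1) ^ k) (u : V) = 0 := u.2
      rw [this, neg_zero]
    obtain ⟨rfl, rfl⟩ := hind _ _ h3
    have : (u : V) = 0 := by simpa using h
    have hu : u = 0 := Subtype.ext this
    simp [hu]
  have hsurj : Function.Surjective φ := by
    intro x
    obtain ⟨a, b, h⟩ := hx x
    refine ⟨((a, b), ⟨x - a • v - b • A v, h⟩), ?_⟩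
    change a • v + b • A v + (x - a • v - b • A v) = x
    abel
  refine Rev.conj A _ (LinearEquiv.ofBijective φ ⟨hinj, hsurj⟩) ?_ hr
  rintro ⟨⟨a, b⟩, u⟩
  change (-b) • v + (a + c * b) • A v + (A u : V) = A (a • v + b • A v + (u : V))
  simp only [map_add, map_smul, hv]; module

theorem Nice.lift {F V V' : Type*} [Field F] [AddCommGroup V] [Module F V]
    [AddCommGroup V'] [Module F V'] (A : Module.End F V) (B : Module.End F V') (p : V →ₗ[F] V')
    (e : V) (hsurj : Function.Surjective p) (hker : ∀ x, p x = 0 → ∃ s : F, x = s • e)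
    (he : p e = 0) (hA : A e = e) (hAB : ∀ x, p (A x) = B (p x)) (hB : Nice B) : Nice A := by
  obtain ⟨v', c, k, hc, hv, hind, hx⟩ := hB
  have hpow : ∀ (j : ℕ) x, p (((A - 1) ^ j) x) = ((B - 1) ^ j) (p x) := by
    intro j
    induction j with
    | zero => intro x; simp
    | succ j ih =>
      intro x
      rw [pow_succ, pow_succ, Module.End.mul_apply, Module.End.mul_apply, ih]
      simp [hAB]
  have hkill : ∀ x, p (((A - 1) ^ k) x) = 0 → ((A - 1) ^ (k + 1)) x = 0 := by
    intro x h
    obtain ⟨s, hs⟩ := hker _ h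
    rw [pow_succ', Module.End.mul_apply, hs]
    simp [hA]
  obtain ⟨v0, rfl⟩ := hsurj v'
  have h2c : (2 : F) - c ≠ 0 := sub_ne_zero.2 (Ne.symm hc)
  rcases hind with h0 | hind
  · refine ⟨0, c, k + 1, hc, by simp, Or.inl rfl, fun x => ?_⟩
    obtain ⟨a, b, h⟩ := hx (p x)
    refine ⟨0, 0, ?_⟩
    rw [h0] at h
    apply hkill
    rw [hpow]
    simpa using h
  · have hy : p (A (A v0) - c • A v0 + v0) = 0 := by
      simp only [map_add, map_sub, map_smul, hAB, hv]; abel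
    obtain ⟨β, hβ⟩ := hker _ hy
    have hAA : A (A v0) = c • A v0 - v0 + β • e := by rw [← hβ]; abel
    refine ⟨v0 - (β / (2 - c)) • e, c, k + 1, hc, ?_, Or.inr ?_, ?_⟩
    · simp only [map_sub, map_smul, hA, hAA]
      have : β = (β / (2 - c)) * (2 - c) := by field_simp
      nth_rewrite 1 [this]
      module
    · intro a b h
      apply hind
      have := congrArg p h
      simpa [he, hAB] using this
    · intro x
      obtain ⟨a, b, h⟩ := hx (p x)
      refine ⟨a, b, hkill _ ?_⟩
      rw [hpow]
      simpa [he, hAB] using h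

/-- The nilpotent rank one operators with image spanned by `e`. -/
def Ke {F V : Type*} [Field F] [AddCommGroup V] [Module F V] (e : V) : Submodule F (Module.End F V) :=
  Submodule.map (LinearMap.smulRightₗ.flip e) (LinearMap.ker (Module.Dual.eval F V e))

theorem mem_Ke {F V : Type*} [Field F] [AddCommGroup V] [Module F V] {e : V} {X : Module.End F V} :
    X ∈ Ke (F := F) e ↔ ∃ w : Module.Dual F V, w e = 0 ∧ X = w.smulRight e := by
  simp only [Ke, Submodule.mem_map, LinearMap.mem_ker, Module.Dual.eval_apply]
  constructor
  · rintro ⟨w, h, rfl⟩; exact ⟨w, h, rfl⟩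
  · rintro ⟨w, h, rfl⟩; exact ⟨w, h, rfl⟩

theorem finrank_Ke_le {F V : Type*} [Field F] [AddCommGroup V] [Module F V] [FiniteDimensional F V]
    {e : V} (he : e ≠ 0) : Module.finrank F (Ke (F := F) e) + 1 ≤ Module.finrank F V := by
  have h1 : Module.finrank F (Ke (F := F) e) ≤ Module.finrank F (LinearMap.ker (Module.Dual.eval F V e)) :=
    Submodule.finrank_map_le _ _
  have h2 := LinearMap.finrank_range_add_finrank_ker (Module.Dual.eval F V e)
  have h3 : Module.finrank F (LinearMap.range (Module.Dual.eval F V e)) ≠ 0 := by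
    intro h
    rw [Submodule.finrank_eq_zero, LinearMap.range_eq_bot] at h
    apply he
    rw [← Module.forall_dual_apply_eq_zero_iff F]
    intro φ
    exact DFunLike.congr_fun h φ
  rw [Subspace.dual_finrank_eq] at h2
  omega

theorem finrank_map_add_inf {F V W : Type*} [Field F] [AddCommGroup V] [Module F V] [FiniteDimensional F V]
    [AddCommGroup W] [Module F W] (κ : V →ₗ[F] W) (U : Submodule F V) :
    Module.finrank F (U.map κ) + Module.finrank F (U ⊓ LinearMap.ker κ : Submodule F V)
      = Module.finrank F U := by
  have h := LinearMap.finrank_range_add_finrank_ker (κ.domRestrict U)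
  rw [LinearMap.range_domRestrict] at h
  rw [← h]
  congr 1
  rw [LinearMap.ker_domRestrict]
  have : (U ⊓ LinearMap.ker κ) = ((LinearMap.ker κ).comap U.subtype).map U.subtype := by
    rw [Submodule.map_comap_subtype]
  rw [this]
  exact Submodule.finrank_map_subtype_eq _ _

universe u v

def PropA (F : Type v) [Field F] (m : ℕ) : Prop :=
  ∀ (V : Type u) [AddCommGroup V] [Module F V] [FiniteDimensional F V], Module.finrank F V = m →
    ∀ W : Submodule F (Module.End F V), m * m + 1 ≤ Module.finrank F W + m →
      ∀ A0 : Module.End F V, ∃ A, A - A0 ∈ W ∧ Nice A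

theorem slice (F : Type v) [Field F] (m : ℕ) (IH : PropA.{u} F m) (V : Type u) [AddCommGroup V]
    [Module F V] [FiniteDimensional F V] (hV : Module.finrank F V = m + 1) (e : V) (he : e ≠ 0)
    (W1 : Submodule F (Module.End F V)) (hW : ∀ X ∈ W1, X e = 0) (A1 : Module.End F V)
    (hA1 : A1 e = e)
    (hdim : Module.finrank F (W1 ⊓ Ke e : Submodule F (Module.End F V)) + (m * m + 1)
      ≤ Module.finrank F W1 + m) : ∃ A, A - A1 ∈ W1 ∧ Nice A := by
  obtain ⟨f, hf⟩ : ∃ f : Module.Dual F V, f e = 1 := by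
    have : ¬ ∀ φ : Module.Dual F V, φ e = 0 := by
      rw [Module.forall_dual_apply_eq_zero_iff F]; exact he
    push Not at this
    obtain ⟨φ, hφ⟩ := this
    exact ⟨(φ e)⁻¹ • φ, by simp [hφ]⟩
  let V' := LinearMap.ker f
  let p : V →ₗ[F] V' := LinearMap.codRestrict V' (LinearMap.id - f.smulRight e) (by
    intro x; simp [V', hf])
  have hp : ∀ x, (p x : V) = x - f x • e := fun x => rfl
  have hpι : ∀ x : V', p x = x := by
    intro x; apply Subtype.ext; rw [hp]
    have : f x = 0 := x.2
    simp [this]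
  have hker : ∀ x, p x = 0 → ∃ s : F, x = s • e := by
    intro x hx
    have : (p x : V) = 0 := by rw [hx]; rfl
    rw [hp] at this
    exact ⟨f x, sub_eq_zero.1 this⟩
  have hpe : p e = 0 := by apply Subtype.ext; rw [hp]; simp [hf]
  let κ : Module.End F V →ₗ[F] Module.End F V' :=
    { toFun := fun X => p ∘ₗ X ∘ₗ V'.subtype
      map_add' := by intros; ext; simp
      map_smul' := by intros; ext; simp }
  have hκ : ∀ X x, κ X x = p (X x) := fun X x => rfl
  have hV' : Module.finrank F V' = m := by
    have h := LinearMap.finrank_range_add_finrank_ker f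
    have hs : LinearMap.range f = ⊤ := by
      rw [LinearMap.range_eq_top]
      intro y; exact ⟨y • e, by simp [hf]⟩
    rw [hs, finrank_top, Module.finrank_self, hV] at h
    change 1 + Module.finrank F V' = m + 1 at h
    omega
  have hle : W1 ⊓ LinearMap.ker κ ≤ W1 ⊓ Ke e := by
    intro X hX
    refine ⟨hX.1, ?_⟩
    have hXe := hW X hX.1
    have hX2 : κ X = 0 := hX.2
    rw [SetLike.mem_coe, mem_Ke]
    refine ⟨f ∘ₗ X, by simp [hXe], ?_⟩
    ext x
    have h1 : κ X (p x) = 0 := by rw [hX2]; rfl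
    rw [hκ, hp, map_sub, map_smul, hXe, smul_zero, sub_zero] at h1
    have h2 : (p (X x) : V) = 0 := by rw [h1]; rfl
    rw [hp] at h2
    simpa using sub_eq_zero.1 h2
  have hd1 := finrank_map_add_inf κ W1
  have hd2 := Submodule.finrank_mono hle
  obtain ⟨A', hA', hN⟩ := IH V' hV' (W1.map κ) (by omega) (κ A1)
  obtain ⟨X, hX, hXA⟩ := hA'
  have hAe : (A1 + X) e = e := by simp [hA1, hW X hX]
  refine ⟨A1 + X, by simpa using hX, ?_⟩
  apply Nice.lift (A1 + X) A' p e (fun y => ⟨y, hpι y⟩) hker hpe hAe ?_ hN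
  intro x
  have : A' = κ (A1 + X) := by rw [map_add, hXA]; abel
  rw [this, hκ, hp, map_sub, map_smul, hAe, map_sub, map_smul, hpe, smul_zero, sub_zero]

theorem exists_dual_one {F V : Type*} [Field F] [AddCommGroup V] [Module F V] {e : V} (he : e ≠ 0) :
    ∃ f : Module.Dual F V, f e = 1 := by
  have : ¬ ∀ φ : Module.Dual F V, φ e = 0 := by
    rw [Module.forall_dual_apply_eq_zero_iff F]; exact he
  push Not at this
  obtain ⟨φ, hφ⟩ := this
  exact ⟨(φ e)⁻¹ • φ, by simp [hφ]⟩

/-- the bad vectors of a space of small codimension lie in a hyperplane -/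
theorem bad_hyperplane {F V : Type*} [Field F] [AddCommGroup V] [Module F V] [FiniteDimensional F V]
    (W : Submodule F (Module.End F V))
    (hW : Module.finrank F V * Module.finrank F V + 1 ≤ Module.finrank F W + Module.finrank F V) :
    ∃ h : Module.Dual F V, h ≠ 0 ∧ ∀ e, h e ≠ 0 → W.map (LinearMap.applyₗ e) = ⊤ := by
  classical
  let s : Set V := {e | ∃ f : Module.Dual F V, f ≠ 0 ∧ ∀ X ∈ W, f (X e) = 0}
  have hgood : ∀ e, e ∉ s → W.map (LinearMap.applyₗ e) = ⊤ := by
    intro e he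
    by_contra hne
    obtain ⟨f, hf, hle⟩ := Submodule.exists_le_ker_of_lt_top _ (lt_top_iff_ne_top.2 hne)
    exact he ⟨f, hf, fun X hX => hle ⟨X, hX, rfl⟩⟩
  have hspan : Submodule.span F s ≠ ⊤ := by
    intro htop
    obtain ⟨b, hbs, hspan, hli⟩ := exists_linearIndependent F s
    have hb : Submodule.span F (Set.range ((↑) : b → V)) = ⊤ := by
      rw [Subtype.range_coe, hspan, htop]
    let B : Module.Basis b F V := Module.Basis.mk hli hb.ge
    have : Fintype b := FiniteDimensional.fintypeBasisIndex B
    choose f hf0 hf using fun i : b => hbs i.2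
    let Θ : Module.End F V →ₗ[F] (b → F) := LinearMap.pi fun i => f i ∘ₗ LinearMap.applyₗ (i : V)
    have hsurj : LinearMap.range Θ = ⊤ := by
      rw [LinearMap.range_eq_top]
      intro y
      have : ∀ i, ∃ x, f i x = y i := by
        intro i
        obtain ⟨x, hx⟩ : ∃ x, f i x ≠ 0 := by
          by_contra hcon
          push Not at hcon
          exact hf0 i (LinearMap.ext hcon)
        exact ⟨(y i / f i x) • x, by simp [hx]⟩
      choose x hx using this
      refine ⟨B.constr F x, ?_⟩
      ext i
      change f i (B.constr F x (i : V)) = y i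
      have : (i : V) = B i := by simp [B]
      rw [this, Module.Basis.constr_basis, hx]
    have hle : W ≤ LinearMap.ker Θ := by
      intro X hX
      rw [LinearMap.mem_ker]
      ext i
      exact hf i X hX
    have h1 := LinearMap.finrank_range_add_finrank_ker Θ
    rw [hsurj, finrank_top, Module.finrank_fintype_fun_eq_card, ← Module.finrank_eq_card_basis B,
      Module.finrank_linearMap] at h1
    have h2 := Submodule.finrank_mono hle
    omega
  obtain ⟨h, hh, hle⟩ := Submodule.exists_le_ker_of_lt_top _ (lt_top_iff_ne_top.2 hspan)
  refine ⟨h, hh, fun e he => hgood e fun hes => he ?_⟩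
  exact hle (Submodule.subset_span hes)

theorem end_functional_zero {F V : Type*} [Field F] [AddCommGroup V] [Module F V] [FiniteDimensional F V]
    (l : Module.End F V →ₗ[F] F) (h : ∀ (x : V) (f : Module.Dual F V), l (f.smulRight x) = 0) :
    l = 0 := by
  ext X
  let b := Module.finBasis F V
  have : X = ∑ i, (b.coord i).smulRight (X (b i)) := by
    apply b.ext
    intro j
    simp [Finsupp.single_apply, LinearMap.sum_apply]
  rw [this, map_sum]
  simp [h]

/-- A space containing all the nilpotent rank ones has codimension at most one. -/
theorem nilp_codim {F V : Type*} [Field F] [AddCommGroup V] [Module F V] [FiniteDimensional F V]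
    (W : Submodule F (Module.End F V)) (e : V) (he : e ≠ 0)
    (h : ∀ (x : V) (f : Module.Dual F V), f x = 0 → f.smulRight x ∈ W) :
    Module.finrank F V * Module.finrank F V ≤ Module.finrank F W + 1 := by
  obtain ⟨f0, hf0⟩ := exists_dual_one (F := F) he
  have htop : W ⊔ (F ∙ (f0.smulRight e : Module.End F V)) = ⊤ := by
    by_contra hne
    obtain ⟨l, hl0, hl⟩ := Submodule.exists_le_ker_of_lt_top _ (lt_top_iff_ne_top.2 hne)
    apply hl0
    have hW : ∀ (x : V) (f : Module.Dual F V), f x = 0 → l (f.smulRight x) = 0 := fun x f hfx =>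
      hl (Submodule.mem_sup_left (h x f hfx))
    have h0 : l (f0.smulRight e) = 0 := hl (Submodule.mem_sup_right (Submodule.mem_span_singleton_self _))
    have h1 : ∀ f : Module.Dual F V, l (f.smulRight e) = 0 := by
      intro f
      have e1 : f.smulRight e = (f - f e • f0).smulRight e + f e • f0.smulRight e := by
        ext x; simp [sub_smul, mul_smul]
      rw [e1, map_add, map_smul, h0, hW _ _ (by simp [hf0])]; simp
    have h2 : ∀ (x : V) (f : Module.Dual F V), f e ≠ 0 → l (f.smulRight x) = 0 := by
      intro x f hfe
      have e1 : f.smulRight x = f.smulRight (x - (f x / f e) • e) + (f x / f e) • f.smulRight e := by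
        ext y; simp [smul_sub, smul_smul, mul_comm]
      rw [e1, map_add, map_smul, h1, hW _ _ (by simp [hfe])]; simp
    apply end_functional_zero
    intro x f
    by_cases hfe : f e = 0
    · have e1 : f.smulRight x = (f + f0).smulRight x - f0.smulRight x := by
        ext y; simp [add_smul]
      rw [e1, map_sub, h2 _ _ (by simp [hf0, hfe]), h2 _ _ (by simp [hf0])]; simp
    · exact h2 x f hfe
  have h3 := Submodule.finrank_add_le_finrank_add_finrank W (F ∙ (f0.smulRight e : Module.End F V))
  rw [htop, finrank_top, Module.finrank_linearMap] at h3
  have h4 : Module.finrank F (F ∙ (f0.smulRight e : Module.End F V)) ≤ 1 := by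
    have h4 := finrank_span_le_card (R := F) {(f0.smulRight e : Module.End F V)}
    simpa using h4
  have h3' : Module.finrank F V * Module.finrank F V ≤ Module.finrank F W +
    Module.finrank F (F ∙ (f0.smulRight e : Module.End F V)) := h3
  omega

theorem nilp_extend {F V : Type*} [Field F] [AddCommGroup V] [Module F V] [FiniteDimensional F V]
    (hV : 3 ≤ Module.finrank F V)
    (W : Submodule F (Module.End F V)) (h : Module.Dual F V) (hh : h ≠ 0)
    (hW : ∀ (x : V) (f : Module.Dual F V), h x ≠ 0 → f x = 0 → f.smulRight x ∈ W) :
    ∀ (x : V) (f : Module.Dual F V), f x = 0 → f.smulRight x ∈ W := by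
  have step1 : ∀ (x : V) (f : Module.Dual F V), f x = 0 → (∃ a, f a = 0 ∧ h a ≠ 0) →
      f.smulRight x ∈ W := by
    rintro x f hfx ⟨a, ha, hha⟩
    by_cases hx : h x = 0
    · have e1 : f.smulRight x = f.smulRight (x + a) - f.smulRight a := by ext y; simp
      rw [e1]
      exact W.sub_mem (hW _ _ (by simp [hx, hha]) (by simp [hfx, ha])) (hW _ _ hha ha)
    · exact hW _ _ hx hfx
  intro x f hfx
  by_cases hex : ∃ a, f a = 0 ∧ h a ≠ 0
  · exact step1 x f hfx hex
  · push Not at hex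
    obtain ⟨f1, hf1x, hf1⟩ : ∃ f1 : Module.Dual F V, f1 x = 0 ∧ f1 ∉ (F ∙ h) := by
      by_contra hcon
      push Not at hcon
      have hle : LinearMap.ker (Module.Dual.eval F V x) ≤ (F ∙ h) := fun g hg => hcon g hg
      have h1 := Submodule.finrank_mono hle
      have h2 := LinearMap.finrank_range_add_finrank_ker (Module.Dual.eval F V x)
      have h3 : Module.finrank F (LinearMap.range (Module.Dual.eval F V x)) ≤ 1 := by
        simpa using Submodule.finrank_le (LinearMap.range (Module.Dual.eval F V x))
      have h4 := finrank_span_le_card (R := F) {h}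
      simp at h4
      rw [Subspace.dual_finrank_eq] at h2
      omega
    have key : ∀ g : Module.Dual F V, g ∉ (F ∙ h) → ∃ a, g a = 0 ∧ h a ≠ 0 := by
      intro g hg
      by_contra hcon
      push Not at hcon
      have : LinearMap.ker g ≤ LinearMap.ker h := fun a ha => hcon a ha
      by_cases hg0 : g = 0
      · subst hg0; exact hg (Submodule.zero_mem _)
      obtain ⟨c, hc⟩ : ∃ c, g c ≠ 0 := by
        by_contra hcon
        push Not at hcon
        exact hg0 (LinearMap.ext hcon)
      have hhc : h = (h c / g c) • g := by
        ext y
        have : h (y - (g y / g c) • c) = 0 := hcon _ (by simp [hc])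
        have h5 : h y = g y / g c * h c := by simpa [sub_eq_zero] using this
        rw [h5]; simp; ring
      have hne : h c / g c ≠ 0 := by
        intro h0; rw [h0, zero_smul] at hhc; exact hh hhc
      apply hg
      rw [Submodule.mem_span_singleton]
      refine ⟨(h c / g c)⁻¹, ?_⟩
      nth_rewrite 2 [hhc]
      rw [smul_smul, inv_mul_cancel₀ hne, one_smul]
    have hfh : f ∈ (F ∙ h) := by
      by_contra hcon
      obtain ⟨a, ha, hha⟩ := key f hcon
      exact hha (hex a ha)
    have e1 : f.smulRight x = (f + f1).smulRight x - f1.smulRight x := by ext y; simp [add_smul]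
    rw [e1]
    refine W.sub_mem (step1 _ _ (by simp [hfx, hf1x]) (key _ ?_)) (step1 _ _ hf1x (key _ hf1))
    intro hcon
    exact hf1 (by simpa using Submodule.sub_mem _ hcon hfh)

theorem propA_two (F : Type v) [Field F] : PropA.{u} F 2 := by
  intro V _ _ _ hV W hW A0
  classical
  by_cases htop : W = ⊤
  · exact ⟨1, by simp [htop], nice_unip 1 1 (by simp)⟩
  obtain ⟨l, hl0, hl⟩ := Submodule.exists_le_ker_of_lt_top _ (lt_top_iff_ne_top.2 htop)
  have hWl : W = LinearMap.ker l := by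
    apply Submodule.eq_of_le_of_finrank_le hl
    have h1 := LinearMap.finrank_range_add_finrank_ker l
    have h2 : Module.finrank F (LinearMap.range l) ≠ 0 := by
      intro h
      rw [Submodule.finrank_eq_zero, LinearMap.range_eq_bot] at h
      exact hl0 h
    rw [Module.finrank_linearMap, hV] at h1
    omega
  have hmem : ∀ A, l A = l A0 → A - A0 ∈ W := by
    intro A h
    rw [hWl, LinearMap.mem_ker, map_sub, h, sub_self]
  by_cases hN : ∃ N : Module.End F V, N * N = 0 ∧ l N ≠ 0
  · obtain ⟨N, hNN, hlN⟩ := hN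
    refine ⟨1 + ((l A0 - l 1) / l N) • N, hmem _ ?_, nice_unip _ 2 ?_⟩
    · simp [hlN]
    · rw [add_sub_cancel_left, pow_two, smul_mul_smul_comm, hNN, smul_zero]
  · push Not at hN
    let b := Module.finBasisOfFinrankEq F V hV
    let M := Matrix.toLin b b
    have hMM : ∀ X Y, M (X * Y) = M X * M Y := fun X Y => Matrix.toLin_mul b b b X Y
    have hz : ∀ X : Matrix (Fin 2) (Fin 2) F, X * X = 0 → l (M X) = 0 := by
      intro X hX
      apply hN
      rw [← hMM, hX, map_zero]
    have h1 := hz !![0, 1; 0, 0] (by ext i j; fin_cases i <;> fin_cases j <;> simp)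
    have h2 := hz !![0, 0; 1, 0] (by ext i j; fin_cases i <;> fin_cases j <;> simp)
    have h3 := hz !![1, -1; 1, -1] (by ext i j; fin_cases i <;> fin_cases j <;> simp)
    let d := l (M !![1, 0; 0, 0])
    have hgen : ∀ x y z w, l (M !![x, y; z, w]) = (x + w) * d := by
      intro x y z w
      have e1 : !![x, y; z, w] = (x + w) • !![1, 0; 0, 0] + (y - w) • !![0, 1; 0, 0]
        + (z + w) • !![0, 0; 1, 0] - w • !![1, -1; 1, -1] := by
        ext i j; fin_cases i <;> fin_cases j <;> simp
      rw [e1]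
      simp only [map_add, map_sub, map_smul, h1, h2, h3, smul_eq_mul]
      ring
    have hd : d ≠ 0 := by
      intro hd
      apply hl0
      ext X
      obtain ⟨Y, rfl⟩ := M.surjective X
      rw [Matrix.eta_fin_two Y, hgen, hd]; simp
    let c := l A0 / d
    refine ⟨M !![0, -1; 1, c], hmem _ ?_, ?_⟩
    · rw [hgen]; simp [c, hd]
    · have hb0 : M !![0, -1; 1, c] (b 0) = b 1 := by
        simp [M, Matrix.toLin_self, Fin.sum_univ_two]
      have hb1 : M !![0, -1; 1, c] (b 1) = - b 0 + c • b 1 := by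
        simp [M, Matrix.toLin_self, Fin.sum_univ_two]
      by_cases hc : c = 2
      · apply nice_unip _ 2
        have : M !![0, -1; 1, c] - 1 = M !![-1, -1; 1, 1] := by
          have : (1 : Module.End F V) = M 1 := (Matrix.toLin_one b).symm
          rw [this, ← map_sub]
          congr 1
          ext i j; fin_cases i <;> fin_cases j <;> simp [hc]
          norm_num
        rw [this, pow_two, ← hMM]
        have : !![-1, -1; 1, 1] * !![-1, -1; 1, 1] = (0 : Matrix (Fin 2) (Fin 2) F) := by
          ext i j; fin_cases i <;> fin_cases j <;> simp
        rw [this, map_zero]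
      · refine ⟨b 0, c, 0, hc, ?_, Or.inr ?_, ?_⟩
        · rw [hb0, hb1]; abel
        · intro x y h
          rw [hb0] at h
          have := Fintype.linearIndependent_iff.1 b.linearIndependent ![x, y] (by
            simpa [Fin.sum_univ_two] using h)
          exact ⟨this 0, this 1⟩
        · intro x
          refine ⟨b.repr x 0, b.repr x 1, ?_⟩
          rw [hb0]
          have := b.sum_repr x
          rw [Fin.sum_univ_two] at this
          nth_rewrite 1 [← this]
          simp

theorem propA (F : Type v) [Field F] (m : ℕ) : PropA.{u} F m := by
  induction m with
  | zero =>
    intro V _ _ _ hV W hW A0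
    have := Submodule.finrank_le W
    rw [Module.finrank_linearMap, hV] at this
    omega
  | succ k ih =>
    rcases k with _ | _ | k
    · intro V _ _ _ hV W hW A0
      have : W = ⊤ := by
        apply Submodule.eq_top_of_finrank_eq
        have := Submodule.finrank_le W
        rw [Module.finrank_linearMap, hV] at this ⊢
        omega
      exact ⟨1, by simp [this], nice_unip 1 1 (by simp)⟩
    · exact propA_two F
    · intro V _ _ _ hV W hW A0
      set m := k + 1 + 1 with hm
      obtain ⟨h, hh, hgood⟩ := bad_hyperplane W (by rw [hV]; exact hW)
      -- choose `e`
      have hE : ∃ e, h e ≠ 0 ∧ Module.finrank F (W ⊓ Ke e : Submodule F (Module.End F V)) + (m * m + 2)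
          ≤ Module.finrank F W := by
        by_cases hbig : m * m + m + 2 ≤ Module.finrank F W
        · obtain ⟨e, he⟩ : ∃ e, h e ≠ 0 := by
            by_contra hcon
            push Not at hcon
            exact hh (LinearMap.ext hcon)
          refine ⟨e, he, ?_⟩
          have h1 := finrank_Ke_le (F := F) (e := e) (by rintro rfl; simp at he)
          have h2 := Submodule.finrank_mono (inf_le_right : W ⊓ Ke e ≤ Ke e)
          omega
        · obtain ⟨e, he, hKe⟩ : ∃ e, h e ≠ 0 ∧ ¬ Ke e ≤ W := by
            by_contra hcon
            push Not at hcon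
            obtain ⟨e, he⟩ : ∃ e, h e ≠ 0 := by
              by_contra hcon
              push Not at hcon
              exact hh (LinearMap.ext hcon)
            have h1 := nilp_codim W e (by rintro rfl; simp at he)
              (nilp_extend (by omega) W h hh (fun x f hx hf => hcon x hx (mem_Ke.2 ⟨f, hf, rfl⟩)))
            rw [hV] at h1
            have : (m + 1) * (m + 1) = m * m + 2 * m + 1 := by ring
            omega
          refine ⟨e, he, ?_⟩
          have h1 := finrank_Ke_le (F := F) (e := e) (by rintro rfl; simp at he)
          have hlt : W ⊓ Ke e < Ke e := by
            refine lt_of_le_of_ne inf_le_right fun heq => hKe ?_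
            rw [← heq]; exact inf_le_left
          have h2 := Submodule.finrank_lt_finrank_of_lt hlt
          have : (m + 1) * (m + 1) = m * m + 2 * m + 1 := by ring
          omega
      obtain ⟨e, he, hdim⟩ := hE
      have htop := hgood e he
      have hmem : e - A0 e ∈ W.map (LinearMap.applyₗ e) := by rw [htop]; trivial
      obtain ⟨X, hX, hXe⟩ := hmem
      change X e = e - A0 e at hXe
      let W1 := W ⊓ LinearMap.ker (LinearMap.applyₗ e : Module.End F V →ₗ[F] V)
      have hd := finrank_map_add_inf (LinearMap.applyₗ e : Module.End F V →ₗ[F] V) W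
      rw [htop, finrank_top, hV] at hd
      have hle : W1 ⊓ Ke e ≤ W ⊓ Ke e := inf_le_inf_right _ inf_le_left
      have hd2 := Submodule.finrank_mono hle
      have hd' : m + 1 + Module.finrank F W1 = Module.finrank F W := hd
      clear hd
      obtain ⟨A, hA, hN⟩ := slice F m ih V hV e (by rintro rfl; simp at he) W1
        (fun X hX => hX.2) (A0 + X) (by simp [hXe]) (by omega)
      refine ⟨A, ?_, hN⟩
      have := W.add_mem hA.1 hX
      convert this using 1
      abel

theorem Rev.mem {F : Type*} [Field F] {n : ℕ} (A : Module.End F (Fin n → F)) (h : Rev A) :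
    LinearMap.toMatrix' A ∈ ProdInv2 F n := by
  obtain ⟨J, h1, h2⟩ := h
  have hJ : J * J = 1 := LinearMap.ext h1
  have hA : A * (J * A) = J := LinearMap.ext h2
  refine ⟨LinearMap.toMatrix' J, LinearMap.toMatrix' (J * A), ?_, ?_, ?_⟩
  · rw [← LinearMap.toMatrix'_mul, hJ, LinearMap.toMatrix'_one]
  · rw [← LinearMap.toMatrix'_mul, mul_assoc, hA, hJ, LinearMap.toMatrix'_one]
  · rw [← LinearMap.toMatrix'_mul, ← mul_assoc, hJ, one_mul]

theorem smulRight_toMatrix {F : Type*} [Field F] {n : ℕ} (e w : Fin n → F) :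
    LinearMap.toMatrix' ((dotProductBilin F F w).smulRight e) = vecMulVec e w := by
  ext i j
  simp [LinearMap.toMatrix'_apply, vecMulVec_apply, dotProductBilin, mul_comm]

theorem R1 {F : Type*} [Field F] {n : ℕ} (hn : 1 ≤ n)
    (φ : Matrix (Fin n) (Fin n) F →ₗ[F] (Fin n → F)) (hφ : ∀ A ∈ ProdInv2 F n, φ A ≠ 0)
    (e : Fin n → F) (he : e ≠ 0) (X0 : Matrix (Fin n) (Fin n) F) (hX0 : X0 *ᵥ e = 0)
    (hX1 : φ X0 = φ 1) (w1 w2 : Fin n → F) (hw1 : w1 ⬝ᵥ e = 0) (hw2 : w2 ⬝ᵥ e = 0) :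
    ¬ LinearIndependent F ![φ (vecMulVec e w1), φ (vecMulVec e w2)] := by
  intro hli
  obtain ⟨m, rfl⟩ : ∃ m, n = m + 1 := ⟨n - 1, by omega⟩
  let ψ : Module.End F (Fin (m+1) → F) →ₗ[F] (Fin (m+1) → F) := φ ∘ₗ (LinearMap.toMatrix' (R := F) (m := Fin (m+1)) (n := Fin (m+1))).toLinearMap
  have hψ : ∀ X, ψ X = φ (LinearMap.toMatrix' X) := fun X => rfl
  let ev : Module.End F (Fin (m+1) → F) →ₗ[F] (Fin (m+1) → F) := LinearMap.applyₗ e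
  let W1 := LinearMap.ker ev ⊓ LinearMap.ker ψ
  have d1 := finrank_map_add_inf ev ⊤
  have d2 := finrank_map_add_inf ψ (LinearMap.ker ev)
  have d3 := finrank_map_add_inf ψ (Ke (F := F) e)
  have b1 : ∀ U : Submodule F (Fin (m+1) → F), Module.finrank F U ≤ m + 1 := fun U => by
    simpa using Submodule.finrank_le U
  rw [top_inf_eq, finrank_top] at d1
  have d0 : Module.finrank F (Module.End F (Fin (m+1) → F)) = (m+1)*(m+1) := by
    have := Module.finrank_linearMap F F (Fin (m+1) → F) (Fin (m+1) → F)
    simpa using this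
  have d4 := finrank_Ke_le (F := F) (e := e) he
  have d5 : 2 ≤ Module.finrank F ((Ke (F := F) e).map ψ) := by
    have := finrank_span_eq_card hli
    rw [Fintype.card_fin] at this
    refine le_of_eq_of_le this.symm ?_
    apply Submodule.finrank_mono
    rw [Submodule.span_le]
    rintro _ ⟨i, rfl⟩
    fin_cases i
    · refine ⟨(dotProductBilin F F w1).smulRight e, mem_Ke.2 ⟨_, by simpa [dotProductBilin] using hw1, rfl⟩, ?_⟩
      rw [hψ, smulRight_toMatrix]; rfl
    · refine ⟨(dotProductBilin F F w2).smulRight e, mem_Ke.2 ⟨_, by simpa [dotProductBilin] using hw2, rfl⟩, ?_⟩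
      rw [hψ, smulRight_toMatrix]; rfl
  have d6 : Module.finrank F (W1 ⊓ Ke e : Submodule F (Module.End F (Fin (m+1) → F))) ≤
      Module.finrank F (Ke e ⊓ LinearMap.ker ψ : Submodule F (Module.End F (Fin (m+1) → F))) := 
    Submodule.finrank_mono (le_inf inf_le_right (inf_le_left.trans inf_le_right))
  have d7 := b1 ((⊤ : Submodule F (Module.End F (Fin (m+1) → F))).map ev)
  have d8 := b1 ((LinearMap.ker ev).map ψ)
  have d9 : Module.finrank F (Fin (m+1) → F) = m + 1 := by simp
  have hsq : (m + 1) * (m + 1) = m * m + 2 * m + 1 := by ring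
  have d10 : Module.finrank F W1 = Module.finrank F (LinearMap.ker ev ⊓ LinearMap.ker ψ : Submodule F (Module.End F (Fin (m+1) → F))) := rfl
  obtain ⟨A, hA, hN⟩ := slice F m (propA F m) (Fin (m+1) → F) (by simp) e he W1
    (fun X hX => hX.1) (1 - Matrix.toLin' X0) (by simp [hX0]) (by omega)
  have := hφ _ (Rev.mem A hN.rev)
  apply this
  have h1 : ψ (A - (1 - Matrix.toLin' X0)) = 0 := hA.2
  rw [map_sub, map_sub, hψ, hψ, hψ, LinearMap.toMatrix'_toLin', LinearMap.toMatrix'_one, hX1] at h1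
  simpa using h1

def Rk1 {F W V : Type*} [Field F] [AddCommGroup V] [Module F V] [AddCommGroup W] [Module F W]
    (a : W →ₗ[F] V) : Prop := ∀ w1 w2, ¬ LinearIndependent F ![a w1, a w2]

theorem Rk1.decomp {F W V : Type*} [Field F] [AddCommGroup V] [Module F V] [AddCommGroup W] [Module F W]
    {a : W →ₗ[F] V} (h : Rk1 a) : ∃ (l : Module.Dual F W) (z : V), a = l.smulRight z := by
  by_cases h0 : a = 0
  · exact ⟨0, 0, by rw [h0]; ext; simp⟩
  obtain ⟨w0, hw0⟩ : ∃ w, a w ≠ 0 := by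
    by_contra hcon; push Not at hcon
    exact h0 (LinearMap.ext hcon)
  obtain ⟨f, hf⟩ := exists_dual_one (F := F) hw0
  refine ⟨f ∘ₗ a, a w0, LinearMap.ext fun w => ?_⟩
  have := h w0 w
  rw [LinearIndependent.pair_iff' hw0] at this
  push Not at this
  obtain ⟨c, hc⟩ := this
  simp [← hc, hf]

theorem rk1_zero {F W V : Type*} [Field F] [AddCommGroup V] [Module F V] [AddCommGroup W] [Module F W] :
    Rk1 (0 : W →ₗ[F] V) := by
  intro w1 w2 h
  exact h.ne_zero 0 (by simp)

/-- two functionals, not both multiples: dual vectors -/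
theorem sep_functional {F W : Type*} [Field F] [AddCommGroup W] [Module F W]
    (l l' : Module.Dual F W) (h : ∀ c : F, l' ≠ c • l) : ∃ w, l w = 0 ∧ l' w ≠ 0 := by
  by_contra hcon
  push Not at hcon
  by_cases h0 : l = 0
  · subst h0
    exact h 0 (by ext w; simpa using hcon w (by simp))
  obtain ⟨w0, hw0⟩ : ∃ w, l w ≠ 0 := by
    by_contra hc; push Not at hc
    exact h0 (LinearMap.ext hc)
  apply h (l' w0 / l w0)
  ext w
  have := hcon (w - (l w / l w0) • w0) (by simp [hw0])
  simp at this
  rw [sub_eq_zero] at this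
  rw [this]; simp; ring

theorem rk1_adj {F W V : Type*} [Field F] [AddCommGroup V] [Module F V] [AddCommGroup W] [Module F W]
    {l l' : Module.Dual F W} {z z' : V} {c : F} (hc : c ≠ 0)
    (h : Rk1 (l.smulRight z + c • l'.smulRight z')) (hl : ∀ d : F, l' ≠ d • l) (hl0 : l ≠ 0)
    (hz0 : z ≠ 0) : ∃ d : F, z' = d • z := by
  by_contra hcon
  push Not at hcon
  obtain ⟨w, h1, h2⟩ := sep_functional l l' hl
  obtain ⟨w', h3, h4⟩ := sep_functional l' l (by
    intro d hd
    have hd0 : d ≠ 0 := by rintro rfl; exact hl0 (by simpa using hd)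
    exact hl d⁻¹ (by rw [hd, smul_smul, inv_mul_cancel₀ hd0, one_smul]))
  apply h w' w
  simp [h1, h3]
  rw [LinearIndependent.pair_iff' (smul_ne_zero h4 hz0)]
  intro a ha
  apply hcon ((c * l' w)⁻¹ * (a * l w'))
  rw [mul_smul, mul_smul a, ha, smul_smul c, smul_smul, inv_mul_cancel₀ (mul_ne_zero hc h2), one_smul]

theorem rk1_family {F W V : Type*} [Field F] [AddCommGroup V] [Module F V] [AddCommGroup W] [Module F W]
    (S : Set (W →ₗ[F] V)) (h1 : ∀ a ∈ S, Rk1 a) (h2 : ∀ a ∈ S, ∀ b ∈ S, ∃ c : F, c ≠ 0 ∧ Rk1 (a + c • b)) :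
    (∃ z : V, ∀ a ∈ S, ∀ w, ∃ d : F, a w = d • z) ∨ (∃ l : Module.Dual F W, ∀ a ∈ S, ∀ w, l w = 0 → a w = 0) := by
  by_cases h0 : ∀ a ∈ S, a = 0
  · exact Or.inl ⟨0, fun a ha w => ⟨0, by rw [h0 a ha]; simp⟩⟩
  push Not at h0
  obtain ⟨a0, ha0, hne⟩ := h0
  obtain ⟨l0, z0, rfl⟩ := (h1 a0 ha0).decomp
  have hl0 : l0 ≠ 0 := by rintro rfl; exact hne (by ext; simp)
  have hz0 : z0 ≠ 0 := by rintro rfl; exact hne (by ext; simp)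
  by_contra hcon
  push Not at hcon
  obtain ⟨hA, hB⟩ := hcon
  obtain ⟨a1, ha1, w1, hw1⟩ := hA z0
  obtain ⟨a2, ha2, w2, hw2, hw2'⟩ := hB l0
  obtain ⟨l1, z1, rfl⟩ := (h1 a1 ha1).decomp
  obtain ⟨l2, z2, rfl⟩ := (h1 a2 ha2).decomp
  simp at hw1 hw2'
  have e1 : ∃ d : F, l1 = d • l0 := by
    by_contra hcon; push Not at hcon
    obtain ⟨c, hc, hr⟩ := h2 _ ha0 _ ha1
    obtain ⟨d, rfl⟩ := rk1_adj hc hr hcon hl0 hz0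
    exact hw1 (l1 w1 * d) (by rw [mul_smul])
  have e2 : ∀ d : F, l2 ≠ d • l0 := by
    rintro d rfl
    simp [hw2] at hw2'
  obtain ⟨c, hc, hr⟩ := h2 _ ha0 _ ha2
  obtain ⟨d2, rfl⟩ := rk1_adj hc hr e2 hl0 hz0
  obtain ⟨d1, rfl⟩ := e1
  obtain ⟨c, hc, hr⟩ := h2 _ ha1 _ ha2
  have hd1 : d1 ≠ 0 := by rintro rfl; exact hw1 0 (by simp)
  have hz1 : z1 ≠ 0 := by rintro rfl; exact hw1 0 (by simp)
  obtain ⟨d, hd⟩ := rk1_adj hc hr (by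
    intro d hd; exact e2 (d * d1) (by rw [hd, smul_smul])) (smul_ne_zero hd1 hl0) hz1
  have hd2 : d ≠ 0 := by
    rintro rfl; simp only [zero_smul] at hd; exact hw2'.2 hd
  apply hw1 ((d1 • l0) w1 * (d⁻¹ * d2))
  have hz : z1 = (d⁻¹ * d2) • z0 := by rw [mul_smul, hd, smul_smul, inv_mul_cancel₀ hd2, one_smul]
  rw [hz, smul_smul]

/-- Situation -/
structure Sit (F : Type*) [Field F] (n : ℕ) (W : Type*) [AddCommGroup W] [Module F W] where
  H : Submodule F (Matrix (Fin n) (Fin n) F)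
  N : W →ₗ[F] Matrix (Fin n) (Fin n) F
  A : Matrix (Fin n) (Fin n) F
  hN : Function.Injective N
  hNH : ∀ w, N w ∈ H
  dW : Module.finrank F W + 1 = n
  dH : Module.finrank F H + n = n * n
  h1 : ∀ v X, X ∈ H → X *ᵥ v = A *ᵥ v → ∀ w1 w2, ¬ LinearIndependent F ![N w1 *ᵥ v, N w2 *ᵥ v]
  h2 : ∀ v X, X ∈ H → v ᵥ* X = v ᵥ* A → ∀ w1 w2, ¬ LinearIndependent F ![v ᵥ* N w1, v ᵥ* N w2]

namespace Sit
variable {F : Type*} [Field F] {n : ℕ} {W : Type*} [AddCommGroup W] [Module F W]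

def tr (s : Sit F n W) : Sit F n W where
  H := s.H.map (transposeLinearEquiv (Fin n) (Fin n) F F).toLinearMap
  N := (transposeLinearEquiv (Fin n) (Fin n) F F).toLinearMap ∘ₗ s.N
  A := s.Aᵀ
  hN := (transposeLinearEquiv (Fin n) (Fin n) F F).injective.comp s.hN
  hNH := fun w => ⟨_, s.hNH w, rfl⟩
  dW := s.dW
  dH := by
    have := LinearEquiv.finrank_map_eq (transposeLinearEquiv (Fin n) (Fin n) F F) s.H
    have h := s.dH
    exact (congrArg (· + n) this).trans h
  h1 := by
    rintro v _ ⟨X, hX, rfl⟩ h w1 w2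
    have := s.h2 v X hX (by simpa [mulVec_transpose] using h) w1 w2
    simpa [mulVec_transpose] using this
  h2 := by
    rintro v _ ⟨X, hX, rfl⟩ h w1 w2
    have := s.h1 v X hX (by simpa [vecMul_transpose] using h) w1 w2
    simpa [vecMul_transpose] using this

/-- `w ↦ N w v`. -/
def a (s : Sit F n W) (v : Fin n → F) : W →ₗ[F] (Fin n → F) :=
  (Matrix.mulVecBilin F F).flip v ∘ₗ s.N

@[simp] theorem a_apply (s : Sit F n W) (v : Fin n → F) (w : W) : s.a v w = s.N w *ᵥ v := rfl

theorem a_add (s : Sit F n W) (v v' : Fin n → F) : s.a (v + v') = s.a v + s.a v' := by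
  ext1 w; simp [mulVec_add]
theorem a_smul (s : Sit F n W) (c : F) (v : Fin n → F) : s.a (c • v) = c • s.a v := by
  ext1 w; simp [mulVec_smul]

/-- active vectors -/
def Act (s : Sit F n W) (v : Fin n → F) : Prop :=
  ∃ f : Fin n → F, (∀ X ∈ s.H, f ⬝ᵥ X *ᵥ v = 0) ∧ f ⬝ᵥ s.A *ᵥ v ≠ 0

theorem rk1_of_not_act (s : Sit F n W) (v : Fin n → F) (h : ¬ s.Act v) : Rk1 (s.a v) := by
  by_cases hm : s.A *ᵥ v ∈ s.H.map ((Matrix.mulVecBilin F F).flip v)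
  · obtain ⟨X, hX, hX'⟩ := hm
    exact s.h1 v X hX hX'
  · exfalso
    obtain ⟨f, hf, hle⟩ := Submodule.exists_le_ker_of_notMem hm
    apply h
    refine ⟨fun i => f (Pi.single i 1), ?_⟩
    have key : ∀ x, (fun i => f (Pi.single i 1)) ⬝ᵥ x = f x := by
      intro x
      rw [LinearMap.pi_apply_eq_sum_univ f x, dotProduct]
      simp [mul_comm]
      refine Finset.sum_congr rfl fun i _ => ?_
      congr 2
      ext j; simp [Pi.single_apply, eq_comm]
    constructor
    · intro X hX
      rw [key]
      exact hle ⟨X, hX, rfl⟩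
    · rw [key]; exact hf

theorem act_tr (s : Sit F n W) (f v : Fin n → F) (h : ∀ X ∈ s.H, f ⬝ᵥ X *ᵥ v = 0)
    (h' : f ⬝ᵥ s.A *ᵥ v ≠ 0) : s.tr.Act f := by
  refine ⟨v, ?_, ?_⟩
  · rintro _ ⟨X, hX, rfl⟩
    have := h X hX
    simpa [mulVec_transpose, dotProduct_mulVec, dotProduct_comm] using this
  · simpa [tr, mulVec_transpose, dotProduct_mulVec, dotProduct_comm] using h'

theorem of_act_tr (s : Sit F n W) (f : Fin n → F) (h : s.tr.Act f) :
    ∃ v, (∀ X ∈ s.H, f ⬝ᵥ X *ᵥ v = 0) ∧ f ⬝ᵥ s.A *ᵥ v ≠ 0 := by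
  obtain ⟨v, h1, h2⟩ := h
  refine ⟨v, fun X hX => ?_, ?_⟩
  · have := h1 _ ⟨X, hX, rfl⟩
    simpa [mulVec_transpose, dotProduct_mulVec, dotProduct_comm] using this
  · simpa [tr, mulVec_transpose, dotProduct_mulVec, dotProduct_comm] using h2

end Sit

namespace Sit
variable {F : Type*} [Field F] {n : ℕ} {W : Type*} [AddCommGroup W] [Module F W]

theorem fd (s : Sit F n W) (hn : 3 ≤ n) : FiniteDimensional F W :=
  FiniteDimensional.of_finrank_pos (by have := s.dW; omega)

theorem zero_of_span {B : Set (Fin n → F)} (hB : Submodule.span F B = ⊤) (X : Matrix (Fin n) (Fin n) F)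
    (h : ∀ b ∈ B, X *ᵥ b = 0) : X = 0 := by
  have h1 : Matrix.toLin' X = 0 := by
    apply LinearMap.ext_on hB
    intro b hb; simpa using h b hb
  exact (LinearEquiv.map_eq_zero_iff _).1 h1

theorem exists_dot_one {z : Fin n → F} (hz : z ≠ 0) : ∃ f : Fin n → F, f ⬝ᵥ z = 1 := by
  obtain ⟨i, hi⟩ := Function.ne_iff.1 hz
  exact ⟨Pi.single i (z i)⁻¹, by simpa using inv_mul_cancel₀ hi⟩

theorem common_image (s : Sit F n W) (hn : 3 ≤ n) {B : Set (Fin n → F)} (hB : Submodule.span F B = ⊤)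
    (z : Fin n → F) (h : ∀ b ∈ B, ∀ w, ∃ d : F, s.N w *ᵥ b = d • z) :
    ∃ k : Fin n → F, k ≠ 0 ∧ ∀ X ∈ s.H, X *ᵥ k = 0 := by
  have := s.fd hn
  have hfW : 1 < Module.finrank F W := by have := s.dW; omega
  have : Nontrivial W := Module.nontrivial_of_finrank_pos (R := F) (by omega)
  obtain ⟨w0, hw0⟩ := exists_ne (0 : W)
  have hz : z ≠ 0 := by
    rintro rfl
    apply hw0
    apply s.hN
    rw [map_zero]
    apply zero_of_span hB
    intro b hb
    obtain ⟨d, hd⟩ := h b hb w0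
    simpa using hd
  obtain ⟨f0, hf0⟩ := exists_dot_one hz
  have hNg : ∀ w, s.N w = vecMulVec z (f0 ᵥ* s.N w) := by
    intro w
    rw [← sub_eq_zero]
    apply zero_of_span hB
    intro b hb
    obtain ⟨d, hd⟩ := h b hb w
    rw [sub_mulVec, hd, vecMulVec_mulVec, ← dotProduct_mulVec, hd]
    simp [hf0]
  let G : W →ₗ[F] Module.Dual F (Fin n → F) := dotProductBilin F F ∘ₗ Matrix.vecMulBilin F F f0 ∘ₗ s.N
  have hG : ∀ w v, G w v = (f0 ᵥ* s.N w) ⬝ᵥ v := fun w v => rfl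
  have hGi : Function.Injective G := by
    rw [injective_iff_map_eq_zero]
    intro w hw
    apply s.hN
    rw [map_zero, hNg]
    have : f0 ᵥ* s.N w = 0 := by
      ext i
      have := hG w (Pi.single i 1)
      rw [hw] at this
      simpa using this.symm
    rw [this]; simp
  let U := (LinearMap.range G).dualCoannihilator
  have hU : Module.finrank F U = 1 := by
    have h1 := Subspace.finrank_add_finrank_dualCoannihilator_eq (LinearMap.range G)
    rw [LinearMap.finrank_range_of_inj hGi] at h1
    have := s.dW
    have h2 : Module.finrank F (Fin n → F) = n := by simp
    change _ + Module.finrank F U = _ at h1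
    omega
  obtain ⟨⟨k, hkU⟩, hk0, hk⟩ := finrank_eq_one_iff'.1 hU
  have hk0' : k ≠ 0 := fun h => hk0 (Subtype.ext h)
  refine ⟨k, hk0', ?_⟩
  obtain ⟨w1, hw1⟩ := exists_linearIndependent_pair_of_one_lt_finrank hfW hw0
  have key : ∀ f : Fin n → F, f ⬝ᵥ z ≠ 0 → ∀ X ∈ s.H, f ⬝ᵥ X *ᵥ k = 0 := by
    intro f hf X hX
    have hact : s.tr.Act f := by
      by_contra hcon
      apply s.tr.rk1_of_not_act f hcon w0 w1
      have e1 : ∀ w, s.tr.a f w = (f ⬝ᵥ z) • (f0 ᵥ* s.N w) := by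
        intro w
        have : s.tr.a f w = f ᵥ* s.N w := by
          simp [tr, mulVec_transpose]
        rw [this, hNg, vecMul_vecMulVec, ← hNg]
      rw [e1, e1]
      let Q : W →ₗ[F] (Fin n → F) := (f ⬝ᵥ z) • (Matrix.vecMulBilin F F f0 ∘ₗ s.N)
      have hQ : Function.Injective Q := by
        rw [injective_iff_map_eq_zero]
        intro w hw
        apply s.hN
        rw [map_zero, hNg]
        have : f0 ᵥ* s.N w = 0 := (smul_eq_zero.1 hw).resolve_left hf
        rw [this]; simp
      have := hw1.map' Q (LinearMap.ker_eq_bot.2 hQ)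
      have e2 : Q ∘ ![w0, w1] = ![(f ⬝ᵥ z) • (f0 ᵥ* s.N w0), (f ⬝ᵥ z) • (f0 ᵥ* s.N w1)] := by
        funext i; fin_cases i <;> rfl
      rw [e2] at this
      exact this
    obtain ⟨v, hv1, hv2⟩ := s.of_act_tr f hact
    have hvU : v ∈ U := by
      rw [Submodule.mem_dualCoannihilator]
      rintro _ ⟨w, rfl⟩
      have := hv1 _ (s.hNH w)
      rw [hNg, vecMulVec_mulVec] at this
      simp only [op_smul_eq_smul, dotProduct_smul, smul_eq_mul, mul_eq_zero] at this
      exact this.resolve_right hf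
    obtain ⟨c, hc⟩ := hk ⟨v, hvU⟩
    have hc : c • k = v := congrArg Subtype.val hc
    have hc0 : c ≠ 0 := by
      rintro rfl
      apply hv2
      rw [← hc]; simp
    have := hv1 X hX
    rw [← hc, mulVec_smul, dotProduct_smul, smul_eq_mul, mul_eq_zero] at this
    exact this.resolve_left hc0
  intro X hX
  ext i
  have : Pi.single i (1:F) ⬝ᵥ X *ᵥ k = 0 := by
    by_cases hz : Pi.single i (1:F) ⬝ᵥ z = 0
    · have h1 := key (Pi.single i 1 + f0) (by rw [add_dotProduct, hz, hf0]; simp) X hX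
      have h2 := key f0 (by rw [hf0]; simp) X hX
      rw [add_dotProduct, h2, add_zero] at h1
      exact h1
    · exact key _ hz X hX
  simpa using this

theorem no_common_kernel (s : Sit F n W) {B : Set (Fin n → F)}
    (hB : Submodule.span F B = ⊤) (w : W) (hw : ∀ b ∈ B, s.N w *ᵥ b = 0) : w = 0 := by
  apply s.hN
  rw [map_zero]
  exact zero_of_span hB _ hw

theorem exists_ker_ne {W' : Type*} [AddCommGroup W'] [Module F W'] [FiniteDimensional F W'] (h : 1 < Module.finrank F W')
    (l : Module.Dual F W') : ∃ w, w ≠ 0 ∧ l w = 0 := by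
  have h1 := LinearMap.finrank_range_add_finrank_ker l
  have h2 := Submodule.finrank_le (LinearMap.range l)
  rw [Module.finrank_self] at h2
  have h3 : LinearMap.ker l ≠ ⊥ := by
    intro h; rw [h, finrank_bot] at h1; omega
  obtain ⟨w, hw, hw0⟩ := Submodule.exists_mem_ne_zero_of_ne_bot h3
  exact ⟨w, hw0, hw⟩

theorem linked (s : Sit F n W) (hn : 3 ≤ n) {B : Set (Fin n → F)} (hB : Submodule.span F B = ⊤)
    (h1 : ∀ b ∈ B, Rk1 (s.a b)) (h2 : ∀ b ∈ B, ∀ b' ∈ B, ∃ c : F, c ≠ 0 ∧ Rk1 (s.a (b + c • b'))) :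
    ∃ k : Fin n → F, k ≠ 0 ∧ ∀ X ∈ s.H, X *ᵥ k = 0 := by
  have := s.fd hn
  have hfW : 1 < Module.finrank F W := by have := s.dW; omega
  rcases rk1_family (s.a '' B) (by rintro _ ⟨b, hb, rfl⟩; exact h1 b hb) (by
    rintro _ ⟨b, hb, rfl⟩ _ ⟨b', hb', rfl⟩
    obtain ⟨c, hc, hr⟩ := h2 b hb b' hb'
    exact ⟨c, hc, by rwa [a_add, a_smul] at hr⟩) with ⟨z, hz⟩ | ⟨l, hl⟩
  · exact s.common_image hn hB z fun b hb w => hz _ ⟨b, hb, rfl⟩ w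
  · exfalso
    obtain ⟨w, hw0, hw⟩ := exists_ker_ne hfW l
    exact hw0 (s.no_common_kernel hB w fun b hb => hl _ ⟨b, hb, rfl⟩ w hw)

theorem compl_span (h : Module.Dual F (Fin n → F)) (hh : h ≠ 0) : Submodule.span F {b | h b ≠ 0} = ⊤ := by
  obtain ⟨b0, hb0⟩ : ∃ w, h w ≠ 0 := by
    by_contra hc; push Not at hc
    exact hh (LinearMap.ext hc)
  rw [eq_top_iff]
  intro x _
  by_cases hx : h x = 0
  · have : x = (x + b0) - b0 := by simp
    rw [this]
    exact Submodule.sub_mem _ (Submodule.subset_span (by simpa [hx] using hb0)) (Submodule.subset_span hb0)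
  · exact Submodule.subset_span hx

theorem q2 (h : ¬ ∃ c : F, c ≠ 0 ∧ c ≠ 1) (c : F) (hc : c ≠ 0) : c = 1 := by
  by_contra h1; exact h ⟨c, hc, h1⟩

/-- case (a) -/
theorem case_a (s : Sit F n W) (hn : 3 ≤ n) (hq : (∃ c : F, c ≠ 0 ∧ c ≠ 1) ∨ 4 ≤ n)
    (h : Submodule.span F {v | s.Act v} ≠ ⊤) : ∃ k : Fin n → F, k ≠ 0 ∧ ∀ X ∈ s.H, X *ᵥ k = 0 := by
  have := s.fd hn
  obtain ⟨h, hh, hle⟩ := Submodule.exists_le_ker_of_lt_top _ (lt_top_iff_ne_top.2 h)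
  have hr : ∀ b, h b ≠ 0 → Rk1 (s.a b) := fun b hb =>
    s.rk1_of_not_act b fun hact => hb (hle (Submodule.subset_span hact))
  have hsp := compl_span h hh
  by_cases hq2 : ∃ c : F, c ≠ 0 ∧ c ≠ 1
  · refine s.linked hn hsp hr fun b hb b' hb' => ?_
    obtain ⟨c, hc0, hc1⟩ := hq2
    have hb : h b ≠ 0 := hb
    have hb' : h b' ≠ 0 := hb'
    refine ⟨- c * (h b / h b'), by simp [hc0, hb, hb'], hr _ ?_⟩
    rw [map_add, map_smul, smul_eq_mul]
    have : h b + -c * (h b / h b') * h b' = (1 - c) * h b := by field_simp; ring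
    rw [this]
    exact mul_ne_zero (sub_ne_zero.2 (Ne.symm hc1)) hb
  · have hn4 := hq.resolve_left hq2
    by_cases hadj : ∀ b, h b ≠ 0 → ∀ b', h b' ≠ 0 → Rk1 (s.a (b + b'))
    · exact s.linked hn hsp hr fun b hb b' hb' => ⟨1, one_ne_zero, by rw [one_smul]; exact hadj b hb b' hb'⟩
    · exfalso
      push Not at hadj
      obtain ⟨b, hb, b', hb', hn'⟩ := hadj
      obtain ⟨l1, z1, e1⟩ := (hr b hb).decomp
      obtain ⟨l2, z2, e2⟩ := (hr b' hb').decomp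
      -- common kernel vector
      obtain ⟨w, hw0, hw1, hw2⟩ : ∃ w : W, w ≠ 0 ∧ l1 w = 0 ∧ l2 w = 0 := by
        have h1 := LinearMap.finrank_range_add_finrank_ker (l1.prod l2)
        have h2 := Submodule.finrank_le (LinearMap.range (l1.prod l2))
        have h4 : Module.finrank F (F × F) = 2 := by simp
        have h5 := s.dW
        have h3 : LinearMap.ker (l1.prod l2) ≠ ⊥ := by
          intro h; rw [h, finrank_bot] at h1; omega
        obtain ⟨w, hw, hw0⟩ := Submodule.exists_mem_ne_zero_of_ne_bot h3
        have := LinearMap.mem_ker.1 hw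
        exact ⟨w, hw0, (Prod.ext_iff.1 this).1, (Prod.ext_iff.1 this).2⟩
      apply hw0
      apply s.no_common_kernel hsp w
      intro b3 hb3
      have hb3 : h b3 ≠ 0 := hb3
      have r3 := hr b3 hb3
      have r4 := hr (b + b' + b3) (by
        rw [map_add, map_add, q2 hq2 _ hb, q2 hq2 _ hb', q2 hq2 _ hb3]
        intro h3
        have h2 : (2 : F) = 0 := by
          by_contra h20
          have := q2 hq2 2 h20
          have : (1 : F) = 0 := by linear_combination this
          exact one_ne_zero this
        have : (1 : F) = 0 := by linear_combination h3 - h2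
        exact one_ne_zero this)
      by_contra hne
      have hww : s.a (b + b' + b3) w = s.a b3 w := by
        rw [a_add, a_add, e1, e2]; simp [hw1, hw2]
      apply hn'
      -- ranges of a b3 and a(b+b'+b3) are both the line through a b3 w
      have p3 : ∀ x, ∃ c : F, c • (s.a b3 w) = s.a b3 x := by
        intro x
        have := r3 w x
        rw [LinearIndependent.pair_iff' (by exact hne)] at this
        push Not at this
        exact this
      have p4 : ∀ x, ∃ c : F, c • (s.a b3 w) = s.a (b + b' + b3) x := by
        intro x
        have := r4 w x
        rw [hww, LinearIndependent.pair_iff' (by exact hne)] at this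
        push Not at this
        exact this
      have p5 : ∀ x, ∃ c : F, c • (s.a b3 w) = s.a (b + b') x := by
        intro x
        obtain ⟨c, hc⟩ := p3 x
        obtain ⟨d, hd⟩ := p4 x
        refine ⟨d - c, ?_⟩
        rw [sub_smul, hc, hd, a_add]; simp
      intro x y hli
      obtain ⟨c, hc⟩ := p5 x
      obtain ⟨d, hd⟩ := p5 y
      rw [← hc, ← hd, LinearIndependent.pair_iff] at hli
      have := hli d (-c) (by rw [smul_smul, smul_smul, ← add_smul]; ring_nf; simp)
      have h6 := hli 1 0 (by
        have hc0 : c = 0 := by simpa using this.2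
        rw [hc0]; simp)
      exact one_ne_zero h6.1

end Sit

namespace Sit
variable {F : Type*} [Field F] {n : ℕ} {W : Type*} [AddCommGroup W] [Module F W]

theorem dual_vec (l : Module.Dual F (Fin n → F)) : ∃ y : Fin n → F, ∀ x, y ⬝ᵥ x = l x := by
  refine ⟨fun i => l (Pi.single i 1), fun x => ?_⟩
  rw [LinearMap.pi_apply_eq_sum_univ l x, dotProduct]
  simp only [mul_comm, smul_eq_mul]
  refine Finset.sum_congr rfl fun i _ => ?_
  congr 2
  ext j; simp [Pi.single_apply, eq_comm]

theorem basis_of_span {S : Set (Fin n → F)} (h : Submodule.span F S = ⊤) :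
    ∃ b : Module.Basis (Fin n) F (Fin n → F), ∀ i, b i ∈ S := by
  obtain ⟨t, htS, hspan, hli⟩ := exists_linearIndependent F S
  have : Finite t := hli.finite
  have : Fintype t := Fintype.ofFinite t
  let b0 : Module.Basis t F (Fin n → F) := Module.Basis.mk hli (by
    rw [Subtype.range_coe_subtype, Set.ofPred_mem_eq, hspan, h])
  have hc : Fintype.card t = n := by
    have := Module.finrank_eq_card_basis b0
    simpa using this.symm
  refine ⟨b0.reindex (Fintype.equivFinOfCardEq hc), fun i => ?_⟩
  simp [b0]
  exact htS (Subtype.coe_prop _)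

theorem case_c_coord (s : Sit F n W) 
    (h1 : Submodule.span F {v | s.Act v} = ⊤) (h2 : Submodule.span F {v | s.tr.Act v} = ⊤) :
    ∃ b : Module.Basis (Fin n) F (Fin n → F), ∀ v i j, i ≠ j → b.repr v i ≠ 0 → b.repr v j ≠ 0 →
      Rk1 (s.a v) := by
  obtain ⟨b, hb⟩ := basis_of_span h1
  choose f hf1 hf2 using hb
  choose y hy using fun i => dual_vec (b.coord i)
  let θ : (Fin n → F) → (Fin n → F) → Module.Dual F (Matrix (Fin n) (Fin n) F) := fun g v =>
    dotProductBilin F F g ∘ₗ (Matrix.mulVecBilin F F).flip v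
  have hθ : ∀ g v X, θ g v X = g ⬝ᵥ X *ᵥ v := fun g v X => rfl
  have hθ' : ∀ g v x z, θ g v (vecMulVec x z) = (z ⬝ᵥ v) * (g ⬝ᵥ x) := by
    intro g v x z
    rw [hθ, vecMulVec_mulVec]; simp
  have hfi0 : ∀ i, f i ≠ 0 := by
    intro i h; exact hf2 i (by rw [h]; simp)
  have hli : LinearIndependent F (fun i => θ (f i) (b i)) := by
    rw [Fintype.linearIndependent_iff]
    intro g hg j
    obtain ⟨x, hx⟩ := exists_dot_one (hfi0 j)
    have := congrArg (fun l => l (vecMulVec x (y j))) hg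
    simp only [LinearMap.sum_apply, LinearMap.smul_apply, hθ', hy, Module.Basis.coord_apply, Module.Basis.repr_self,
      Finsupp.single_apply] at this
    simp only [smul_eq_mul, ite_mul, one_mul, zero_mul, mul_ite, mul_zero, Finset.sum_ite_eq', Finset.mem_univ, if_true, LinearMap.zero_apply] at this
    rw [dotProduct_comm, hx, mul_one] at this
    exact this
  have hspan : Submodule.span F (Set.range fun i => θ (f i) (b i)) = s.H.dualAnnihilator := by
    apply Submodule.eq_of_le_of_finrank_eq
    · rw [Submodule.span_le]
      rintro _ ⟨i, rfl⟩
      simp only [SetLike.mem_coe, Submodule.mem_dualAnnihilator]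
      intro X hX
      exact hf1 i X hX
    · rw [finrank_span_eq_card hli, Fintype.card_fin]
      have e1 := Subspace.finrank_add_finrank_dualAnnihilator_eq s.H
      have e2 := s.dH
      rw [Module.finrank_matrix] at e1
      simp at e1
      omega
  have claim2 : ∀ g v, (∀ X ∈ s.H, g ⬝ᵥ X *ᵥ v = 0) → ∃ c : Fin n → F, ∀ j, b.repr v j • g = c j • f j := by
    intro g v h
    have hm : θ g v ∈ Submodule.span F (Set.range fun i => θ (f i) (b i)) := by
      rw [hspan, Submodule.mem_dualAnnihilator]
      exact h
    rw [Submodule.mem_span_range_iff_exists_fun] at hm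
    obtain ⟨c, hc⟩ := hm
    refine ⟨c, fun j => ?_⟩
    ext i
    have := congrArg (fun l => l (vecMulVec (Pi.single i 1) (y j))) hc
    simp only [LinearMap.sum_apply, LinearMap.smul_apply, hθ', hy, Module.Basis.coord_apply, Module.Basis.repr_self,
      Finsupp.single_apply] at this
    simp at this
    simp [this]
  have hspf : ⊤ ≤ Submodule.span F (Set.range f) := by
    rw [← h2, Submodule.span_le]
    intro g hg
    obtain ⟨v, hv1, hv2⟩ := s.of_act_tr g hg
    obtain ⟨c, hc⟩ := claim2 g v hv1
    obtain ⟨j, hj⟩ : ∃ j, b.repr v j ≠ 0 := by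
      by_contra hcon
      push Not at hcon
      have : v = 0 := by
        apply b.repr.injective
        ext j; simp [hcon]
      exact hv2 (by rw [this]; simp)
    have : g = (b.repr v j)⁻¹ • c j • f j := by
      rw [← hc, smul_smul, inv_mul_cancel₀ hj, one_smul]
    rw [this]
    exact Submodule.smul_mem _ _ (Submodule.smul_mem _ _ (Submodule.subset_span ⟨j, rfl⟩))
  have hlif : LinearIndependent F f := linearIndependent_of_top_le_span_of_card_eq_finrank hspf (by simp)
  refine ⟨b, fun v i j hij hi hj => s.rk1_of_not_act v ?_⟩
  rintro ⟨g, hg1, hg2⟩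
  obtain ⟨c, hc⟩ := claim2 g v hg1
  have hg0 : g ≠ 0 := by rintro rfl; exact hg2 (by simp)
  have hpair : LinearIndependent F ![f i, f j] := by
    have h3 := hlif.comp ![i, j] (by
      intro p q hpq
      fin_cases p <;> fin_cases q <;> simp_all [eq_comm])
    have e2 : f ∘ ![i, j] = ![f i, f j] := by
      funext p; fin_cases p <;> rfl
    rw [e2] at h3
    exact h3
  have hp := (LinearIndependent.pair_iff.1 hpair) (b.repr v j * c i) (- (b.repr v i * c j)) (by
    rw [neg_smul, mul_smul, mul_smul, ← hc, ← hc, smul_comm]; simp)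
  have hci : c i = 0 := by
    rcases mul_eq_zero.1 hp.1 with h | h
    · exact absurd h hj
    · exact h
  have := hc i
  rw [hci, zero_smul, smul_eq_zero] at this
  exact this.elim hi hg0

theorem case_c (s : Sit F n W) (hn : 3 ≤ n) (hq : (∃ c : F, c ≠ 0 ∧ c ≠ 1) ∨ 4 ≤ n)
    (h1 : Submodule.span F {v | s.Act v} = ⊤) (h2 : Submodule.span F {v | s.tr.Act v} = ⊤) :
    ∃ k : Fin n → F, k ≠ 0 ∧ ∀ X ∈ s.H, X *ᵥ k = 0 := by
  obtain ⟨b, hb⟩ := s.case_c_coord h1 h2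
  obtain ⟨i0, hi0⟩ : ∃ i : Fin n, i.val = 0 := ⟨⟨0, by omega⟩, rfl⟩
  obtain ⟨i1, hi1⟩ : ∃ i : Fin n, i.val = 1 := ⟨⟨1, by omega⟩, rfl⟩
  obtain ⟨i2, hi2⟩ : ∃ i : Fin n, i.val = 2 := ⟨⟨2, by omega⟩, rfl⟩
  have h01 : i0 ≠ i1 := by intro h; rw [h] at hi0; omega
  have h02 : i0 ≠ i2 := by intro h; rw [h] at hi0; omega
  have h12 : i1 ≠ i2 := by intro h; rw [h] at hi1; omega
  have top_of : ∀ B : Set (Fin n → F), (∀ i, b i ∈ Submodule.span F B) → Submodule.span F B = ⊤ := by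
    intro B h
    rw [eq_top_iff, ← b.span_eq, Submodule.span_le]
    rintro _ ⟨i, rfl⟩
    exact h i
  by_cases hq2 : ∃ c : F, c ≠ 0 ∧ c ≠ 1
  · obtain ⟨c, hc0, hc1⟩ := hq2
    have hc2 : 1 + -c ≠ 0 := by
      intro h; exact hc1 (by linear_combination -h)
    let B : Set (Fin n → F) := {x | b.repr x i0 = 1 ∧ b.repr x i1 = 1} ∪ {b i0 + b i2}
    have hB : Submodule.span F B = ⊤ := by
      apply top_of
      have hu : b i0 + b i1 ∈ Submodule.span F B := Submodule.subset_span (Or.inl (by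
        constructor <;> simp [Finsupp.single_apply, h01, h01.symm]))
      have hv : ∀ i, i ≠ i0 → i ≠ i1 → b i ∈ Submodule.span F B := by
        intro i hi hi'
        have h3 : b i0 + b i1 + b i ∈ Submodule.span F B := Submodule.subset_span (Or.inl (by
          constructor <;> simp [Finsupp.single_apply, h01, h01.symm, hi, hi']))
        simpa using Submodule.sub_mem _ h3 hu
      have h0 : b i0 ∈ Submodule.span F B := by
        have h3 : b i0 + b i2 ∈ Submodule.span F B := Submodule.subset_span (Or.inr rfl)
        simpa using Submodule.sub_mem _ h3 (hv i2 h02.symm h12.symm)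
      intro i
      by_cases e0 : i = i0
      · rw [e0]; exact h0
      by_cases e1 : i = i1
      · rw [e1]; simpa using Submodule.sub_mem _ hu h0
      exact hv i e0 e1
    refine s.linked hn hB ?_ ?_
    · rintro x (⟨hx, hx'⟩ | hx)
      · exact hb x i0 i1 h01 (by simp [hx]) (by simp [hx'])
      · rw [Set.mem_singleton_iff.1 hx]
        apply hb _ i0 i2 h02 <;> simp [Finsupp.single_apply, h02, h02.symm]
    · have hnc : -c ≠ 0 := neg_ne_zero.2 hc0
      rintro x (⟨hx, hx'⟩ | hx) z (⟨hz, hz'⟩ | hz)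
      · exact ⟨-c, hnc, hb _ i0 i1 h01 (by simpa [hx, hz] using hc2) (by simpa [hx', hz'] using hc2)⟩
      · rw [Set.mem_singleton_iff.1 hz]
        exact ⟨-c, hnc, hb _ i0 i1 h01 (by simpa [hx, h02, h02.symm] using hc2)
          (by simp [hx', h01, h12, h12.symm])⟩
      · rw [Set.mem_singleton_iff.1 hx]
        exact ⟨-c, hnc, hb _ i0 i1 h01 (by simpa [hz, h02, h02.symm] using hc2)
          (by simp [hz', h01, h12, h12.symm, hc0])⟩
      · rw [Set.mem_singleton_iff.1 hz, Set.mem_singleton_iff.1 hx]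
        exact ⟨-c, hnc, hb _ i0 i2 h02 (by simpa [h02, h02.symm] using hc2)
          (by simpa [h02, h02.symm] using hc2)⟩
  · have hn4 := hq.resolve_left hq2
    have h20 : (2 : F) = 0 := by
      by_contra h20
      have := q2 hq2 2 h20
      have : (1 : F) = 0 := by linear_combination this
      exact one_ne_zero this
    have hd : ∀ x : Fin n → F, x + x = 0 := by
      intro x; rw [← two_smul F x, h20, zero_smul]
    obtain ⟨i3, hi3⟩ : ∃ i : Fin n, i.val = 3 := ⟨⟨3, by omega⟩, rfl⟩
    have h03 : i0 ≠ i3 := by intro h; rw [h] at hi0; omega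
    have h13 : i1 ≠ i3 := by intro h; rw [h] at hi1; omega
    have h23 : i2 ≠ i3 := by intro h; rw [h] at hi2; omega
    let B : Set (Fin n → F) := {x | ∃ i, i ≠ i3 ∧ x = b i + b i3} ∪ {b i0 + b i1 + b i2}
    have hB : Submodule.span F B = ⊤ := by
      apply top_of
      have hu : b i0 + b i1 + b i2 ∈ Submodule.span F B := Submodule.subset_span (Or.inr rfl)
      have hv : ∀ i, i ≠ i3 → b i + b i3 ∈ Submodule.span F B := fun i hi =>
        Submodule.subset_span (Or.inl ⟨i, hi, rfl⟩)
      have h3 : b i3 ∈ Submodule.span F B := by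
        have := Submodule.add_mem _ (Submodule.add_mem _ (Submodule.add_mem _ hu (hv i0 h03)) (hv i1 h13)) (hv i2 h23)
        have e : b i0 + b i1 + b i2 + (b i0 + b i3) + (b i1 + b i3) + (b i2 + b i3) =
          (b i0 + b i0) + (b i1 + b i1) + (b i2 + b i2) + (b i3 + b i3) + b i3 := by abel
        rw [e] at this
        simpa [hd] using this
      intro i
      by_cases e : i = i3
      · rw [e]; exact h3
      · simpa using Submodule.sub_mem _ (hv i e) h3
    have hmix : ∀ i, i ≠ i3 → Rk1 (s.a (b i + b i3 + (b i0 + b i1 + b i2))) := by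
      intro i hi
      by_cases e0 : i = i0
      · apply hb _ i1 i3 h13 <;> simp [Finsupp.single_apply, e0, h01, h02, h12.symm, h13, h03, h23, h13.symm]
      · apply hb _ i0 i3 h03 <;> simp [Finsupp.single_apply, e0, hi, h01.symm, h02.symm, h03.symm, h13, h03, h23]
    refine s.linked hn hB ?_ ?_
    · rintro x (⟨i, hi, rfl⟩ | hx)
      · apply hb _ i i3 hi <;> simp [Finsupp.single_apply, hi, hi.symm]
      · rw [Set.mem_singleton_iff.1 hx]
        apply hb _ i0 i1 h01 <;> simp [Finsupp.single_apply, h01, h01.symm, h02.symm, h12.symm]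
    · have key : ∀ x ∈ B, ∀ z ∈ B, Rk1 (s.a (x + z)) := by
        rintro x (⟨i, hi, rfl⟩ | hx) z (⟨j, hj, rfl⟩ | hz)
        · have e : b i + b i3 + (b j + b i3) = b i + b j + (b i3 + b i3) := by abel
          rw [e, hd, add_zero]
          by_cases hij : i = j
          · rw [hij, hd]
            have : s.a 0 = 0 := by ext1 w; simp
            rw [this]; exact rk1_zero
          · apply hb _ i j hij <;> simp [Finsupp.single_apply, hij, Ne.symm hij]
        · rw [Set.mem_singleton_iff.1 hz]; exact hmix i hi
        · rw [Set.mem_singleton_iff.1 hx, add_comm]; exact hmix j hj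
        · rw [Set.mem_singleton_iff.1 hz, Set.mem_singleton_iff.1 hx, hd]
          have : s.a 0 = 0 := by ext1 w; simp
          rw [this]; exact rk1_zero
      exact fun x hx z hz => ⟨1, one_ne_zero, by rw [one_smul]; exact key x hx z hz⟩

theorem main (s : Sit F n W) (hn : 3 ≤ n) (hq : (∃ c : F, c ≠ 0 ∧ c ≠ 1) ∨ 4 ≤ n) :
    (∃ k : Fin n → F, k ≠ 0 ∧ ∀ X ∈ s.H, X *ᵥ k = 0) ∨ (∃ k : Fin n → F, k ≠ 0 ∧ ∀ X ∈ s.H, Xᵀ *ᵥ k = 0) := by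
  by_cases h1 : Submodule.span F {v | s.Act v} = ⊤
  · by_cases h2 : Submodule.span F {v | s.tr.Act v} = ⊤
    · exact Or.inl (s.case_c hn hq h1 h2)
    · obtain ⟨k, hk, h⟩ := s.tr.case_a hn hq h2
      exact Or.inr ⟨k, hk, fun X hX => h _ ⟨X, hX, rfl⟩⟩
  · exact Or.inl (s.case_a hn hq h1)

end Sit

theorem form_L {F : Type*} [Field F] {n : ℕ} (T : Matrix (Fin n) (Fin n) F →ₗ[F] Matrix (Fin n) (Fin n) F)
    (hT : Function.Surjective T) (e k : Fin n → F) (he : e ≠ 0) (hk : k ≠ 0)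
    (h : ∀ X, X *ᵥ e = 0 → T X *ᵥ k = 0) :
    ∃ L : (Fin n → F) →ₗ[F] (Fin n → F), Function.Injective L ∧ ∀ X, T X *ᵥ k = L (X *ᵥ e) := by
  obtain ⟨y, hy⟩ := Sit.exists_dot_one he
  obtain ⟨f, hf⟩ := Sit.exists_dot_one hk
  let L : (Fin n → F) →ₗ[F] (Fin n → F) :=
    { toFun := fun x => T (vecMulVec x y) *ᵥ k
      map_add' := by intro a b; rw [add_vecMulVec, map_add, add_mulVec]
      map_smul' := by intro a b; rw [smul_vecMulVec, map_smul, smul_mulVec]; rfl }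
  have hL : ∀ X, T X *ᵥ k = L (X *ᵥ e) := by
    intro X
    have := h (X - vecMulVec (X *ᵥ e) y) (by
      rw [sub_mulVec, vecMulVec_mulVec, hy]; simp)
    rw [map_sub, sub_mulVec, sub_eq_zero] at this
    exact this
  refine ⟨L, ?_, hL⟩
  rw [LinearMap.injective_iff_surjective]
  intro z
  obtain ⟨X, hX⟩ := hT (vecMulVec z f)
  refine ⟨X *ᵥ e, ?_⟩
  rw [← hL, hX, vecMulVec_mulVec, hf]; simp

theorem isUnit_of_inj {F : Type*} [Field F] {n : ℕ} (K : Matrix (Fin n) (Fin n) F)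
    (h : ∀ z, K *ᵥ z = 0 → z = 0) : IsUnit K := by
  rw [← Matrix.mulVec_injective_iff_isUnit]
  intro a b hab
  have := h (a - b) (by rw [mulVec_sub, sub_eq_zero]; exact hab)
  exact sub_eq_zero.1 this

theorem form_type1 {F : Type*} [Field F] {n : ℕ} (hn : 1 ≤ n)
    (T : Matrix (Fin n) (Fin n) F →ₗ[F] Matrix (Fin n) (Fin n) F)
    (hT : Function.Surjective T)
    (h : ∀ e : Fin n → F, e ≠ 0 → ∃ k : Fin n → F, k ≠ 0 ∧ ∀ X, X *ᵥ e = 0 → T X *ᵥ k = 0) :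
    ∃ P Q : Matrix (Fin n) (Fin n) F, IsUnit P ∧ IsUnit Q ∧ ∀ X, T X = P * X * Q := by
  have h' : ∀ e : Fin n → F, e ≠ 0 → ∃ k : Fin n → F, k ≠ 0 ∧ 
      ∃ L : (Fin n → F) →ₗ[F] (Fin n → F), Function.Injective L ∧ ∀ X, T X *ᵥ k = L (X *ᵥ e) := by
    intro e he
    obtain ⟨k, hk, hX⟩ := h e he
    exact ⟨k, hk, form_L T hT e k he hk hX⟩
  have hsn : ∀ i : Fin n, (Pi.single i 1 : Fin n → F) ≠ 0 := fun i => by simp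
  choose k hk L hLi hL using fun i : Fin n => h' (Pi.single i 1) (hsn i)
  have : Nonempty (Fin n) := ⟨⟨0, by omega⟩⟩
  obtain ⟨ke, hke, Le, hLei, hLe⟩ := h' 1 one_ne_zero
  let K0 : Matrix (Fin n) (Fin n) F := Matrix.of fun i j => k j i
  have hK0 : ∀ z, K0 *ᵥ z = ∑ i, z i • k i := by
    intro z; ext i; simp [K0, mulVec, dotProduct, mul_comm]
  have hTK : ∀ X z, T X *ᵥ (K0 *ᵥ z) = ∑ i, z i • L i (X *ᵥ Pi.single i 1) := by
    intro X z
    rw [hK0, ← Matrix.mulVecLin_apply, map_sum]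
    refine Finset.sum_congr rfl fun i _ => ?_
    rw [Matrix.mulVecLin_apply, mulVec_smul, hL]
  have hcol : ∀ x z j, T (vecMulVec x (Pi.single j 1)) *ᵥ (K0 *ᵥ z) = z j • L j x := by
    intro x z j
    rw [hTK, Finset.sum_eq_single j]
    · rw [vecMulVec_mulVec]; simp
    · intro i _ hij
      rw [vecMulVec_mulVec]; simp [hij]
    · simp
  have hone : (fun _ => 1 : Fin n → F) ≠ 0 := one_ne_zero
  obtain ⟨j0⟩ := this
  have hu0 : IsUnit K0 := by
    apply isUnit_of_inj
    intro z hz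
    ext j
    have := hcol 1 z j
    rw [hz, mulVec_zero] at this
    rcases smul_eq_zero.1 this.symm with h | h
    · exact h
    · exfalso
      have : (1 : Fin n → F) = 0 := hLi j (by rw [h, map_zero])
      exact hone this
  obtain ⟨c, hc⟩ := (Matrix.mulVec_surjective_iff_isUnit.2 hu0) ke
  have hc : K0 *ᵥ c = ke := hc
  have hLc : ∀ j x, Le x = c j • L j x := by
    intro j x
    rw [← hcol, hc, hLe, vecMulVec_mulVec]
    simp
  let K : Matrix (Fin n) (Fin n) F := Matrix.of fun i j => c j * k j i
  let P := LinearMap.toMatrix' Le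
  have hP : ∀ x, P *ᵥ x = Le x := fun x => by simp [P, LinearMap.toMatrix'_mulVec]
  have hTP : ∀ X, T X * K = P * X := by
    intro X
    apply Matrix.ext_of_mulVec_single
    intro j
    rw [← mulVec_mulVec, ← mulVec_mulVec, hP, hLc j, ← hL, ← mulVec_smul]
    congr 1
    ext i; simp [K]
  have hPu : IsUnit P := by
    apply isUnit_of_inj
    intro z hz
    rw [hP] at hz
    exact hLei (by rw [hz, map_zero])
  have hKu : IsUnit K := by
    apply isUnit_of_inj
    intro z hz
    obtain ⟨X, hX⟩ := hPu
    have := hTP 1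
    have h2 : (T 1 * K) *ᵥ z = 0 := by rw [← mulVec_mulVec, hz, mulVec_zero]
    rw [this, mul_one, hP] at h2
    exact hLei (by rw [h2, map_zero])
  have hKd : IsUnit K.det := (Matrix.isUnit_iff_isUnit_det K).1 hKu
  refine ⟨P, K⁻¹, hPu, ?_, fun X => ?_⟩
  · rw [Matrix.isUnit_nonsing_inv_iff]; exact hKu
  · rw [← hTP, Matrix.mul_assoc, Matrix.mul_nonsing_inv _ hKd, Matrix.mul_one]

def Form {F : Type*} [Field F] {n : ℕ} (T : Matrix (Fin n) (Fin n) F →ₗ[F] Matrix (Fin n) (Fin n) F) : Prop :=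
  ∃ P Q : Matrix (Fin n) (Fin n) F, IsUnit P ∧ IsUnit Q ∧ ((∀ X, T X = P * X * Q) ∨ ∀ X, T X = P * Xᵀ * Q)

theorem exists_sep {F : Type*} [Field F] {n : ℕ} (e e' : Fin n → F) (h : ∀ c : F, e ≠ c • e') :
    ∃ y : Fin n → F, y ⬝ᵥ e = 1 ∧ y ⬝ᵥ e' = 0 := by
  have hm : e ∉ Submodule.span F {e'} := by
    rw [Submodule.mem_span_singleton]
    rintro ⟨c, hc⟩; exact h c hc.symm
  obtain ⟨f, hf, hle⟩ := Submodule.exists_le_ker_of_notMem hm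
  obtain ⟨y, hy⟩ := Sit.dual_vec f
  refine ⟨(f e)⁻¹ • y, ?_, ?_⟩
  · rw [smul_dotProduct, hy, smul_eq_mul, inv_mul_cancel₀ hf]
  · have : f e' = 0 := hle (Submodule.mem_span_singleton_self _)
    rw [smul_dotProduct, hy, this, smul_zero]

theorem form1 {F : Type*} [Field F] {n : ℕ} (hn : 1 ≤ n)
    (T : Matrix (Fin n) (Fin n) F →ₗ[F] Matrix (Fin n) (Fin n) F)
    (hT : Function.Surjective T)
    (h : ∀ e : Fin n → F, e ≠ 0 → (∃ k : Fin n → F, k ≠ 0 ∧ ∀ X, X *ᵥ e = 0 → T X *ᵥ k = 0) ∨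
      (∃ k : Fin n → F, k ≠ 0 ∧ ∀ X, X *ᵥ e = 0 → (T X)ᵀ *ᵥ k = 0)) : Form T := by
  by_cases hall : ∀ e : Fin n → F, e ≠ 0 → (∃ k : Fin n → F, k ≠ 0 ∧ ∀ X, X *ᵥ e = 0 → (T X)ᵀ *ᵥ k = 0)
  · let T' : Matrix (Fin n) (Fin n) F →ₗ[F] Matrix (Fin n) (Fin n) F :=
      (transposeLinearEquiv (Fin n) (Fin n) F F).toLinearMap ∘ₗ T
    have hT' : ∀ X, T' X = (T X)ᵀ := fun X => rfl
    obtain ⟨P, Q, hP, hQ, hPQ⟩ := form_type1 hn T'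
      ((transposeLinearEquiv (Fin n) (Fin n) F F).surjective.comp hT) hall
    refine ⟨Qᵀ, Pᵀ, ?_, ?_, Or.inr fun X => ?_⟩
    · exact (Matrix.isUnit_transpose Q).2 hQ
    · exact (Matrix.isUnit_transpose P).2 hP
    · rw [← transpose_transpose (T X), ← hT', hPQ, transpose_mul, transpose_mul, Matrix.mul_assoc]
  · push Not at hall
    obtain ⟨e, he, hno⟩ := hall
    obtain ⟨k, hk, hX⟩ := (h e he).resolve_right (by
      rintro ⟨k, hk, hX⟩
      obtain ⟨X, h1, h2⟩ := hno k hk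
      exact h2 (hX X h1))
    obtain ⟨P, Q, hP, hQ, hPQ⟩ := form_type1 hn T hT (by
      intro e' he'
      by_cases hpar : ∃ c : F, e = c • e'
      · obtain ⟨c, rfl⟩ := hpar
        exact ⟨k, hk, fun X hXe => hX X (by rw [mulVec_smul, hXe, smul_zero])⟩
      push Not at hpar
      rcases h e' he' with h1 | ⟨g, hg, h1⟩
      · exact h1
      exfalso
      obtain ⟨y, hy, hy'⟩ := exists_sep e e' hpar
      have hz : ∀ X, g ⬝ᵥ T X *ᵥ k = 0 := by
        intro X
        have a1 := hX (X - vecMulVec (X *ᵥ e) y) (by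
          rw [sub_mulVec, vecMulVec_mulVec, hy]; simp)
        have a2 := h1 (vecMulVec (X *ᵥ e) y) (by
          rw [vecMulVec_mulVec, hy']; simp)
        rw [map_sub, sub_mulVec, sub_eq_zero] at a1
        rw [a1, dotProduct_mulVec, ← mulVec_transpose, a2, zero_dotProduct]
      obtain ⟨f, hf⟩ := Sit.exists_dot_one hk
      obtain ⟨x, hx⟩ := Sit.exists_dot_one hg
      obtain ⟨X, hX'⟩ := hT (vecMulVec x f)
      have := hz X
      rw [hX', vecMulVec_mulVec, hf] at this
      rw [dotProduct_comm] at this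
      simp [hx] at this)
    exact ⟨P, Q, hP, hQ, Or.inl hPQ⟩

theorem finrank_He {F : Type*} [Field F] {n : ℕ} (e : Fin n → F) (he : e ≠ 0) :
    Module.finrank F (LinearMap.ker ((Matrix.mulVecBilin F F).flip e :
      Matrix (Fin n) (Fin n) F →ₗ[F] (Fin n → F))) + n = n * n := by
  have h1 := LinearMap.finrank_range_add_finrank_ker ((Matrix.mulVecBilin F F).flip e :
      Matrix (Fin n) (Fin n) F →ₗ[F] (Fin n → F))
  have h2 : LinearMap.range ((Matrix.mulVecBilin F F).flip e :
      Matrix (Fin n) (Fin n) F →ₗ[F] (Fin n → F)) = ⊤ := by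
    rw [LinearMap.range_eq_top]
    intro x
    obtain ⟨y, hy⟩ := Sit.exists_dot_one he
    refine ⟨vecMulVec x y, ?_⟩
    simp [vecMulVec_mulVec, hy]
  rw [h2, finrank_top, Module.finrank_matrix] at h1
  simp at h1
  omega

theorem inv_of_le {F : Type*} [Field F] {n : ℕ} (T : Matrix (Fin n) (Fin n) F ≃ₗ[F] Matrix (Fin n) (Fin n) F)
    (k v : Fin n → F) (hk : k ≠ 0) (hv : v ≠ 0) (h : ∀ X, X *ᵥ k = 0 → T X *ᵥ v = 0) :
    ∀ Y, Y *ᵥ v = 0 → T.symm Y *ᵥ k = 0 := by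
  let f : (Fin n → F) → Matrix (Fin n) (Fin n) F →ₗ[F] (Fin n → F) := fun e => (Matrix.mulVecBilin F F).flip e
  have h1 : (LinearMap.ker (f k)).map T.toLinearMap = LinearMap.ker (f v) := by
    apply Submodule.eq_of_le_of_finrank_eq
    · rintro _ ⟨X, hX, rfl⟩
      exact h X hX
    · have a1 : Module.finrank F ((LinearMap.ker (f k)).map T.toLinearMap) = Module.finrank F (LinearMap.ker (f k)) := LinearEquiv.finrank_map_eq T _
      have a2 : Module.finrank F (LinearMap.ker (f k)) + n = n * n := finrank_He k hk
      have a3 : Module.finrank F (LinearMap.ker (f v)) + n = n * n := finrank_He v hv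
      omega
  intro Y hY
  have : Y ∈ (LinearMap.ker (f k)).map T.toLinearMap := by rw [h1]; exact hY
  obtain ⟨X, hX, rfl⟩ := this
  have hX : X *ᵥ k = 0 := hX
  simpa using hX

theorem form2 {F : Type*} [Field F] {n : ℕ} (hn : 1 ≤ n)
    (T : Matrix (Fin n) (Fin n) F →ₗ[F] Matrix (Fin n) (Fin n) F)
    (hT : Function.Bijective T)
    (h : ∀ v : Fin n → F, v ≠ 0 → (∃ k : Fin n → F, k ≠ 0 ∧ ∀ X, X *ᵥ k = 0 → T X *ᵥ v = 0) ∨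
      (∃ k : Fin n → F, k ≠ 0 ∧ ∀ X, Xᵀ *ᵥ k = 0 → T X *ᵥ v = 0)) : Form T := by
  let E := LinearEquiv.ofBijective T hT
  have hE : ∀ X, E X = T X := fun X => rfl
  obtain ⟨P, Q, hP, hQ, hPQ⟩ : Form E.symm.toLinearMap := by
    apply form1 hn _ E.symm.surjective
    intro v hv
    rcases h v hv with ⟨k, hk, h1⟩ | ⟨k, hk, h1⟩
    · exact Or.inl ⟨k, hk, inv_of_le E k v hk hv h1⟩
    · right
      refine ⟨k, hk, ?_⟩
      exact inv_of_le ((transposeLinearEquiv (Fin n) (Fin n) F F).trans E) k v hk hv (by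
        intro X hX
        exact h1 Xᵀ (by rwa [transpose_transpose]))
  have hPd : IsUnit P.det := (Matrix.isUnit_iff_isUnit_det P).1 hP
  have hQd : IsUnit Q.det := (Matrix.isUnit_iff_isUnit_det Q).1 hQ
  rcases hPQ with hPQ | hPQ
  · refine ⟨P⁻¹, Q⁻¹, (Matrix.isUnit_nonsing_inv_iff).2 hP, (Matrix.isUnit_nonsing_inv_iff).2 hQ, Or.inl fun X => ?_⟩
    have := hPQ (T X)
    rw [← hE] at this
    simp only [LinearEquiv.coe_coe, LinearEquiv.symm_apply_apply] at this
    rw [← hE]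
    nth_rewrite 2 [this]
    rw [Matrix.mul_assoc P, Matrix.nonsing_inv_mul_cancel_left _ _ hPd, Matrix.mul_nonsing_inv_cancel_right _ _ hQd]
  · refine ⟨Q⁻¹ᵀ, P⁻¹ᵀ, ?_, ?_, Or.inr fun X => ?_⟩
    · exact (Matrix.isUnit_transpose _).2 ((Matrix.isUnit_nonsing_inv_iff).2 hQ)
    · exact (Matrix.isUnit_transpose _).2 ((Matrix.isUnit_nonsing_inv_iff).2 hP)
    have := hPQ (T X)
    rw [← hE] at this
    simp only [LinearEquiv.coe_coe, LinearEquiv.symm_apply_apply] at this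
    rw [← hE]
    rw [← transpose_mul, ← transpose_mul]
    nth_rewrite 2 [this]
    rw [Matrix.mul_assoc P, Matrix.mul_assoc P, ← Matrix.mul_assoc, Matrix.mul_assoc ((E X)ᵀ)]
    rw [Matrix.mul_nonsing_inv _ hQd, Matrix.mul_one, Matrix.nonsing_inv_mul _ hPd, Matrix.one_mul, transpose_transpose]

/-- kernel of dot product with `e` -/
def Perp {F : Type*} [Field F] {n : ℕ} (e : Fin n → F) : Submodule F (Fin n → F) :=
  LinearMap.ker (dotProductBilin F F e)

theorem finrank_Perp {F : Type*} [Field F] {n : ℕ} (e : Fin n → F) (he : e ≠ 0) :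
    Module.finrank F (Perp e) + 1 = n := by
  have h1 := LinearMap.finrank_range_add_finrank_ker (dotProductBilin F F e)
  have h2 : LinearMap.range (dotProductBilin F F e) = ⊤ := by
    rw [LinearMap.range_eq_top]
    intro c
    obtain ⟨y, hy⟩ := Sit.exists_dot_one he
    refine ⟨c • y, ?_⟩
    change e ⬝ᵥ (c • y) = c
    rw [dotProduct_smul, dotProduct_comm, hy]; simp
  rw [h2, finrank_top] at h1
  simp at h1
  have : Module.finrank F (Perp e) = Module.finrank F (LinearMap.ker (dotProductBilin F F e)) := rfl
  omega

theorem unit_mulVec_ne {F : Type*} [Field F] {n : ℕ} {A : Matrix (Fin n) (Fin n) F} (hA : IsUnit A)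
    {v : Fin n → F} (hv : v ≠ 0) : A *ᵥ v ≠ 0 := by
  intro h
  apply hv
  apply (Matrix.mulVec_injective_iff_isUnit.2 hA)
  change A *ᵥ v = A *ᵥ 0
  rw [h, mulVec_zero]

theorem not_li_zero {F V : Type*} [Field F] [AddCommGroup V] [Module F V] (y : V) :
    ¬ LinearIndependent F ![0, y] := by
  intro h
  exact h.ne_zero 0 (by simp)

/-- The situation attached to `T` and `e`. -/
noncomputable def sitOf {F : Type*} [Field F] {n : ℕ} (hn : 1 ≤ n)
    (T : Matrix (Fin n) (Fin n) F ≃ₗ[F] Matrix (Fin n) (Fin n) F)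
    (hU : ∀ A ∈ ProdInv2 F n, IsUnit (T A)) (e : Fin n → F) (he : e ≠ 0) : Sit F n (Perp e) where
  H := (LinearMap.ker ((Matrix.mulVecBilin F F).flip e :
      Matrix (Fin n) (Fin n) F →ₗ[F] (Fin n → F))).map T.toLinearMap
  N := T.toLinearMap ∘ₗ vecMulVecBilin F F e ∘ₗ (Perp e).subtype
  A := T 1
  hN := by
    refine T.injective.comp ?_
    intro a b hab
    apply Subtype.ext
    obtain ⟨y, hy⟩ := Sit.exists_dot_one he
    have := congrArg (fun M => y ᵥ* M) hab
    simpa [vecMul_vecMulVec, hy] using this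
  hNH := by
    intro w
    refine ⟨vecMulVec e w.1, ?_, rfl⟩
    have : e ⬝ᵥ w.1 = 0 := w.2
    change vecMulVec e w.1 *ᵥ e = 0
    rw [vecMulVec_mulVec, dotProduct_comm, this]; simp
  dW := finrank_Perp e he
  dH := by
    have h1 := LinearEquiv.finrank_map_eq T (LinearMap.ker ((Matrix.mulVecBilin F F).flip e :
      Matrix (Fin n) (Fin n) F →ₗ[F] (Fin n → F)))
    have h2 := finrank_He e he
    exact (congrArg (· + n) h1).trans h2
  h1 := by
    rintro v _ ⟨X, hX, rfl⟩ h w1 w2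
    by_cases hv : v = 0
    · rw [hv, mulVec_zero]; exact not_li_zero _
    have d1 : e ⬝ᵥ w1.1 = 0 := w1.2
    have d2 : e ⬝ᵥ w2.1 = 0 := w2.2
    exact R1 hn ((Matrix.mulVecBilin F F).flip v ∘ₗ T.toLinearMap)
      (fun A hA => unit_mulVec_ne (hU A hA) hv) e he X hX h w1 w2 (by rw [dotProduct_comm, d1])
      (by rw [dotProduct_comm, d2])
  h2 := by
    rintro v _ ⟨X, hX, rfl⟩ h w1 w2
    by_cases hv : v = 0
    · rw [hv, zero_vecMul]; exact not_li_zero _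
    have d1 : e ⬝ᵥ w1.1 = 0 := w1.2
    have d2 : e ⬝ᵥ w2.1 = 0 := w2.2
    refine R1 hn (Matrix.vecMulBilin F F v ∘ₗ T.toLinearMap)
      (fun A hA => ?_) e he X hX h w1 w2 (by rw [dotProduct_comm, d1])
      (by rw [dotProduct_comm, d2])
    have := unit_mulVec_ne ((Matrix.isUnit_transpose _).2 (hU A hA)) hv
    rw [mulVec_transpose] at this
    exact this

theorem generic {F : Type*} [Field F] {n : ℕ} (hn : 3 ≤ n) (hq : (∃ c : F, c ≠ 0 ∧ c ≠ 1) ∨ 4 ≤ n)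
    (T : Matrix (Fin n) (Fin n) F →ₗ[F] Matrix (Fin n) (Fin n) F) (hT : Function.Bijective T)
    (hU : ∀ A ∈ ProdInv2 F n, IsUnit (T A)) : Form T := by
  let E := LinearEquiv.ofBijective T hT
  apply form1 (by omega) T hT.2
  intro e he
  rcases (sitOf (by omega) E hU e he).main hn hq with ⟨k, hk, h⟩ | ⟨k, hk, h⟩
  · exact Or.inl ⟨k, hk, fun X hX => h _ ⟨X, hX, rfl⟩⟩
  · exact Or.inr ⟨k, hk, fun X hX => h _ ⟨X, hX, rfl⟩⟩

theorem inv_isUnit {F : Type*} [Field F] {n : ℕ} {J : Matrix (Fin n) (Fin n) F} (h : J * J = 1) : IsUnit J :=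
  IsUnit.of_mul_eq_one J h

theorem hU_of {F : Type*} [Field F] {n : ℕ}
    (S : Set (Matrix (Fin n) (Fin n) F))
    (hS : S = ProdInv2 F n ∨ S = ProdInv3 F n ∨ S = ProdInv4 F n)
    (T : Matrix (Fin n) (Fin n) F →ₗ[F] Matrix (Fin n) (Fin n) F)
    (hpres : ∀ A ∈ S, T A ∈ S) : ∀ A ∈ ProdInv2 F n, IsUnit (T A) := by
  rintro A ⟨J1, J2, h1, h2, rfl⟩
  rcases hS with rfl | rfl | rfl
  · obtain ⟨K1, K2, h3, h4, h5⟩ := hpres _ ⟨J1, J2, h1, h2, rfl⟩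
    rw [h5]; exact (inv_isUnit h3).mul (inv_isUnit h4)
  · obtain ⟨K1, K2, K3, h3, h4, h5, h6⟩ := hpres (J1 * J2) ⟨J1, J2, 1, h1, h2, by simp, by simp⟩
    rw [h6]; exact ((inv_isUnit h3).mul (inv_isUnit h4)).mul (inv_isUnit h5)
  · obtain ⟨K1, K2, K3, K4, h3, h4, h5, h6, h7⟩ := hpres (J1 * J2) ⟨J1, J2, 1, 1, h1, h2, by simp, by simp, by simp⟩
    rw [h7]; exact (((inv_isUnit h3).mul (inv_isUnit h4)).mul (inv_isUnit h5)).mul (inv_isUnit h6)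

theorem final_of_form {F : Type*} [Field F] {n : ℕ} 
    (T : Matrix (Fin n) (Fin n) F →ₗ[F] Matrix (Fin n) (Fin n) F) (h : Form T) :
    ∃ (r : F) (P : Matrix (Fin n) (Fin n) F), r ^ (2 * n) = 1 ∧ IsUnit P ∧
      ((∀ X, Matrix.trace X = 0 → T X = r • (T 1 * (P * X * P⁻¹))) ∨
       (∀ X, Matrix.trace X = 0 → T X = r • (T 1 * (P * Xᵀ * P⁻¹)))) ∧
      (0 < ringChar F → ringChar F ∣ n → r = 1) := by
  obtain ⟨P, Q, hP, hQ, h⟩ := h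
  have hQd : IsUnit Q.det := (Matrix.isUnit_iff_isUnit_det Q).1 hQ
  refine ⟨1, Q⁻¹, one_pow _, (Matrix.isUnit_nonsing_inv_iff).2 hQ, ?_, fun _ _ => rfl⟩
  rw [Matrix.nonsing_inv_nonsing_inv _ hQd]
  have key : ∀ Y : Matrix (Fin n) (Fin n) F, P * Y * Q = (1 : F) • (P * Q * (Q⁻¹ * Y * Q)) := by
    intro Y
    rw [one_smul, Matrix.mul_assoc Q⁻¹, Matrix.mul_assoc P Q, Matrix.mul_nonsing_inv_cancel_left _ _ hQd,
      Matrix.mul_assoc]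
  rcases h with h | h
  · left; intro X _
    rw [h 1, Matrix.mul_one, h X]; exact key X
  · right; intro X _
    rw [h 1, transpose_one, Matrix.mul_one, h X]; exact key Xᵀ

theorem det_one_mem {F : Type*} [Field F] (A : Matrix (Fin 2) (Fin 2) F) (h : A.det = 1) : A ∈ ProdInv2 F 2 := by
  obtain ⟨x, y, z, h1, h2⟩ : ∃ x y z : F, x * x + y * z = 1 ∧ (A 0 0 - A 1 1) * x + A 0 1 * z + A 1 0 * y = 0 := by
    by_cases hb : A 0 1 = 0
    · by_cases hc : A 1 0 = 0
      · exact ⟨0, 1, 1, by ring, by rw [hb, hc]; ring⟩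
      · exact ⟨1, -(A 0 0 - A 1 1) / A 1 0, 0, by ring, by field_simp; ring⟩
    · exact ⟨1, 0, -(A 0 0 - A 1 1) / A 0 1, by ring, by field_simp; ring⟩
  rw [det_fin_two] at h
  refine ⟨A * !![x, y; z, -x], !![x, y; z, -x], ?_, ?_, ?_⟩
  · ext i j
    fin_cases i <;> fin_cases j <;> simp [Matrix.mul_apply, Fin.sum_univ_two]
    · linear_combination (A 0 0 * x + A 0 1 * z) * h2 + (A 0 0*A 1 1 - A 0 1*A 1 0) * h1 + h
    · linear_combination (A 0 0 * y - A 0 1 * x) * h2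
    · linear_combination (A 1 0 * x + A 1 1 * z) * h2
    · linear_combination (A 1 0 * y - A 1 1 * x) * h2 + (A 0 0*A 1 1 - A 0 1*A 1 0) * h1 + h
  · ext i j
    fin_cases i <;> fin_cases j <;> simp [Matrix.mul_apply, Fin.sum_univ_two] <;> first | ring1 | linear_combination h1
  · rw [Matrix.mul_assoc]
    have : !![x, y; z, -x] * !![x, y; z, -x] = 1 := by
      ext i j
      fin_cases i <;> fin_cases j <;> simp [Matrix.mul_apply, Fin.sum_univ_two] <;> first | ring1 | linear_combination h1
    rw [this, Matrix.mul_one]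

theorem invol_mem {F : Type*} [Field F] (A : Matrix (Fin 2) (Fin 2) F) (h : A.det = -1) (ht : A 0 0 + A 1 1 = 0) :
    A ∈ ProdInv2 F 2 := by
  refine ⟨A, 1, ?_, by simp, by simp⟩
  rw [det_fin_two] at h
  ext i j
  fin_cases i <;> fin_cases j <;> simp [Matrix.mul_apply, Fin.sum_univ_two]
  · linear_combination -h + A 0 0 * ht
  · linear_combination A 0 1 * ht
  · linear_combination A 1 0 * ht
  · linear_combination -h + A 1 1 * ht

theorem rk1_of_det {F : Type*} [Field F] (A : Matrix (Fin 2) (Fin 2) F) (h : A.det = 0) :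
    Rk1 (Matrix.mulVecLin A) := by
  intro w1 w2 hli
  rw [det_fin_two] at h
  rw [LinearIndependent.pair_iff] at hli
  have key : ∀ i, (A *ᵥ w2) i • (A *ᵥ w1) + (-(A *ᵥ w1) i) • (A *ᵥ w2) = 0 := by
    intro i
    ext j
    fin_cases i <;> fin_cases j <;> simp [mulVec, dotProduct, Fin.sum_univ_two]
    · ring
    · linear_combination (w1 1 * w2 0 - w1 0 * w2 1) * h
    · linear_combination (w1 0 * w2 1 - w1 1 * w2 0) * h
    · ring
  have h0 : A *ᵥ w1 = 0 := by
    ext i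
    have := (hli _ _ (key i)).2
    simpa using this
  have := hli 1 0 (by simp [h0])
  exact one_ne_zero this.1

theorem two_sing {F : Type*} [Field F] (T : Matrix (Fin 2) (Fin 2) F →ₗ[F] Matrix (Fin 2) (Fin 2) F)
    (e : Fin 2 → F) (h : ∀ X, X *ᵥ e = 0 → (T X).det = 0) :
    (∃ k : Fin 2 → F, k ≠ 0 ∧ ∀ X, X *ᵥ e = 0 → T X *ᵥ k = 0) ∨
      (∃ k : Fin 2 → F, k ≠ 0 ∧ ∀ X, X *ᵥ e = 0 → (T X)ᵀ *ᵥ k = 0) := by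
  rcases rk1_family {a : (Fin 2 → F) →ₗ[F] (Fin 2 → F) | ∃ X, X *ᵥ e = 0 ∧ a = Matrix.mulVecLin (T X)} (by
    rintro _ ⟨X, hX, rfl⟩
    exact rk1_of_det _ (h X hX)) (by
    rintro _ ⟨X, hX, rfl⟩ _ ⟨Y, hY, rfl⟩
    refine ⟨1, one_ne_zero, ?_⟩
    rw [one_smul, ← Matrix.mulVecLin_add, ← map_add]
    exact rk1_of_det _ (h _ (by rw [add_mulVec, hX, hY, add_zero]))) with ⟨z, hz⟩ | ⟨l, hl⟩
  · right
    obtain ⟨k, hk, hkz⟩ : ∃ k : Fin 2 → F, k ≠ 0 ∧ k ⬝ᵥ z = 0 := by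
      by_cases hz0 : z = 0
      · exact ⟨1, one_ne_zero, by rw [hz0]; simp⟩
      · refine ⟨![z 1, - z 0], ?_, ?_⟩
        · intro hk
          apply hz0
          ext i; fin_cases i
          · simpa using congrFun hk 1
          · simpa using congrFun hk 0
        · simp [dotProduct, Fin.sum_univ_two]; ring
    refine ⟨k, hk, fun X hX => ?_⟩
    ext i
    obtain ⟨d, hd⟩ := hz _ ⟨X, hX, rfl⟩ (Pi.single i 1)
    have : k ⬝ᵥ (T X *ᵥ Pi.single i 1) = 0 := by
      rw [← Matrix.mulVecLin_apply, hd, dotProduct_smul, hkz, smul_zero]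
    rw [dotProduct_mulVec, ← mulVec_transpose] at this
    simpa using this
  · left
    obtain ⟨k, hk, hkl⟩ := Sit.exists_ker_ne (by simp) l
    exact ⟨k, hk, fun X hX => hl _ ⟨X, hX, rfl⟩ k hkl⟩

theorem sl2_col {F : Type*} [Field F] (e : Fin 2 → F) (he : e ≠ 0) :
    ∃ p q : F, e 0 * q - p * e 1 = 1 := by
  by_cases h : e 0 = 0
  · have h1 : e 1 ≠ 0 := by
      intro h1; apply he; ext i; fin_cases i <;> simpa
    exact ⟨-(e 1)⁻¹, 0, by field_simp; ring⟩
  · exact ⟨0, (e 0)⁻¹, by field_simp; ring⟩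

theorem quad_zero {F : Type*} [Field F] (c : F) (hc : c ≠ 0) (hc2 : c * c ≠ 1) (α β γ : F)
    (h : ∀ t, (α + β * t + γ * (t * t)) * (α + β * t + γ * (t * t)) = 1) : γ = 0 := by
  have hcc : c * c - 1 ≠ 0 := sub_ne_zero.2 hc2
  have hα : α ≠ 0 := by rintro rfl; simpa using h 0
  have h0 := h 0
  simp at h0
  by_cases h2 : (2 : F) = 0
  · have key : ∀ t, α + β * t + γ * (t * t) = α := by
      intro t
      have : (α + β * t + γ * (t * t) - α) * (α + β * t + γ * (t * t) - α) = 0 := by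
        linear_combination h t + h0 + (1 - (α + β*t + γ*(t*t))*α) * h2
      exact sub_eq_zero.1 (mul_self_eq_zero.1 this)
    have hc1 : c - 1 ≠ 0 := by
      intro h; apply hc2; rw [sub_eq_zero.1 h]; ring
    have e1 := key 1
    have e2 := key c
    have : γ * (c * (c - 1)) = 0 := by linear_combination e2 - c * e1
    exact (mul_eq_zero.1 this).resolve_right (mul_ne_zero hc hc1)
  · have hEO : ∀ t, t ≠ 0 → β * (α + γ * (t * t)) = 0 := by
      intro t ht
      have e1 := h t
      have e2 := h (-t)
      have : (2 * 2 * t) * (β * (α + γ * (t * t))) = 0 := by linear_combination e1 - e2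
      exact (mul_eq_zero.1 this).resolve_left (mul_ne_zero (mul_ne_zero h2 h2) ht)
    by_cases hβ : β = 0
    · subst hβ
      by_contra hγ
      have e1 := h 1
      have e2 := h c
      have f1 : 2 * α + γ = 0 := by
        have : γ * (2 * α + γ) = 0 := by linear_combination e1 - h0
        exact (mul_eq_zero.1 this).resolve_left hγ
      have f2 : 2 * α + γ * (c * c) = 0 := by
        have : (γ * (c * c)) * (2 * α + γ * (c * c)) = 0 := by linear_combination e2 - h0
        exact (mul_eq_zero.1 this).resolve_left (mul_ne_zero hγ (mul_ne_zero hc hc))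
      have : γ * (c * c - 1) = 0 := by linear_combination f2 - f1
      exact (mul_ne_zero hγ hcc) this
    · exfalso
      have e1 := (mul_eq_zero.1 (hEO 1 one_ne_zero)).resolve_left hβ
      have e2 := (mul_eq_zero.1 (hEO c hc)).resolve_left hβ
      have e3 : γ * (c * c - 1) = 0 := by linear_combination e2 - e1
      have hγ := (mul_eq_zero.1 e3).resolve_right hcc
      rw [hγ] at e1
      apply hα
      linear_combination e1

theorem two_generic {F : Type*} [Field F] (c : F) (hc : c ≠ 0) (hc2 : c * c ≠ 1)
    (T : Matrix (Fin 2) (Fin 2) F →ₗ[F] Matrix (Fin 2) (Fin 2) F) (hT : Function.Bijective T)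
    (hU : ∀ A ∈ ProdInv2 F 2, (T A).det * (T A).det = 1) : Form T := by
  apply form1 (by omega) T hT.2
  intro e he
  apply two_sing
  intro X hX
  let w : Fin 2 → F := ![- e 1, e 0]
  obtain ⟨p, q, hpq⟩ := sl2_col e he
  let x : Fin 2 → F := ![X 0 0 * p + X 0 1 * q, X 1 0 * p + X 1 1 * q]
  have g0 : X 0 0 * e 0 + X 0 1 * e 1 = 0 := by
    simpa [mulVec, dotProduct, Fin.sum_univ_two] using congrFun hX 0
  have g1 : X 1 0 * e 0 + X 1 1 * e 1 = 0 := by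
    simpa [mulVec, dotProduct, Fin.sum_univ_two] using congrFun hX 1
  by_cases hx : x = 0
  · have : X = 0 := by
      have x0 : X 0 0 * p + X 0 1 * q = 0 := congrFun hx 0
      have x1 : X 1 0 * p + X 1 1 * q = 0 := congrFun hx 1
      ext i j
      fin_cases i <;> fin_cases j <;> simp
      · linear_combination q * g0 - e 1 * x0 - X 0 0 * hpq
      · linear_combination -p * g0 + e 0 * x0 - X 0 1 * hpq
      · linear_combination q * g1 - e 1 * x1 - X 1 0 * hpq
      · linear_combination -p * g1 + e 0 * x1 - X 1 1 * hpq
    rw [this, map_zero]; simp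
  obtain ⟨r, s, hrs⟩ := sl2_col x hx
  have hx0 : x 0 = X 0 0 * p + X 0 1 * q := rfl
  have hx1 : x 1 = X 1 0 * p + X 1 1 * q := rfl
  have X00 : X 0 0 = -(x 0) * e 1 := by linear_combination q * g0 - X 0 0 * hpq + e 1 * hx0
  have X01 : X 0 1 = x 0 * e 0 := by linear_combination -p * g0 - X 0 1 * hpq - e 0 * hx0
  have X10 : X 1 0 = -(x 1) * e 1 := by linear_combination q * g1 - X 1 0 * hpq + e 1 * hx1
  have X11 : X 1 1 = x 1 * e 0 := by linear_combination -p * g1 - X 1 1 * hpq - e 0 * hx1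
  clear_value x
  let A : Matrix (Fin 2) (Fin 2) F := !![x 0, r; x 1, s] * !![q, -p; -e 1, e 0]
  have hA : ∀ t : F, (A + t • X).det = 1 := by
    intro t
    rw [det_fin_two]
    simp only [A, Matrix.mul_apply, Fin.sum_univ_two, Matrix.add_apply, Matrix.smul_apply, X00, X01, X10, X11]
    simp
    linear_combination (e 0 * q - p * e 1) * hrs + hpq
  have hquad := quad_zero c hc hc2 (T A).det ((T A) 0 0 * (T X) 1 1 + (T X) 0 0 * (T A) 1 1
    - (T A) 0 1 * (T X) 1 0 - (T X) 0 1 * (T A) 1 0) (T X).det (by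
      intro t
      have := hU _ (det_one_mem _ (hA t))
      have e : (T (A + t • X)).det = (T A).det + ((T A) 0 0 * (T X) 1 1 + (T X) 0 0 * (T A) 1 1
        - (T A) 0 1 * (T X) 1 0 - (T X) 0 1 * (T A) 1 0) * t + (T X).det * (t * t) := by
        rw [map_add, map_smul]
        simp [det_fin_two]; ring
      rw [e] at this
      exact this)
  exact hquad

theorem form_symm {F : Type*} [Field F] {n : ℕ}
    (E : Matrix (Fin n) (Fin n) F ≃ₗ[F] Matrix (Fin n) (Fin n) F)
    (h : Form (E.symm : Matrix (Fin n) (Fin n) F →ₗ[F] Matrix (Fin n) (Fin n) F)) :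
    Form (E : Matrix (Fin n) (Fin n) F →ₗ[F] Matrix (Fin n) (Fin n) F) := by
  obtain ⟨P, Q, hP, hQ, h⟩ := h
  have hQd : IsUnit Q.det := (Matrix.isUnit_iff_isUnit_det Q).1 hQ
  have hPd : IsUnit P.det := (Matrix.isUnit_iff_isUnit_det P).1 hP
  have key : ∀ Z : Matrix (Fin n) (Fin n) F, Z = P⁻¹ * (P * Z * Q) * Q⁻¹ := by
    intro Z
    rw [Matrix.mul_assoc P, Matrix.nonsing_inv_mul_cancel_left _ _ hPd, Matrix.mul_nonsing_inv_cancel_right _ _ hQd]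
  rcases h with h | h
  · refine ⟨P⁻¹, Q⁻¹, (Matrix.isUnit_nonsing_inv_iff).2 hP, (Matrix.isUnit_nonsing_inv_iff).2 hQ, Or.inl fun X => ?_⟩
    have h1 := h (E X)
    have h2 : X = P * (E X) * Q := by simpa using h1
    change E X = _
    conv_rhs => rw [h2]
    exact key _
  · refine ⟨(Q⁻¹)ᵀ, (P⁻¹)ᵀ, (Matrix.isUnit_transpose _).2 ((Matrix.isUnit_nonsing_inv_iff).2 hQ),
      (Matrix.isUnit_transpose _).2 ((Matrix.isUnit_nonsing_inv_iff).2 hP), Or.inr fun X => ?_⟩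
    have h1 := h (E X)
    have h2 : X = P * (E X)ᵀ * Q := by simpa using h1
    change E X = _
    conv_rhs => rw [h2]
    rw [← transpose_mul, ← transpose_mul, ← Matrix.mul_assoc, ← key, transpose_transpose]

theorem small2 {F : Type*} [Field F] (hno : ∀ c : F, c = 0 ∨ c * c = 1)
    (X Y : Matrix (Fin 2) (Fin 2) F) (hX1 : X.det = -1) (ht : X 0 0 + X 1 1 ≠ 0) (h2 : (2:F) ≠ 0)
    (hY : Y ≠ 0) (hY1 : Y.det = 0) (hYt : Y 0 0 + Y 1 1 = 0)
    (hXY : ∀ t : F, (X + t • Y).det ≠ 1) : False := by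
  have h3 : (3:F) = 0 := by
    rcases hno 2 with h | h
    · exact absurd h h2
    · linear_combination h
  have sq0 : ∀ p q : F, p * p + q * q = 0 → p = 0 ∧ q = 0 := by
    intro p q h
    rcases hno p with hp | hp <;> rcases hno q with hq | hq
    · exact ⟨hp, hq⟩
    · rw [hp] at h; exfalso; apply h2; linear_combination 2 * h - 2 * hq
    · rw [hq] at h; exfalso; apply h2; linear_combination 2 * h - 2 * hp
    · exfalso; apply h2; linear_combination h - hp - hq
  have hm1 : ∀ p : F, p * p + 1 ≠ 0 := by
    intro p h
    have := sq0 p 1 (by linear_combination h)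
    exact one_ne_zero this.2
  have htt := (hno _).resolve_left ht
  obtain ⟨u, v, w, hu⟩ : ∃ u v w : F, Y = !![u, v; w, -u] := by
    refine ⟨Y 0 0, Y 0 1, Y 1 0, ?_⟩
    ext i j; fin_cases i <;> fin_cases j <;> simp
    linear_combination hYt
  obtain ⟨a, b, c, d, hx⟩ : ∃ a b c d : F, X = !![a, b; c, d] := by
    exact ⟨X 0 0, X 0 1, X 1 0, X 1 1, by ext i j; fin_cases i <;> fin_cases j <;> simp⟩
  subst hu hx
  simp only [det_fin_two, Matrix.add_apply, Matrix.smul_apply] at *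
  simp at *
  have hpol : a * u + b * w + c * v - d * u = 0 := by
    by_contra hb
    apply hXY (-2 / (a * u + b * w + c * v - d * u))
    have htb := div_mul_cancel₀ (-2 : F) hb
    generalize -2 / (a * u + b * w + c * v - d * u) = t at htb
    linear_combination hX1 - htb + t * t * hY1
  have hdisc : (a - d) * (a - d) + 4 * (b * c) = -1 := by linear_combination htt - 4 * hX1 + h3 * 2
  have e1 : (b * w - c * v) * (b * w - c * v) + u * u = 0 := by
    linear_combination (b * w + c * v - (a - d) * u) * hpol + 4 * (b * c) * hY1 + u * u * hdisc
  obtain ⟨f1, f2⟩ := sq0 _ _ e1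
  subst f2
  have hbw : b * w = 0 := by
    have : 2 * (b * w) = 0 := by linear_combination f1 + hpol
    exact (mul_eq_zero.1 this).resolve_left h2
  have hcv : c * v = 0 := by linear_combination hbw - f1
  have hbc : b * c = 0 := by
    rcases mul_eq_zero.1 hbw with h | h
    · rw [h, zero_mul]
    rcases mul_eq_zero.1 hcv with h' | h'
    · rw [h', mul_zero]
    exact absurd (by rw [h, h']; ext i j; fin_cases i <;> fin_cases j <;> simp) hY
  apply hm1 (a - d)
  linear_combination hdisc - 4 * hbc

theorem two_small {F : Type*} [Field F] (hno : ∀ c : F, c = 0 ∨ c * c = 1)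
    (T : Matrix (Fin 2) (Fin 2) F →ₗ[F] Matrix (Fin 2) (Fin 2) F) (hT : Function.Bijective T)
    (hU : ∀ A ∈ ProdInv2 F 2, IsUnit (T A)) : Form T := by
  let E := LinearEquiv.ofBijective T hT
  apply form_symm E
  apply form1 (by omega) _ E.symm.surjective
  intro v hv
  apply two_sing
  intro Z hZ
  obtain ⟨X, rfl⟩ := E.surjective Z
  change (E.symm (E X)).det = 0
  rw [E.symm_apply_apply]
  have hZ : T X *ᵥ v = 0 := hZ
  have n1 : ∀ X, T X *ᵥ v = 0 → X.det ≠ 1 := fun X hX h =>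
    unit_mulVec_ne (hU _ (det_one_mem _ h)) hv hX
  have n2 : ∀ X, T X *ᵥ v = 0 → X.det = -1 → X 0 0 + X 1 1 = 0 → False := fun X hX h h' =>
    unit_mulVec_ne (hU _ (invol_mem _ h h')) hv hX
  by_contra hdet
  have hdet1 : X.det = -1 := by
    have h := (hno X.det).resolve_left hdet
    have h' : (X.det - 1) * (X.det + 1) = 0 := by linear_combination h
    rcases mul_eq_zero.1 h' with h | h
    · exact absurd (sub_eq_zero.1 h) (n1 _ hZ)
    · linear_combination h
  have h2 : (2 : F) ≠ 0 := by
    intro h2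
    apply n1 _ hZ
    linear_combination hdet1 - h2
  obtain ⟨Y, hY, hY0⟩ : ∃ Y : Matrix (Fin 2) (Fin 2) F, (T Y *ᵥ v = 0 ∧ Matrix.trace Y = 0) ∧ Y ≠ 0 := by
    let φ : Matrix (Fin 2) (Fin 2) F →ₗ[F] (Fin 2 → F) × F :=
      LinearMap.prod ((Matrix.mulVecBilin F F).flip v ∘ₗ T) (Matrix.traceLinearMap (Fin 2) F F)
    have := LinearMap.ker_ne_bot_of_finrank_lt (f := φ) (by simp [Module.finrank_matrix])
    obtain ⟨Y, h1, h2⟩ := Submodule.exists_mem_ne_zero_of_ne_bot this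
    refine ⟨Y, ?_, h2⟩
    have h1 : φ Y = 0 := h1
    exact ⟨congrArg Prod.fst h1, congrArg Prod.snd h1⟩
  rw [Matrix.trace_fin_two] at hY
  refine small2 hno X Y hdet1 (n2 X hZ hdet1) h2 hY0 ?_ hY.2 ?_
  · by_contra hd
    have h := (hno Y.det).resolve_left hd
    have h' : (Y.det - 1) * (Y.det + 1) = 0 := by linear_combination h
    rcases mul_eq_zero.1 h' with h | h
    · exact absurd (sub_eq_zero.1 h) (n1 _ hY.1)
    · exact n2 Y hY.1 (by linear_combination h) hY.2
  · intro t
    apply n1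
    rw [map_add, map_smul, add_mulVec, smul_mulVec, hZ, hY.1, smul_zero, add_zero]

theorem hD_of {F : Type*} [Field F] {n : ℕ}
    (S : Set (Matrix (Fin n) (Fin n) F))
    (hS : S = ProdInv2 F n ∨ S = ProdInv3 F n ∨ S = ProdInv4 F n)
    (T : Matrix (Fin n) (Fin n) F →ₗ[F] Matrix (Fin n) (Fin n) F)
    (hpres : ∀ A ∈ S, T A ∈ S) : ∀ A ∈ ProdInv2 F n, (T A).det * (T A).det = 1 := by
  have hd : ∀ J : Matrix (Fin n) (Fin n) F, J * J = 1 → J.det * J.det = 1 := by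
    intro J h; rw [← det_mul, h, det_one]
  have hm : ∀ a b : F, a * a = 1 → b * b = 1 → (a * b) * (a * b) = 1 := by
    intro a b ha hb; rw [mul_mul_mul_comm, ha, hb, one_mul]
  rintro A ⟨J1, J2, h1, h2, rfl⟩
  rcases hS with rfl | rfl | rfl
  · obtain ⟨K1, K2, h3, h4, h5⟩ := hpres _ ⟨J1, J2, h1, h2, rfl⟩
    rw [h5, det_mul]; exact hm _ _ (hd _ h3) (hd _ h4)
  · obtain ⟨K1, K2, K3, h3, h4, h5, h6⟩ := hpres (J1 * J2) ⟨J1, J2, 1, h1, h2, by simp, by simp⟩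
    rw [h6, det_mul, det_mul]; exact hm _ _ (hm _ _ (hd _ h3) (hd _ h4)) (hd _ h5)
  · obtain ⟨K1, K2, K3, K4, h3, h4, h5, h6, h7⟩ := hpres (J1 * J2) ⟨J1, J2, 1, 1, h1, h2, by simp, by simp, by simp⟩
    rw [h7, det_mul, det_mul, det_mul]; exact hm _ _ (hm _ _ (hm _ _ (hd _ h3) (hd _ h4)) (hd _ h5)) (hd _ h6)

/-- Search levels: shift, all-ones pattern, mask of the reversible elements. -/
def lv3 : List (ℕ × ℕ × ℕ) := [
  (3, 1, 1), (6, 9, 1), (12, 585, 65), (24, 2396745, 2129985), (48, 40210710958665, 69793480705),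
  (96, 11318308930609191084791992905, 9905938175145924977980604481),
  (192, 896728819340954394833684203315380916586050777780576358985, 786197150862383055144224765362379152319694652237479444481),
  (384, 5628858028056354173182720014306230543582819895780778095421184772035103110213887230202038036412130805829518284329545, 169389207157490133765744940867482617105352803890513251375009880248033724637893398610467815337870488931298967617),
  (768, 221788298900101276449854212637500365036698002445242373019864576860864421812339555190125486975520925421498247242447296172310225720587830627349183896434454448457779282288692843650037897947371206403608999884816638392984692407688008265, 6662687704949989912317384162239267470752394030235925505230611821514125495221549268922198911613197927927477860568786470751498510738263969984764672752753411814695601472913202109614437291721913746993834315515591987796893600350273)]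

/-- The masks of the fourteen standard subspaces. -/
def mk3 : List ℕ := [
  1021374160772913523879695263365881920623537975944378183162797136212687147231504493913750844178170537269038883328257566162372579179521348019493784875233268296545172129174336020575752446782779828624738167606152230693286895718798454178758619223862348194365829689023645213526951667933985036138706021482632721491879796378446673597041609556842021006122331529072826611802711423869947149283592577047982434455561018360018702666235066842504982378736288564804623269895,
  117077889138262522616824129080365846622447991416719247831085220929194520094552341363391880406421016112345052906223921197054773968799433237324207751735989901797144625609523137778441681237266662907736611904058002694456947188994215166140238250430789484574192203747399239945564140830792324079756236919490830432098324231556695308551675631244500481093722419813998707153603301875118022573831762410513332247352703762832541194781228242639557807379801407495,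
  1968017486655611104917697977018139341579204905062237165077678092882976030967684125549940032224444778697259760586231987901372021733241955132668272753076996305649122921803314728907167678639568425145545598173492746332253784334732528836776493491805379015114447223613709023888947061449940278000163562116828006822317867871700458726250604449313142104332840551816742479239184800863173787576670068816315080433385249215118704815862150876081764802528522259595788295,
  125953111638825876511620513791354698854288980563230937512107810413429585617572802626126238275123295613343875761904253142859005271055119636813071050553842255721264654924218212325723959148553731684235650599900875267278333046620329620672448881752866565891631767491706615721719899663379663212198177218424839548514141619158470404689427029490393122648163922226567647796631122679576128952660366308649616196383214518807515053713914938159949377434421731140728524295,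
  1964241020233812180139163385888355475438182038227729759684592106970136268915294374877650810229727678693343333288576759950475223860126421579081411550969172438795313648037649946042672814759762837883446660430259441515386282073842720372737089500180789066545481626222307045146706914588313310530031372106730373078895048142671528646082388057554770579022708225129218775571748119478026508160979472261032527828047575922683528151341139446840262984863237761046642695,
  514900248740639575189266300727784258327366039611451734733452964923786663457911918800002953439778950812631726130998546876272609139335791262923511727719048416867914801239675447245470691051757016142364681238546971943903846873919674256610845746903636583909554568206916916094465796465326590664120717744695880238279495569400108914741865868236062014800608181878560047172490355838353569830807352372902982020118826071151096939242648736721030420331551939973033008037895,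
  7492984849788355618416965745945794596885847185538720697303821432030799179503378000349502067947202828303630089220986533278521822161432549271056812448600349106739975605205353788338212975002240592966584664791465924494690160267358259640851887179174513816772988141602443260319135477666925727721644306221304942657073740911669359201162186585240553773428602701401273768196566490760931138888236936142113808923304286340591210695215290311537765476024306597895,
  1964241137311699570451076855680742686245847570880885989522313350097959973507616766854175648843146157933471556477476792033138241305663343482692134021001790977128055396768350839381884534861147405335342872672457228883804986433865659777985050388915464698634291850690856203937580174316583762037975919737710925853990686904376061674567890489978511643382205173968023506512251521510232982406692399850167025875741839443208977963031021111931026231128771593463103495,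
  17677629703658755544163875564104204461568351768908916951920557035294694280273115416534397107117693024862441167437681567438997784661810297244424477401099987611083061802688848917168467392744256793862672903322125865702654116536726949956986623986621625949760969858638240893587620137697339935693546177621664566838577733359131110206950822106073082115453209462792071519958312049352297346960022674690916191305415158009648039512191658456794582032786043207107481095,
  514900248740625169561467321444298349965253244432075619568183808137991418005068735869486933972013766464708833694914920227088062878610974407874329204267353502591933568503791890911880769673094802244650367585051751887750302473648951779130858923361942027596457503826968100368089943394280585574552715996539698040790062872745691172801730855171053086175315177904416360865525524068153359207000650053084939345126988674471516564226031821911442379012858894747416435621895,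
  125711425309626795620993113427558577005778394871796358841590514468106371309204312836274090788789503574469844383627082757991958652052015444200995418200883550509058577072739962153153284461457546247823039000421938030318253312108421710413796584338344563527147475827802441837164952006712128776033401133571356102461766436551080483016627586295297753652954553293029362811254165177910711448093828457953996495348049696434391033528411312877373473896265923138223833095,
  7492984849788355982266806866191246534393458061191965396327411877557609567271111579235437387145096241060776576308611299814896711589693191227190742897540646237970228447074316580793959935800771658390789741995872023892683222682587763909392676439866230885088411401949568450642433778907635146510826901200985562323512034471111869108108607903477766628074006763339980097866020967624389014127772063149618757793995890783847108692165310794002875672031461081095,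
  117302977193371434729090058535711310615006754790448297584034228080332351225875221990433319193329485760832520041053681688281162762264242067820289167411920203259359898716226589217143756207641494812981907162785488173365738583438266748260746922229648922981940394138563674664053953632598057842827219704132851208743172750600379128309651603876457143710346665452790130570954395434764360878155614728149753169134683157464632169274878552214655380568133337095,
  1005906234782212112684634580196600902553249527115258452058816868991176819751209941637605018003205252520598158754487081897711070715365923775547566245533073803278616829587286254280977744803434803070389511854010020713918971810568968398805081120926577654770066521053700582020580515258893875991156066008279007550250872268139528195854042618252464028465895489028208762403762767834496290138128155639398014214372485897183563080641476916686125228450758774448285810695]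

/-- Triples (reversible element, reversing involution, product), coded as bit patterns. -/
def wit3 : List (ℕ × ℕ × ℕ) := [
  (84, 84, 273), (85, 84, 277), (86, 84, 275), (87, 84, 279), (92, 84, 305), (93, 84, 309), (98, 84, 266),
  (103, 124, 266), (107, 84, 302), (110, 124, 302), (116, 84, 281), (117, 124, 309), (122, 124, 279),
  (123, 124, 275), (124, 84, 313), (125, 124, 277), (140, 84, 161), (143, 84, 167), (158, 161, 302),
  (159, 167, 281), (161, 161, 273), (163, 161, 277), (165, 161, 275), (167, 124, 458), (169, 161, 281),
  (174, 167, 302), (177, 161, 305), (179, 161, 309), (181, 167, 309), (183, 167, 305), (185, 161, 313),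
  (188, 124, 465), (205, 214, 309), (206, 214, 305), (212, 84, 401), (213, 214, 277), (214, 84, 403),
  (215, 214, 279), (225, 161, 337), (230, 167, 214), (233, 161, 345), (234, 233, 277), (236, 124, 233),
  (239, 167, 233), (241, 233, 305), (242, 214, 266), (249, 233, 313), (254, 124, 214), (266, 266, 273),
  (267, 266, 275), (270, 266, 277), (271, 266, 279), (273, 84, 84), (275, 273, 275), (277, 273, 277),
  (279, 161, 167), (281, 273, 281), (282, 266, 281), (285, 277, 313), (286, 279, 302), (298, 266, 305),
  (299, 275, 313), (302, 214, 233), (303, 279, 281), (305, 273, 305), (307, 275, 305), (309, 266, 302),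
  (311, 275, 309), (313, 84, 124), (314, 266, 313), (317, 277, 281), (318, 275, 302), (330, 266, 401),
  (331, 266, 403), (337, 273, 337), (339, 275, 465), (340, 84, 337), (342, 214, 337), (345, 161, 233),
  (346, 275, 458), (348, 124, 345), (351, 167, 345), (358, 161, 214), (359, 167, 337), (369, 305, 337),
  (372, 84, 345), (377, 305, 345), (380, 124, 337), (394, 266, 337), (395, 281, 458), (401, 273, 401),
  (403, 84, 214), (405, 277, 401), (407, 277, 403), (409, 281, 465), (410, 266, 345), (417, 161, 401),
  (419, 167, 403), (421, 161, 403), (423, 167, 401), (425, 233, 401), (428, 84, 233), (443, 124, 403),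
  (444, 124, 401), (458, 124, 167), (459, 275, 345), (460, 124, 161), (461, 233, 458), (465, 266, 458),
  (467, 275, 337), (468, 84, 465), (470, 214, 465), (473, 281, 401), (474, 281, 403), (481, 161, 465),
  (482, 84, 458), (489, 233, 465), (494, 302, 465), (498, 214, 458), (501, 302, 458)]

/-- The exhaustive search over the additive maps. -/
def srch3 : List (ℕ × ℕ × ℕ) → ℕ → Bool
  | [], V => mk3.any fun M => Nat.beq (Nat.land V M) 0
  | l :: L, V => [0, 1, 2, 3, 4, 5, 6, 7].all fun v =>
      match Nat.beq (Nat.land (Nat.lor (Nat.xor V (Nat.mul v l.2.1))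
          (Nat.lor (Nat.shiftRight (Nat.xor V (Nat.mul v l.2.1)) 1)
            (Nat.shiftRight (Nat.xor V (Nat.mul v l.2.1)) 2))) l.2.2) l.2.2 with
      | true => srch3 L (Nat.lor V (Nat.shiftLeft (Nat.xor V (Nat.mul v l.2.1)) l.1))
      | false => true

theorem srch3_true : srch3 lv3.tail 8 = true := by decide +kernel

/-- The element with coordinate vector `m`. -/
def code3 (m : ℕ) : ℕ :=
  [273, 467, 313, 348, 444, 205, 395, 358, 116].zipIdx.foldl
    (fun a p => Nat.xor a (cond (m.testBit p.2) p.1 0)) 0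

/-- The coordinate vector of the element `x`. -/
def icode3 (x : ℕ) : ℕ :=
  [378, 251, 327, 229, 118, 224, 209, 41, 269].zipIdx.foldl
    (fun a p => Nat.xor a (cond (x.testBit p.2) p.1 0)) 0

theorem code3_icode3 : ∀ x < 512, icode3 x < 512 ∧ code3 (icode3 x) = x := by decide +kernel

theorem code3_add : ∀ k < 9, ∀ m < 2 ^ k, code3 (m + 2 ^ k) = code3 m ^^^ code3 (2 ^ k) := by
  decide +kernel

/-- entry of a product of coded matrices -/
def bm3 (x y i j : ℕ) : Bool :=
  ((x.testBit (3 * i) && y.testBit j) ^^ (x.testBit (3 * i + 1) && y.testBit (3 + j))) ^^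
    (x.testBit (3 * i + 2) && y.testBit (6 + j))

theorem wit3_good : ∀ p ∈ wit3, ∀ i < 3, ∀ j < 3, bm3 p.2.1 p.2.1 i j = decide (i = j) ∧
    bm3 p.2.2 p.2.2 i j = decide (i = j) ∧ bm3 p.2.2 p.2.1 i j = p.1.testBit (3 * i + j) := by
  decide +kernel

/-- entry of the product of a coded matrix with a coded vector -/
def rz3 (x κ i : ℕ) : Bool :=
  ((x.testBit (3 * i) && κ.testBit 0) ^^ (x.testBit (3 * i + 1) && κ.testBit 1)) ^^
    (x.testBit (3 * i + 2) && κ.testBit 2)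

/-- entry of the product of a transposed coded matrix with a coded vector -/
def cz3 (x κ i : ℕ) : Bool :=
  ((x.testBit i && κ.testBit 0) ^^ (x.testBit (3 + i) && κ.testBit 1)) ^^
    (x.testBit (6 + i) && κ.testBit 2)

theorem mk3_good' : ∀ p ∈ mk3.zipIdx,
    (p.2 < 7 ∧ ∀ m < 512, (∀ i < 3, rz3 (code3 m) (p.2 + 1) i = false) →
      ∀ j < 3, p.1.testBit (3 * m + j) = true) ∨
    (7 ≤ p.2 ∧ p.2 < 14 ∧ ∀ m < 512, (∀ i < 3, cz3 (code3 m) (p.2 - 6) i = false) →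
      ∀ j < 3, p.1.testBit (3 * m + j) = true) := by
  decide +kernel

theorem mk3_good (M : ℕ) (hM : M ∈ mk3) :
    (∃ κ < 8, 0 < κ ∧ ∀ m < 512, (∀ i < 3, rz3 (code3 m) κ i = false) →
      ∀ j < 3, M.testBit (3 * m + j) = true) ∨
    (∃ κ < 8, 0 < κ ∧ ∀ m < 512, (∀ i < 3, cz3 (code3 m) κ i = false) →
      ∀ j < 3, M.testBit (3 * m + j) = true) := by
  obtain ⟨i, hi, rfl⟩ := List.mem_iff_getElem.1 hM
  have := mk3_good' (mk3[i], i) (by rw [List.mem_zipIdx_iff_getElem?]; simp [hi])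
  rcases this with ⟨h, h'⟩ | ⟨h, h1, h'⟩
  · have h : i < 7 := h
    exact Or.inl ⟨i + 1, by omega, by omega, h'⟩
  · have h : 7 ≤ i := h
    have h1 : i < 14 := h1
    exact Or.inr ⟨i - 6, by omega, by omega, h'⟩

/-- what is needed of a level of the search -/
def LvGood (k : ℕ) (l : ℕ × ℕ × ℕ) : Prop :=
  l.1 = 3 * 2 ^ k ∧
  (∀ v < 8, v * l.2.1 < 2 ^ (3 * 2 ^ k) ∧ ∀ m < 2 ^ k, ∀ j < 3, (v * l.2.1).testBit (3 * m + j) = v.testBit j) ∧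
  l.2.2 < 2 ^ (3 * 2 ^ k) ∧
  (∀ m < 2 ^ k, l.2.2.testBit (3 * m + 1) = false ∧ l.2.2.testBit (3 * m + 2) = false) ∧
  (∀ m < 2 ^ k, l.2.2.testBit (3 * m) = true → code3 (m + 2 ^ k) ∈ wit3.map Prod.fst)

instance (k : ℕ) (l : ℕ × ℕ × ℕ) : Decidable (LvGood k l) := by
  unfold LvGood; infer_instance

theorem lv3_good : ∀ p ∈ lv3.zipIdx, LvGood p.2 p.1 := by decide +kernel

/-- The table `V` represents `f` below `2 ^ k`. -/
def Tab (f : ℕ → ℕ → Bool) (k V : ℕ) : Prop :=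
  (∀ m < 2 ^ k, ∀ j < 3, V.testBit (3 * m + j) = f m j) ∧ V < 2 ^ (3 * 2 ^ k)

/-- all remaining levels are good -/
def AllGood : ℕ → List (ℕ × ℕ × ℕ) → Prop
  | k, [] => k = 9
  | k, l :: L => k < 9 ∧ LvGood k l ∧ AllGood (k + 1) L

theorem tail_good : AllGood 1 lv3.tail := by
  have h := lv3_good
  simp only [lv3, List.zipIdx_cons, List.zipIdx_nil, List.forall_mem_cons, zero_add, Nat.reduceAdd] at h
  obtain ⟨-, h1, h2, h3, h4, h5, h6, h7, h8, -⟩ := h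
  exact ⟨by omega, h1, by omega, h2, by omega, h3, by omega, h4, by omega, h5, by omega, h6, by omega, h7,
    by omega, h8, rfl⟩

theorem val_bits : ∀ a b c : Bool, a.toNat + 2 * b.toNat + 4 * c.toNat < 8 ∧
    (a.toNat + 2 * b.toNat + 4 * c.toNat).testBit 0 = a ∧
    (a.toNat + 2 * b.toNat + 4 * c.toNat).testBit 1 = b ∧
    (a.toNat + 2 * b.toNat + 4 * c.toNat).testBit 2 = c := by decide

theorem srch3_sound (f : ℕ → ℕ → Bool)
    (hlin : ∀ k < 9, ∀ m < 2 ^ k, ∀ j < 3, f (m + 2 ^ k) j = (f m j ^^ f (2 ^ k) j))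
    (hB : ∀ m < 512, code3 m ∈ wit3.map Prod.fst → ∃ j < 3, f m j = true) :
    ∀ (L : List (ℕ × ℕ × ℕ)) (k V : ℕ), AllGood k L → Tab f k V → srch3 L V = true →
      ∃ M ∈ mk3, ∀ m < 512, ∀ j < 3, M.testBit (3 * m + j) = true → f m j = false := by
  intro L
  induction L with
  | nil =>
    intro k V hk hV hs
    have hk : k = 9 := hk
    subst hk
    rw [srch3, List.any_eq_true] at hs
    obtain ⟨M, hM, h⟩ := hs
    refine ⟨M, hM, fun m hm j hj hb => ?_⟩
    have h0 : V &&& M = 0 := Nat.eq_of_beq_eq_true h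
    have h1 := congrArg (fun x => Nat.testBit x (3 * m + j)) h0
    simp only [Nat.testBit_and, hb, Bool.and_true, Nat.zero_testBit] at h1
    rw [← hV.1 m hm j hj, h1]
  | cons l L ih =>
    intro k V hk hV hs
    obtain ⟨hk9, ⟨hl1, hl2, hl3, hl4, hl5⟩, hL⟩ := hk
    obtain ⟨hv8, hva, hvb, hvc⟩ := val_bits (f (2 ^ k) 0) (f (2 ^ k) 1) (f (2 ^ k) 2)
    generalize (f (2 ^ k) 0).toNat + 2 * (f (2 ^ k) 1).toNat + 4 * (f (2 ^ k) 2).toNat = v at *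
    have hvj : ∀ j < 3, v.testBit j = f (2 ^ k) j := by
      intro j hj; interval_cases j <;> assumption
    obtain ⟨hvl, hvt⟩ := hl2 v hv8
    have hpow : 2 ^ k ≤ 256 := by
      calc 2 ^ k ≤ 2 ^ 8 := Nat.pow_le_pow_right (by omega) (by omega)
        _ = 256 := by norm_num
    rw [srch3, List.all_eq_true] at hs
    have hs := hs v (by interval_cases v <;> simp)
    change (match Nat.beq ((((V ^^^ (v * l.2.1)) ||| ((V ^^^ (v * l.2.1)) >>> 1 |||
      (V ^^^ (v * l.2.1)) >>> 2))) &&& l.2.2) l.2.2 with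
      | true => srch3 L (V ||| (V ^^^ (v * l.2.1)) <<< l.1)
      | false => true) = true at hs
    have hW : ∀ m < 2 ^ k, ∀ j < 3, (V ^^^ (v * l.2.1)).testBit (3 * m + j) = f (m + 2 ^ k) j := by
      intro m hm j hj
      rw [Nat.testBit_xor, hV.1 m hm j hj, hvt m hm j hj, hvj j hj, hlin k hk9 m hm j hj]
    have hWl : V ^^^ (v * l.2.1) < 2 ^ (3 * 2 ^ k) := Nat.xor_lt_two_pow hV.2 hvl
    generalize V ^^^ (v * l.2.1) = W at *
    have hc : (W ||| (W >>> 1 ||| W >>> 2)) &&& l.2.2 = l.2.2 := by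
      apply Nat.eq_of_testBit_eq
      intro i
      rw [Nat.testBit_and]
      by_cases hi : l.2.2.testBit i = true
      · rw [hi, Bool.and_true]
        have hi3 : i < 3 * 2 ^ k := by
          by_contra hge
          rw [Nat.testBit_lt_two_pow (lt_of_lt_of_le hl3 (Nat.pow_le_pow_right (by omega) (not_lt.1 hge)))] at hi
          exact absurd hi (by simp)
        obtain ⟨m, rfl | rfl | rfl⟩ : ∃ m, i = 3 * m ∨ i = 3 * m + 1 ∨ i = 3 * m + 2 := ⟨i / 3, by omega⟩
        · have hm : m < 2 ^ k := by omega
          obtain ⟨j, hj, hf⟩ := hB (m + 2 ^ k) (by omega) (hl5 m hm hi)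
          rw [← hW m hm j hj] at hf
          simp only [Nat.testBit_or, Nat.testBit_shiftRight, Bool.or_eq_true]
          interval_cases j
          · left; exact hf
          · right; left; rw [add_comm]; exact hf
          · right; right; rw [add_comm]; exact hf
        · rw [(hl4 m (by omega)).1] at hi; exact absurd hi (by simp)
        · rw [(hl4 m (by omega)).2] at hi; exact absurd hi (by simp)
      · rw [Bool.eq_false_iff.2 hi, Bool.and_false]
    rw [hc, show Nat.beq l.2.2 l.2.2 = true from Nat.beq_refl _] at hs
    refine ih (k + 1) _ hL ⟨?_, ?_⟩ hs
    · intro m hm j hj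
      rw [Nat.testBit_or, Nat.testBit_shiftLeft, hl1]
      by_cases hmk : m < 2 ^ k
      · have : ¬ (3 * m + j ≥ 3 * 2 ^ k) := by omega
        simp [this, hV.1 m hmk j hj]
      · have h1 : 3 * m + j ≥ 3 * 2 ^ k := by omega
        have h2 : 3 * m + j - 3 * 2 ^ k = 3 * (m - 2 ^ k) + j := by omega
        rw [pow_succ] at hm
        have h3 := hW (m - 2 ^ k) (by omega) j hj
        rw [Nat.sub_add_cancel (not_lt.1 hmk)] at h3
        rw [h2, h3, Nat.testBit_lt_two_pow (lt_of_lt_of_le hV.2 (Nat.pow_le_pow_right (by omega) h1))]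
        simp [h1]
    · have e : 3 * 2 ^ (k + 1) = 3 * 2 ^ k + 3 * 2 ^ k := by rw [pow_succ]; ring
      rw [e]
      apply Nat.or_lt_two_pow
      · exact lt_of_lt_of_le hV.2 (Nat.pow_le_pow_right (by omega) (by omega))
      · rw [hl1, Nat.shiftLeft_eq, pow_add]
        exact Nat.mul_lt_mul_of_pos_right hWl (by positivity)

/-- bit to field -/
def gam (F : Type*) [Field F] (b : Bool) : F := if b then 1 else 0

theorem gam_and (F : Type*) [Field F] (a b : Bool) : gam F (a && b) = gam F a * gam F b := by
  cases a <;> cases b <;> simp [gam]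

theorem gam_xor {F : Type*} [Field F] (h2 : (1 : F) + 1 = 0) (a b : Bool) :
    gam F (a ^^ b) = gam F a + gam F b := by
  cases a <;> cases b <;> simp [gam, h2]

theorem gam_inj {F : Type*} [Field F] {a : Bool} (h : gam F a = 0) : a = false := by
  cases a
  · rfl
  · simp [gam] at h

theorem gam_surj {F : Type*} [Field F] (hno : ∀ c : F, c = 0 ∨ c = 1) (c : F) : ∃ b, gam F b = c := by
  rcases hno c with rfl | rfl
  · exact ⟨false, rfl⟩
  · exact ⟨true, rfl⟩

/-- coded matrix -/
def Mt3 (F : Type*) [Field F] (x : ℕ) : Matrix (Fin 3) (Fin 3) F :=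
  fun i j => gam F (x.testBit (3 * i.1 + j.1))

theorem Mt3_xor {F : Type*} [Field F] (h2 : (1 : F) + 1 = 0) (x y : ℕ) :
    Mt3 F (x ^^^ y) = Mt3 F x + Mt3 F y := by
  ext i j
  simp only [Mt3, Matrix.add_apply, Nat.testBit_xor, gam_xor h2]

theorem Mt3_mul {F : Type*} [Field F] (h2 : (1 : F) + 1 = 0) (x y : ℕ) (i j : Fin 3) :
    (Mt3 F x * Mt3 F y) i j = gam F (bm3 x y i j) := by
  rw [Matrix.mul_apply, Fin.sum_univ_three]
  simp only [Mt3, bm3, gam_xor h2, gam_and]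
  simp

theorem bits9 : ∀ b0 b1 b2 b3 b4 b5 b6 b7 b8 : Bool,
    (fun x : ℕ => x < 512 ∧ x.testBit 0 = b0 ∧ x.testBit 1 = b1 ∧ x.testBit 2 = b2 ∧ x.testBit 3 = b3 ∧
      x.testBit 4 = b4 ∧ x.testBit 5 = b5 ∧ x.testBit 6 = b6 ∧ x.testBit 7 = b7 ∧ x.testBit 8 = b8)
    (b0.toNat + 2 * b1.toNat + 4 * b2.toNat + 8 * b3.toNat + 16 * b4.toNat + 32 * b5.toNat + 64 * b6.toNat
      + 128 * b7.toNat + 256 * b8.toNat) := by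
  decide +kernel

theorem Mt3_surj {F : Type*} [Field F] (hno : ∀ c : F, c = 0 ∨ c = 1) (X : Matrix (Fin 3) (Fin 3) F) :
    ∃ m < 512, Mt3 F (code3 m) = X := by
  have hs := fun i j => gam_surj hno (X i j)
  choose b hb using hs
  obtain ⟨h, h0, h1, h2, h3, h4, h5, h6, h7, h8⟩ :=
    bits9 (b 0 0) (b 0 1) (b 0 2) (b 1 0) (b 1 1) (b 1 2) (b 2 0) (b 2 1) (b 2 2)
  generalize (b 0 0).toNat + 2 * (b 0 1).toNat + 4 * (b 0 2).toNat + 8 * (b 1 0).toNat + 16 * (b 1 1).toNat +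
    32 * (b 1 2).toNat + 64 * (b 2 0).toNat + 128 * (b 2 1).toNat + 256 * (b 2 2).toNat = x at *
  obtain ⟨hi, hc⟩ := code3_icode3 x h
  refine ⟨icode3 x, hi, ?_⟩
  rw [hc]
  ext i j
  rw [← hb]
  unfold Mt3
  congr 1
  fin_cases i <;> fin_cases j <;> assumption

theorem Mt3_mem {F : Type*} [Field F] (h2 : (1 : F) + 1 = 0) (x : ℕ) (hx : x ∈ wit3.map Prod.fst) :
    Mt3 F x ∈ ProdInv2 F 3 := by
  obtain ⟨p, hp, rfl⟩ := List.mem_map.1 hx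
  have h := wit3_good p hp
  refine ⟨Mt3 F p.2.2, Mt3 F p.2.1, ?_, ?_, ?_⟩
  · ext i j
    rw [Mt3_mul h2, (h i i.2 j j.2).2.1, Matrix.one_apply]
    simp [gam, Fin.ext_iff]
  · ext i j
    rw [Mt3_mul h2, (h i i.2 j j.2).1, Matrix.one_apply]
    simp [gam, Fin.ext_iff]
  · ext i j
    rw [Mt3_mul h2, (h i i.2 j j.2).2.2]
    rfl

/-- coded vector -/
def Vt3 (F : Type*) [Field F] (κ : ℕ) : Fin 3 → F := fun i => gam F (κ.testBit i.1)

theorem Vt3_ne {F : Type*} [Field F] (κ : ℕ) (h : κ < 8) (h0 : 0 < κ) : Vt3 F κ ≠ 0 := by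
  intro hz
  have e0 := gam_inj (congrFun hz 0)
  have e1 := gam_inj (congrFun hz 1)
  have e2 := gam_inj (congrFun hz 2)
  revert e0 e1 e2
  interval_cases κ <;> simp [Nat.testBit, Nat.shiftRight_eq_div_pow]

theorem Mt3_vec {F : Type*} [Field F] (h2 : (1 : F) + 1 = 0) (x κ : ℕ) (i : Fin 3) :
    (Mt3 F x *ᵥ Vt3 F κ) i = gam F (rz3 x κ i) := by
  simp only [mulVec, dotProduct, Fin.sum_univ_three, Mt3, Vt3, rz3, gam_xor h2, gam_and]
  rfl

theorem Mt3_vecT {F : Type*} [Field F] (h2 : (1 : F) + 1 = 0) (x κ : ℕ) (i : Fin 3) :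
    ((Mt3 F x)ᵀ *ᵥ Vt3 F κ) i = gam F (cz3 x κ i) := by
  simp only [mulVec, dotProduct, Fin.sum_univ_three, Matrix.transpose_apply, Mt3, Vt3, cz3, gam_xor h2, gam_and]
  simp

theorem move3 {F : Type*} [Field F] (hno : ∀ c : F, c = 0 ∨ c = 1) (h2 : (1 : F) + 1 = 0)
    (a : Fin 3 → F) (ha : a ≠ 0) : ∃ g : Matrix (Fin 3) (Fin 3) F, IsUnit g ∧ g *ᵥ a = ![1, 0, 0] := by
  have h2' : ∀ c : F, c + c = 0 := fun c => by linear_combination c * h2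
  rcases hno (a 0) with h0 | h0
  · rcases hno (a 1) with h1 | h1
    · rcases hno (a 2) with h3 | h3
      · exfalso; apply ha; ext i; fin_cases i <;> assumption
      · refine ⟨!![0, 0, 1; 0, 1, 0; 1, 0, 0], ?_, ?_⟩
        · rw [Matrix.isUnit_iff_isUnit_det]; simp [det_fin_three]
        · ext i; fin_cases i <;> simp [mulVec, dotProduct, Fin.sum_univ_three, h0, h1, h3]
    · refine ⟨!![0, 1, 0; 1, 0, 0; 0, a 2, 1], ?_, ?_⟩
      · rw [Matrix.isUnit_iff_isUnit_det]; simp [det_fin_three]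
      · ext i; fin_cases i <;> simp [mulVec, dotProduct, Fin.sum_univ_three, h0, h1, h2']
  · refine ⟨!![1, 0, 0; a 1, 1, 0; a 2, 0, 1], ?_, ?_⟩
    · rw [Matrix.isUnit_iff_isUnit_det]; simp [det_fin_three]
    · ext i; fin_cases i <;> simp [mulVec, dotProduct, Fin.sum_univ_three, h0, h2']

theorem three_small {F : Type*} [Field F] (hno : ∀ c : F, c = 0 ∨ c = 1)
    (T : Matrix (Fin 3) (Fin 3) F →ₗ[F] Matrix (Fin 3) (Fin 3) F) (hT : Function.Bijective T)
    (hU : ∀ A ∈ ProdInv2 F 3, IsUnit (T A)) : Form T := by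
  have h2 : (1 : F) + 1 = 0 := by
    rcases hno (1 + 1) with h | h
    · exact h
    · exfalso; apply one_ne_zero (α := F); linear_combination h
  apply form2 (by omega) T hT
  intro v hv
  have h1mem : (1 : Matrix (Fin 3) (Fin 3) F) ∈ ProdInv2 F 3 := ⟨1, 1, by simp, by simp, by simp⟩
  obtain ⟨g, hg, hg1⟩ := move3 hno h2 (T 1 *ᵥ v) (unit_mulVec_ne (hU 1 h1mem) hv)
  -- the map in bits
  have hb : ∀ m : ℕ, ∀ j : ℕ, ∃ b : Bool, ∀ hj : j < 3, gam F b = (g *ᵥ (T (Mt3 F (code3 m)) *ᵥ v)) ⟨j, hj⟩ := by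
    intro m j
    by_cases hj : j < 3
    · obtain ⟨b, hb⟩ := gam_surj hno ((g *ᵥ (T (Mt3 F (code3 m)) *ᵥ v)) ⟨j, hj⟩)
      exact ⟨b, fun _ => hb⟩
    · exact ⟨false, fun h => absurd h hj⟩
  choose f hf using hb
  have gi : ∀ a b : Bool, gam F a = gam F b → a = b := by
    intro a b h
    cases a <;> cases b <;> simp [gam] at h <;> rfl
  have hzero : ∀ m, (∀ j < 3, f m j = false) → T (Mt3 F (code3 m)) *ᵥ v = 0 := by
    intro m h
    by_contra hne
    apply unit_mulVec_ne hg hne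
    ext j
    rw [← hf m j j.2, h j j.2]
    rfl
  have key := srch3_sound f (by
    intro k hk m hm j hj
    apply gi
    rw [gam_xor h2, hf _ _ hj, hf _ _ hj, hf _ _ hj, code3_add k hk m hm, Mt3_xor h2, map_add, add_mulVec, mulVec_add]
    rfl) (by
    intro m hm hmem
    by_contra hne
    push Not at hne
    exact unit_mulVec_ne (hU _ (Mt3_mem h2 _ hmem)) hv (hzero m fun j hj => by simpa using hne j hj))
    lv3.tail 1 8 tail_good (by
      have c0 : Mt3 F (code3 0) = 0 := by
        ext i j; rw [show code3 0 = 0 from by decide +kernel]; simp [Mt3, gam]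
      have c1 : Mt3 F (code3 1) = 1 := by
        ext i j; rw [show code3 1 = 273 from by decide +kernel]
        fin_cases i <;> fin_cases j <;> simp [Mt3, gam, Nat.testBit, Nat.shiftRight_eq_div_pow]
      have f0 : ∀ j < 3, f 0 j = false := by
        intro j hj; apply gam_inj (F := F); rw [hf 0 j hj, c0]; simp
      have f1 : ∀ j, ∀ hj : j < 3, gam F (f 1 j) = (![1, 0, 0] : Fin 3 → F) ⟨j, hj⟩ := by
        intro j hj; rw [hf 1 j hj, c1, hg1]
      refine ⟨?_, by norm_num⟩
      intro m hm j hj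
      have hm : m < 2 := hm
      interval_cases m
      · rw [f0 j hj]; interval_cases j <;> decide
      · apply gi
        rw [f1 j hj]
        interval_cases j <;> simp [gam, Nat.testBit, Nat.shiftRight_eq_div_pow]) srch3_true
  obtain ⟨M, hM, hk⟩ := key
  rcases mk3_good M hM with ⟨κ, h8, h0, h⟩ | ⟨κ, h8, h0, h⟩
  · left
    refine ⟨Vt3 F κ, Vt3_ne κ h8 h0, fun X hX => ?_⟩
    obtain ⟨m, hm, rfl⟩ := Mt3_surj hno X
    apply hzero
    intro j hj
    refine hk m hm j hj (h m hm (fun i hi => ?_) j hj)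
    apply gam_inj (F := F)
    have := Mt3_vec h2 (code3 m) κ ⟨i, hi⟩
    rw [← this, hX]; rfl
  · right
    refine ⟨Vt3 F κ, Vt3_ne κ h8 h0, fun X hX => ?_⟩
    obtain ⟨m, hm, rfl⟩ := Mt3_surj hno X
    apply hzero
    intro j hj
    refine hk m hm j hj (h m hm (fun i hi => ?_) j hj)
    apply gam_inj (F := F)
    have := Mt3_vecT h2 (code3 m) κ ⟨i, hi⟩
    rw [← this, hX]; rfl

theorem form_all {F : Type*} [Field F] (n : ℕ) (hn : 2 ≤ n)
    (S : Set (Matrix (Fin n) (Fin n) F))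
    (hS : S = ProdInv2 F n ∨ S = ProdInv3 F n ∨ S = ProdInv4 F n)
    (T : Matrix (Fin n) (Fin n) F →ₗ[F] Matrix (Fin n) (Fin n) F)
    (hT : Function.Bijective T) (hpres : ∀ A ∈ S, T A ∈ S) : Form T := by
  have hU := hU_of S hS T hpres
  have hD := hD_of S hS T hpres
  rcases hn.eq_or_lt with rfl | hn
  · by_cases h : ∃ c : F, c ≠ 0 ∧ c * c ≠ 1
    · obtain ⟨c, hc, hc2⟩ := h
      exact two_generic c hc hc2 T hT hD
    · push Not at h
      exact two_small (fun c => or_iff_not_imp_left.2 (h c)) T hT hU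
  · by_cases h : (∃ c : F, c ≠ 0 ∧ c ≠ 1) ∨ 4 ≤ n
    · exact generic hn h T hT hU
    · push Not at h
      have : n = 3 := by omega
      subst this
      exact three_small (fun c => or_iff_not_imp_left.2 (h.1 c)) T hT hU

theorem stmt10 (F : Type*) [Field F] (n : ℕ) (hn : 2 ≤ n)
    (S : Set (Matrix (Fin n) (Fin n) F))
    (hS : S = ProdInv2 F n ∨ S = ProdInv3 F n ∨ S = ProdInv4 F n)
    (T : Matrix (Fin n) (Fin n) F →ₗ[F] Matrix (Fin n) (Fin n) F)
    (hT : Function.Bijective T) (hpres : ∀ A ∈ S, T A ∈ S) :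
    ∃ (r : F) (P : Matrix (Fin n) (Fin n) F), r ^ (2 * n) = 1 ∧ IsUnit P ∧
      ((∀ X, Matrix.trace X = 0 → T X = r • (T 1 * (P * X * P⁻¹))) ∨
       (∀ X, Matrix.trace X = 0 → T X = r • (T 1 * (P * Xᵀ * P⁻¹)))) ∧
      (0 < ringChar F → ringChar F ∣ n → r = 1) := by
  exact final_of_form T (form_all n hn S hS T hT hpres)
end

section
/- Let F be a field with char(F) ≠ 2, let n ≥ 2, let S_n be any one of the sets B_n, C_n, D_n, and let T : M_n(F) → M_n(F) be a bijective linear map such that T(S_n) ⊆ S_n. Suppose there exist a nonzero scalar r ∈ F and an invertible matrix P ∈ M_n(F) such that either T(X) = r·T(I)·P·X·P⁻¹ for all X ∈ M_n(F) with trace(X) = 0, or T(X) = r·T(I)·P·Xᵗ·P⁻¹ for all X ∈ M_n(F) with trace(X) = 0. Then r ∈ {−1, 1} if n = 2, and r = 1 if n ≥ 3. -/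
open Matrix

lemma sq_det_of_mem {F : Type*} [Field F] {n : ℕ} (S : Set (Matrix (Fin n) (Fin n) F))
    (hS : S = ProdInv2 F n ∨ S = ProdInv3 F n ∨ S = ProdInv4 F n) (A : Matrix (Fin n) (Fin n) F)
    (hA : A ∈ S) : A.det * A.det = 1 := by
  have key : ∀ J : Matrix (Fin n) (Fin n) F, J * J = 1 → J.det * J.det = 1 := by
    intro J hJ
    rw [← Matrix.det_mul, hJ, Matrix.det_one]
  rcases hS with rfl | rfl | rfl
  · obtain ⟨J, K, h1, h2, rfl⟩ := hA
    have h1 := key _ h1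
    have h2 := key _ h2
    rw [Matrix.det_mul]
    calc _ = (J.det * J.det) * (K.det * K.det) := by ring
      _ = 1 := by rw [h1, h2]; ring
  · obtain ⟨J, K, L, h1, h2, h3, rfl⟩ := hA
    have h1 := key _ h1
    have h2 := key _ h2
    have h3 := key _ h3
    rw [Matrix.det_mul, Matrix.det_mul]
    calc _ = (J.det * J.det) * (K.det * K.det) * (L.det * L.det) := by ring
      _ = 1 := by rw [h1, h2, h3]; ring
  · obtain ⟨J, K, L, M, h1, h2, h3, h4, rfl⟩ := hA
    have h1 := key _ h1
    have h2 := key _ h2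
    have h3 := key _ h3
    have h4 := key _ h4
    rw [Matrix.det_mul, Matrix.det_mul, Matrix.det_mul]
    calc _ = (J.det * J.det) * (K.det * K.det) * (L.det * L.det) * (M.det * M.det) := by ring
      _ = 1 := by rw [h1, h2, h3, h4]; ring

lemma mul_mem_of_inv {F : Type*} [Field F] {n : ℕ} (S : Set (Matrix (Fin n) (Fin n) F))
    (hS : S = ProdInv2 F n ∨ S = ProdInv3 F n ∨ S = ProdInv4 F n) (J K : Matrix (Fin n) (Fin n) F)
    (hJ : J * J = 1) (hK : K * K = 1) : J * K ∈ S := by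
  rcases hS with rfl | rfl | rfl
  · exact ⟨J, K, hJ, hK, rfl⟩
  · exact ⟨J, K, 1, hJ, hK, by simp, by simp⟩
  · exact ⟨J, K, 1, 1, hJ, hK, by simp, by simp, by simp⟩

lemma refl_invol {F : Type*} [Field F] {n : ℕ} (u v : Fin n → F) (h : v ⬝ᵥ u = 2) :
    (1 - vecMulVec u v) * (1 - vecMulVec u v) = 1 := by
  have : vecMulVec u v * vecMulVec u v = (2 : F) • vecMulVec u v := by
    rw [vecMulVec_mul_vecMulVec, h]
    ext i j
    simp [vecMulVec_apply]; try ring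
  rw [sub_mul, one_mul, mul_sub, mul_one, this, two_smul]
  abel

theorem stmt11 (F : Type*) [Field F] (hchar : ringChar F ≠ 2) (n : ℕ) (hn : 2 ≤ n)
    (S : Set (Matrix (Fin n) (Fin n) F))
    (hS : S = ProdInv2 F n ∨ S = ProdInv3 F n ∨ S = ProdInv4 F n)
    (T : Matrix (Fin n) (Fin n) F →ₗ[F] Matrix (Fin n) (Fin n) F)
    (hT : Function.Bijective T) (hpres : ∀ A ∈ S, T A ∈ S)
    (r : F) (hr : r ≠ 0) (P : Matrix (Fin n) (Fin n) F) (hP : IsUnit P)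
    (hform : (∀ X, Matrix.trace X = 0 → T X = r • (T 1 * (P * X * P⁻¹))) ∨
             (∀ X, Matrix.trace X = 0 → T X = r • (T 1 * (P * Xᵀ * P⁻¹)))) :
    (n = 2 → r = 1 ∨ r = -1) ∧ (3 ≤ n → r = 1) := by
  have h2 : (2 : F) ≠ 0 := Ring.two_ne_zero hchar
  have hPd : IsUnit P.det := (Matrix.isUnit_iff_isUnit_det P).1 hP
  have hPP : P * P⁻¹ = 1 := Matrix.mul_nonsing_inv P hPd
  have h1S : (1 : Matrix (Fin n) (Fin n) F) ∈ S := by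
    simpa using mul_mem_of_inv S hS 1 1 (by simp) (by simp)
  have hQ := sq_det_of_mem S hS _ (hpres 1 h1S)
  by_cases hn0 : (n : F) = 0
  · have hr1 : r = 1 := by
      have htr : Matrix.trace (1 : Matrix (Fin n) (Fin n) F) = 0 := by simp [hn0]
      have e : T 1 = r • T 1 := by
        rcases hform with h | h
        · have := h 1 htr
          rwa [mul_one, hPP, mul_one] at this
        · have := h 1 htr
          rwa [transpose_one, mul_one, hPP, mul_one] at this
      have hne : T 1 ≠ 0 := by
        intro h0
        have : Nonempty (Fin n) := ⟨⟨0, by omega⟩⟩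
        rw [h0, Matrix.det_zero] at hQ
        simp at hQ
      have : (1 - r) • T 1 = 0 := by rw [sub_smul, one_smul, ← e, sub_self]
      rcases smul_eq_zero.1 this with h | h
      · exact (sub_eq_zero.1 h).symm
      · exact absurd h hne
    exact ⟨fun _ => Or.inl hr1, fun _ => hr1⟩
  have hdetP : P.det * P⁻¹.det = 1 := by rw [← Matrix.det_mul, hPP, Matrix.det_one]
  have key : ∀ J K : Matrix (Fin n) (Fin n) F, J * J = 1 → K * K = 1 → ∀ a : F,
      Matrix.trace (J * K) = n * a →
      (a • (1 : Matrix (Fin n) (Fin n) F) + r • (J * K - a • 1)).det *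
      (a • (1 : Matrix (Fin n) (Fin n) F) + r • (J * K - a • 1)).det = 1 := by
    intro J K hJ hK a ha
    have hm := sq_det_of_mem S hS _ (hpres _ (mul_mem_of_inv S hS J K hJ hK))
    set A := J * K with hA
    have htr : Matrix.trace (A - a • (1 : Matrix (Fin n) (Fin n) F)) = 0 := by
      simp [ha, mul_comm]
    have hTA : T A = a • T 1 + T (A - a • 1) := by
      rw [map_sub, map_smul]; abel
    have hdet : (T A).det = (T 1).det * (a • (1 : Matrix (Fin n) (Fin n) F) + r • (A - a • 1)).det := by
      have aux : ∀ Y : Matrix (Fin n) (Fin n) F, T A = a • T 1 + r • (T 1 * (P * Y * P⁻¹)) →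
          (T A).det = (T 1).det * (a • (1 : Matrix (Fin n) (Fin n) F) + r • Y).det := by
        intro Y hY
        have : T A = T 1 * (P * (a • (1 : Matrix (Fin n) (Fin n) F) + r • Y) * P⁻¹) := by
          rw [hY]
          simp only [mul_add, add_mul, mul_smul_comm, smul_mul_assoc, mul_one, hPP]
        rw [this, det_mul, det_mul, det_mul]
        linear_combination ((T 1).det * (a • (1 : Matrix (Fin n) (Fin n) F) + r • Y).det) * hdetP
      rcases hform with h | h
      · exact aux _ (by rw [hTA, h _ htr])
      · rw [aux (A - a • 1)ᵀ (by rw [hTA, h _ htr]), ← Matrix.det_transpose (a • 1 + r • (A - a • 1))]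
        simp
    rw [hdet] at hm
    linear_combination hm - (a • (1 : Matrix (Fin n) (Fin n) F) + r • (A - a • 1)).det *
      (a • (1 : Matrix (Fin n) (Fin n) F) + r • (A - a • 1)).det * hQ
  constructor
  · intro hn2
    subst hn2
    have hD : ∀ b : F, (r ^ 2 + (1 - r ^ 2) * b ^ 2) ^ 2 = 1 := by
      intro b
      have := key !![0, 1; 1, 0] !![1, 2 * b; 0, -1] (by ext i j; fin_cases i <;> fin_cases j <;> simp)
        (by ext i j; fin_cases i <;> fin_cases j <;> simp) b (by simp [Matrix.trace_fin_two])
      simp [Matrix.det_fin_two] at this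
      linear_combination this
    have h0 := hD 0
    have h4 : (r - 1) * (r + 1) * (r ^ 2 + 1) = 0 := by linear_combination h0
    rcases mul_eq_zero.1 h4 with h | h
    · rcases mul_eq_zero.1 h with h | h
      · left; linear_combination h
      · right; linear_combination h
    · exfalso
      have hr2 : r ^ 2 = -1 := by linear_combination h
      have hD' : ∀ t : F, (4 * r ^ 2 + (1 - r ^ 2) * t ^ 2) ^ 2 = 16 := by
        intro t
        have hh : 2 * (t / 2) = t := by field_simp
        have hsq : t ^ 2 = 4 * (t / 2) ^ 2 := by
          calc t ^ 2 = (2 * (t / 2)) ^ 2 := by rw [hh]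
            _ = 4 * (t / 2) ^ 2 := by ring
        rw [hsq]
        linear_combination 16 * hD (t / 2)
      have ha := hD' 1
      have hb := hD' r
      rw [hr2] at ha hb
      have h4 : (2 : F) * 2 = 0 := by linear_combination -hb - 2 * ha
      exact mul_ne_zero h2 h2 h4
  · intro hn3
    by_contra hr1
    have hr1' : 1 - r ≠ 0 := fun h => hr1 (sub_eq_zero.1 h).symm
    let i0 : Fin n := ⟨0, by omega⟩
    let i1 : Fin n := ⟨1, by omega⟩
    let i2 : Fin n := ⟨2, by omega⟩
    have h01 : i0 ≠ i1 := by simp [i0, i1]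
    have h02 : i0 ≠ i2 := by simp [i0, i2]
    have h12 : i1 ≠ i2 := by simp [i1, i2]
    let s : F := - n / (1 - r)
    let a : F := 1 + s / n
    let u : Fin n → F := Pi.single i0 1
    let v : Fin n → F := Pi.single i0 2 + Pi.single i1 1
    let u' : Fin n → F := Pi.single i1 1
    let v' : Fin n → F := Pi.single i0 (s + 4) + Pi.single i1 2
    have hvu : v ⬝ᵥ u = 2 := by simp [u, v, h01]
    have hvu' : v' ⬝ᵥ u' = 2 := by simp [u', v', h01.symm]
    have htr : Matrix.trace ((1 - vecMulVec u v) * (1 - vecMulVec u' v')) = n * a := by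
      have e1 : u ⬝ᵥ v = 2 := by rw [dotProduct_comm, hvu]
      have e2 : u' ⬝ᵥ v' = 2 := by rw [dotProduct_comm, hvu']
      have e3 : v ⬝ᵥ u' = 1 := by simp [u', v, h01.symm]
      have e4 : u ⬝ᵥ v' = s + 4 := by simp [u, v', h01]
      rw [sub_mul, one_mul, mul_sub, mul_one, vecMulVec_mul_vecMulVec, e3]
      simp only [trace_sub, trace_one, trace_vecMulVec, one_smul, e1, e2, e4, Fintype.card_fin, a]
      field_simp
      ring
    have hk := key _ _ (refl_invol u v hvu) (refl_invol u' v' hvu') a htr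
    have hz : (a • (1 : Matrix (Fin n) (Fin n) F) +
        r • ((1 - vecMulVec u v) * (1 - vecMulVec u' v') - a • 1)).det = 0 := by
      rw [← Matrix.exists_mulVec_eq_zero_iff]
      refine ⟨Pi.single i2 1, by simp, ?_⟩
      have f1 : (1 - vecMulVec u' v') *ᵥ (Pi.single i2 1) = Pi.single i2 1 := by
        rw [sub_mulVec, one_mulVec, vecMulVec_mulVec]
        simp [v', h02, h12]
      have f2 : (1 - vecMulVec u v) *ᵥ (Pi.single i2 1) = Pi.single i2 1 := by
        rw [sub_mulVec, one_mulVec, vecMulVec_mulVec]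
        simp [v, h02, h12]
      rw [add_mulVec, smul_mulVec, smul_mulVec, sub_mulVec, ← mulVec_mulVec, f1, f2, smul_mulVec,
        one_mulVec]
      have ha : a + r * (1 - a) = 0 := by
        simp only [a, s]
        field_simp
        ring
      ext i
      simp only [Pi.add_apply, Pi.smul_apply, Pi.sub_apply, smul_eq_mul, Pi.zero_apply]
      linear_combination (Pi.single i2 (1 : F) : Fin n → F) i * ha
    rw [hz] at hk
    simp at hk
end
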